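/- There exist universal constants c, C > 0 such that the following holds. Let X be an isotropic random vector in ℝⁿ with log-concave density which is ψ_α (α ∈ [1,2]) with constant b_α, let A be an n×n real matrix with ‖A‖_HS² = n, let G_n be a standard Gaussian random vector in ℝⁿ independent of X, and set Y = (AX + G_n)/√2 and ñ := n/(‖A‖_op²·b_α²). Then for every real p ≠ 0 with |p| ≤ c·ñ^{α/2}: 1 − C·(|p−2|/ñ^{α/2})^{1/(α+1)} ≤ (E|Y|^p)^{1/p} / (E|Y|²)^{1/2} ≤ 1 + C·(|p−2|/ñ^{α/2})^{1/(α+1)}. -/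

import Mathlib

open MeasureTheory ProbabilityTheory Real
open scoped ENNReal RealInnerProductSpace Pointwise NNReal

noncomputable section

/-- A nonnegative function is log-concave if `f(λx+(1-λ)y) ≥ f(x)^λ f(y)^{1-λ}`. -/
def IsLogConcaveFn {E : Type*} [AddCommGroup E] [Module ℝ E] (f : E → ℝ) : Prop :=
  (∀ x, 0 ≤ f x) ∧
  ∀ x y : E, ∀ l : ℝ, 0 ≤ l → l ≤ 1 →
    f x ^ l * f y ^ (1 - l) ≤ f (l • x + (1 - l) • y)

/-- Hilbert-Schmidt (Frobenius) norm of a matrix. -/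
def hsNorm {n : ℕ} (A : Matrix (Fin n) (Fin n) ℝ) : ℝ :=
  Real.sqrt (∑ i, ∑ j, (A i j) ^ 2)

/-- Operator norm of a matrix acting on Euclidean space. -/
def opNorm {n : ℕ} (A : Matrix (Fin n) (Fin n) ℝ) : ℝ :=
  ‖LinearMap.toContinuousLinearMap (Matrix.toEuclideanLin A)‖

/-- Application of a matrix to a Euclidean vector. -/
def mApp {n : ℕ} (A : Matrix (Fin n) (Fin n) ℝ) (x : EuclideanSpace ℝ (Fin n)) :
    EuclideanSpace ℝ (Fin n) := Matrix.toEuclideanLin A x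

/-- The random vector `X` has density `f` with respect to Lebesgue measure. -/
def HasDensityFn {Ω : Type*} [MeasurableSpace Ω] (P : Measure Ω) {n : ℕ}
    (X : Ω → EuclideanSpace ℝ (Fin n)) (f : EuclideanSpace ℝ (Fin n) → ℝ) : Prop :=
  Measurable X ∧ Measure.map X P = volume.withDensity fun x => ENNReal.ofReal (f x)

/-- `X` is isotropic: centered with identity covariance. -/
def Isotropic {Ω : Type*} [MeasurableSpace Ω] (P : Measure Ω) {n : ℕ}
    (X : Ω → EuclideanSpace ℝ (Fin n)) : Prop :=
  (∫ ω, X ω ∂P) = 0 ∧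
  ∀ θ η : EuclideanSpace ℝ (Fin n), (∫ ω, ⟪X ω, θ⟫ * ⟪X ω, η⟫ ∂P) = ⟪θ, η⟫

/-- `X` is ψ_α with constant `b`. -/
def IsPsiAlpha {Ω : Type*} [MeasurableSpace Ω] (P : Measure Ω) {n : ℕ}
    (X : Ω → EuclideanSpace ℝ (Fin n)) (α b : ℝ) : Prop :=
  ∀ p : ℝ, 2 ≤ p → ∀ y : EuclideanSpace ℝ (Fin n),
    (∫ ω, |⟪X ω, y⟫| ^ p ∂P) ^ (1/p) ≤ b * p ^ (1/α) * (∫ ω, ⟪X ω, y⟫ ^ 2 ∂P) ^ ((1:ℝ)/2)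

/-- `G` is a standard Gaussian random vector in `ℝⁿ`. -/
def IsStdGaussian {Ω : Type*} [MeasurableSpace Ω] (P : Measure Ω) {n : ℕ}
    (G : Ω → EuclideanSpace ℝ (Fin n)) : Prop :=
  Measurable G ∧
  Measure.map G P = volume.withDensity fun x =>
    ENNReal.ofReal ((2 * π) ^ (-(n:ℝ)/2) * Real.exp (-‖x‖ ^ 2 / 2))

/-- Surface area of the unit sphere `S^{k-1}` in `ℝᵏ`. -/
def sphereVol (k : ℕ) : ℝ := 2 * π ^ ((k : ℝ)/2) / Real.Gamma ((k : ℝ)/2)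

/-- The marginal density `π_F g(x) = ∫_{F^⊥} g(x+y) dy`. -/
def marginalDensity {n : ℕ} (g : EuclideanSpace ℝ (Fin n) → ℝ)
    (F : Submodule ℝ (EuclideanSpace ℝ (Fin n))) (x : EuclideanSpace ℝ (Fin n)) : ℝ :=
  ∫ y : Fᗮ, g (x + y)

/-- `h_{k,p}(u) = vol(S^{k-1}) ∫₀^∞ t^{p+k-1} π_{u(E₀)} g(t u(θ₀)) dt`. -/
def hkp {n : ℕ} (g : EuclideanSpace ℝ (Fin n) → ℝ)
    (E₀ : Submodule ℝ (EuclideanSpace ℝ (Fin n))) (θ₀ : EuclideanSpace ℝ (Fin n))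
    (k : ℕ) (p : ℝ) (u : Matrix (Fin n) (Fin n) ℝ) : ℝ :=
  sphereVol k * ∫ t in Set.Ioi (0:ℝ), t ^ (p + (k:ℝ) - 1) *
    marginalDensity g (Submodule.map (Matrix.toEuclideanLin u) E₀) (t • mApp u θ₀)

/-- Support functional of the one-sided L_q-centroid body `Z⁺_q(w)`. -/
def suppZplus {m : ℕ} (w : EuclideanSpace ℝ (Fin m) → ℝ) (q : ℝ)
    (y : EuclideanSpace ℝ (Fin m)) : ℝ :=
  (2 * ∫ x, (max ⟪x, y⟫ 0) ^ q * w x) ^ (1/q)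

/-- Ball's body `K_q(w) = {x : q ∫₀^∞ t^{q-1} w(tx) dt ≥ 1}`. -/
def ballBody {m : ℕ} (w : EuclideanSpace ℝ (Fin m) → ℝ) (q : ℝ) :
    Set (EuclideanSpace ℝ (Fin m)) :=
  {x | 1 ≤ q * ∫ t in Set.Ioi (0:ℝ), t ^ (q-1) * w (t • x)}

/-- The one-sided L_q-centroid body `Z⁺_q(w)`, as the convex set with support
functional `suppZplus w q`. -/
def ZplusBody {m : ℕ} (w : EuclideanSpace ℝ (Fin m) → ℝ) (q : ℝ) :
    Set (EuclideanSpace ℝ (Fin m)) :=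
  {x | ∀ y, ⟪x, y⟫ ≤ suppZplus w q y}

section

lemma bm_compact {K₁ K₂ W : Set ℝ} (h1 : IsCompact K₁) (h2 : IsCompact K₂)
    (n1 : K₁.Nonempty) (n2 : K₂.Nonempty)
    (h : ∀ s ∈ K₁, ∀ t ∈ K₂, (s + t) / 2 ∈ W) :
    volume K₁ + volume K₂ ≤ 2 * volume W := by
  obtain ⟨a, ha, hamax⟩ := h1.exists_isGreatest n1
  obtain ⟨b, hb, hbmin⟩ := h2.exists_isLeast n2
  have e1 : volume ((fun x => x + b) '' K₁) = volume K₁ := by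
    simp
  have e2 : volume ((fun x => a + x) '' K₂) = volume K₂ := by
    simp
  have hc : volume ((fun x => x + b) '' K₁ ∪ (fun x => a + x) '' K₂) = volume K₁ + volume K₂ := by
    rw [measure_union₀, e1, e2]
    · exact (h2.image (by fun_prop)).measurableSet.nullMeasurableSet
    · refine measure_mono_null (t := {a + b}) ?_ (by simp)
      rintro x ⟨⟨y, hy, rfl⟩, ⟨z, hz, hzz⟩⟩
      have := hamax hy
      have := hbmin hz
      simp at hzz ⊢
      linarith
  rw [← hc]
  have : (fun x => x + b) '' K₁ ∪ (fun x => a + x) '' K₂ ⊆ (2:ℝ) • W := by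
    rintro x (⟨y, hy, rfl⟩ | ⟨z, hz, rfl⟩)
    · exact ⟨_, h y hy b hb, by simp; ring⟩
    · exact ⟨_, h a ha z hz, by simp; ring⟩
  refine (measure_mono this).trans ?_
  rw [Measure.addHaar_smul]
  simp

lemma bm_one {S T W : Set ℝ} (h1 : MeasurableSet S) (h2 : MeasurableSet T)
    (n1 : S.Nonempty) (n2 : T.Nonempty)
    (h : ∀ s ∈ S, ∀ t ∈ T, (s + t) / 2 ∈ W) :
    volume S + volume T ≤ 2 * volume W := by
  obtain ⟨s, hs⟩ := n1
  obtain ⟨t, ht⟩ := n2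
  rw [h1.measure_eq_iSup_isCompact, h2.measure_eq_iSup_isCompact]
  rw [ENNReal.iSup_add, iSup_le_iff]
  intro K1
  rw [ENNReal.add_iSup, iSup_le_iff]
  intro K2
  by_cases hK1 : K1 ⊆ S ∧ IsCompact K1
  · by_cases hK2 : K2 ⊆ T ∧ IsCompact K2
    · simp only [hK1.1, hK1.2, hK2.1, hK2.2, iSup_pos]
      refine le_trans (add_le_add (measure_mono (Set.subset_insert s K1))
        (measure_mono (Set.subset_insert t K2))) ?_
      refine bm_compact (hK1.2.insert s) (hK2.2.insert t) (Set.insert_nonempty _ _)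
        (Set.insert_nonempty _ _) ?_
      intro x hx y hy
      apply h
      · exact Set.insert_subset hs hK1.1 hx
      · exact Set.insert_subset ht hK2.1 hy
    · have : (⨆ (_ : K2 ⊆ T) (_ : IsCompact K2), volume K2) = 0 := by
        simp only [ENNReal.iSup_eq_zero]; tauto
      rw [this, add_zero]
      simp only [hK1.1, hK1.2, iSup_pos]
      refine le_trans (le_trans (measure_mono (Set.subset_insert s K1)) (le_add_right le_rfl)) (bm_compact (K₂ := {t}) (hK1.2.insert s) isCompact_singleton (Set.insert_nonempty _ _) (Set.singleton_nonempty _) ?_)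
      intro x hx y hy
      apply h
      · exact Set.insert_subset hs hK1.1 hx
      · rw [hy]; exact ht
  · have : (⨆ (_ : K1 ⊆ S) (_ : IsCompact K1), volume K1) = 0 := by
        simp only [ENNReal.iSup_eq_zero]; tauto
    rw [this, zero_add]
    by_cases hK2 : K2 ⊆ T ∧ IsCompact K2
    · simp only [hK2.1, hK2.2, iSup_pos]
      refine le_trans (le_trans (measure_mono (Set.subset_insert t K2)) (le_add_left le_rfl)) (bm_compact (K₁ := {s}) isCompact_singleton (hK2.2.insert t) (Set.singleton_nonempty _) (Set.insert_nonempty _ _) ?_)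
      intro x hx y hy
      apply h
      · rw [hx]; exact hs
      · exact Set.insert_subset ht hK2.1 hy
    · have : (⨆ (_ : K2 ⊆ T) (_ : IsCompact K2), volume K2) = 0 := by
        simp only [ENNReal.iSup_eq_zero]; tauto
      rw [this]; simp

lemma layer01 {u : ℝ → ℝ} (hu : Measurable u) (h0 : ∀ x, 0 ≤ u x) (h1 : ∀ x, u x ≤ 1) :
    ∫⁻ x, ENNReal.ofReal (u x) = ∫⁻ l in Set.Ioo (0:ℝ) 1, volume {x | l < u x} := by
  rw [lintegral_eq_lintegral_meas_lt volume (ae_of_all _ h0) hu.aemeasurable]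
  rw [← Set.Ioo_union_Ici_eq_Ioi (zero_lt_one), lintegral_union measurableSet_Ici]
  · have : ∫⁻ l in Set.Ici (1:ℝ), volume {x | l < u x} = 0 := by
      rw [setLIntegral_congr_fun (g := fun _ => 0) measurableSet_Ici]
      · simp
      · intro l hl
        have : {x | l < u x} = ∅ := by
          ext x; simp; exact (h1 x).trans hl
        simp [this]
    rw [this, add_zero]
  · rw [Set.disjoint_left]; intro x hx hx'; simp at hx hx'; linarith

lemma pl_norm {u v w : ℝ → ℝ} (hu : Measurable u) (hv : Measurable v) (hw : Measurable w)
    (u0 : ∀ x, 0 ≤ u x) (v0 : ∀ x, 0 ≤ v x) (w0 : ∀ x, 0 ≤ w x)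
    (u1 : ∀ x, u x ≤ 1) (v1 : ∀ x, v x ≤ 1) (w1 : ∀ x, w x ≤ 1)
    (su : ∀ l < 1, ∃ x, l < u x) (sv : ∀ l < 1, ∃ x, l < v x)
    (h : ∀ x y, u x * v y ≤ w ((x + y) / 2) ^ 2) :
    (∫⁻ x, ENNReal.ofReal (u x)) + (∫⁻ x, ENNReal.ofReal (v x)) ≤
      2 * ∫⁻ x, ENNReal.ofReal (w x) := by
  rw [layer01 hu u0 u1, layer01 hv v0 v1, layer01 hw w0 w1]
  have mw : ∀ w : ℝ → ℝ, Measurable fun l => volume {x | l < w x} := by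
    intro w
    refine Antitone.measurable ?_
    intro a b hab
    exact measure_mono fun x hx => lt_of_le_of_lt hab hx
  rw [← lintegral_add_left (mw u), ← lintegral_const_mul _ (mw w)]
  refine setLIntegral_mono' measurableSet_Ioo ?_
  intro l hl
  refine bm_one (measurableSet_lt measurable_const hu) (measurableSet_lt measurable_const hv)
    (su l hl.2) (sv l hl.2) ?_
  intro s hs t ht
  have h1 := h s t
  have hs' : l < u s := hs
  have ht' : l < v t := ht
  have : l * l < u s * v t := by
    have := hl.1
    nlinarith
  show l < w _
  nlinarith [w0 ((s+t)/2), hl.1]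

lemma amgm_ennreal (a b : ℝ≥0∞) : 4 * (a * b) ≤ (a + b) ^ 2 := by
  rcases eq_or_ne a ∞ with rfl | ha
  · simp
  rcases eq_or_ne b ∞ with rfl | hb
  · simp
  lift a to ℝ≥0 using ha
  lift b to ℝ≥0 using hb
  norm_cast
  rw [← NNReal.coe_le_coe]
  push_cast
  nlinarith [sq_nonneg ((a:ℝ) - b)]

lemma pl_bdd {u v w : ℝ → ℝ≥0∞} (hu : Measurable u) (hv : Measurable v) (hw : Measurable w)
    (m : ℝ≥0) (um : ∀ x, u x ≤ m) (vm : ∀ x, v x ≤ m)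
    (h : ∀ x y, u x * v y ≤ w ((x + y) / 2) ^ 2) :
    (∫⁻ x, u x) * (∫⁻ x, v x) ≤ (∫⁻ x, w x) ^ 2 := by
  set a := ⨆ x, u x with ha
  set b := ⨆ x, v x with hb
  have ham : a ≤ m := iSup_le um
  have hbm : b ≤ m := iSup_le vm
  have hat : a ≠ ∞ := ne_top_of_le_ne_top ENNReal.coe_ne_top ham
  have hbt : b ≠ ∞ := ne_top_of_le_ne_top ENNReal.coe_ne_top hbm
  have hua : ∀ x, u x ≤ a := fun x => le_iSup u x
  have hvb : ∀ x, v x ≤ b := fun x => le_iSup v x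
  rcases eq_or_ne a 0 with ha0 | ha0
  · have : ∀ x, u x = 0 := fun x => le_antisymm (by rw [← ha0]; exact hua x) bot_le
    simp [this]
  rcases eq_or_ne b 0 with hb0 | hb0
  · have : ∀ x, v x = 0 := fun x => le_antisymm (by rw [← hb0]; exact hvb x) bot_le
    simp [this]
  -- real normalised versions
  set A := a.toReal with hA
  set B := b.toReal with hB
  have Apos : 0 < A := ENNReal.toReal_pos ha0 hat
  have Bpos : 0 < B := ENNReal.toReal_pos hb0 hbt
  have aA : a = ENNReal.ofReal A := (ENNReal.ofReal_toReal hat).symm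
  have bB : b = ENNReal.ofReal B := (ENNReal.ofReal_toReal hbt).symm
  have hut : ∀ x, u x ≠ ∞ := fun x => ne_top_of_le_ne_top hat (hua x)
  have hvt : ∀ x, v x ≠ ∞ := fun x => ne_top_of_le_ne_top hbt (hvb x)
  set s := √(A * B) with hs
  have spos : 0 < s := by positivity
  have s2 : s ^ 2 = A * B := Real.sq_sqrt (by positivity)
  set u' : ℝ → ℝ := fun x => (u x).toReal / A with hu'
  set v' : ℝ → ℝ := fun x => (v x).toReal / B with hv'
  set w' : ℝ → ℝ := fun x => (min (w x) (ENNReal.ofReal s)).toReal / s with hw'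
  have mt : ∀ x, min (w x) (ENNReal.ofReal s) ≠ ∞ := fun x =>
    ne_top_of_le_ne_top ENNReal.ofReal_ne_top (min_le_right _ _)
  have key : (∫⁻ x, ENNReal.ofReal (u' x)) + (∫⁻ x, ENNReal.ofReal (v' x)) ≤
      2 * ∫⁻ x, ENNReal.ofReal (w' x) := by
    apply pl_norm
    · exact hu.ennreal_toReal.div_const _
    · exact hv.ennreal_toReal.div_const _
    · exact (hw.min measurable_const).ennreal_toReal.div_const _
    · intro x; positivity
    · intro x; positivity
    · intro x; positivity
    · intro x; rw [div_le_one Apos]; exact ENNReal.toReal_mono hat (hua x)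
    · intro x; rw [div_le_one Bpos]; exact ENNReal.toReal_mono hbt (hvb x)
    · intro x; rw [div_le_one spos]
      exact ENNReal.toReal_le_of_le_ofReal spos.le (min_le_right _ _)
    · intro l hl
      have : ENNReal.ofReal (l * A) < a := by
        rw [aA]; exact (ENNReal.ofReal_lt_ofReal_iff Apos).2 (by nlinarith)
      obtain ⟨x, hx⟩ := lt_iSup_iff.1 this
      refine ⟨x, ?_⟩
      rw [lt_div_iff₀ Apos]
      by_contra hcon
      refine absurd hx (not_lt.2 ?_)
      rw [← ENNReal.ofReal_toReal (hut x)]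
      exact ENNReal.ofReal_le_ofReal (not_lt.1 hcon)
    · intro l hl
      have : ENNReal.ofReal (l * B) < b := by
        rw [bB]; exact (ENNReal.ofReal_lt_ofReal_iff Bpos).2 (by nlinarith)
      obtain ⟨x, hx⟩ := lt_iSup_iff.1 this
      refine ⟨x, ?_⟩
      rw [lt_div_iff₀ Bpos]
      by_contra hcon
      refine absurd hx (not_lt.2 ?_)
      rw [← ENNReal.ofReal_toReal (hvt x)]
      exact ENNReal.ofReal_le_ofReal (not_lt.1 hcon)
    · intro x y
      have h1 := h x y
      have h2 : u x * v y ≤ (min (w ((x+y)/2)) (ENNReal.ofReal s)) ^ 2 := by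
        rcases le_total (w ((x+y)/2)) (ENNReal.ofReal s) with h3 | h3
        · rw [min_eq_left h3]; exact h1
        · rw [min_eq_right h3, ← ENNReal.ofReal_pow spos.le, s2, ENNReal.ofReal_mul Apos.le,
            ← aA, ← bB]
          exact mul_le_mul' (hua x) (hvb y)
      have h3 := ENNReal.toReal_mono (ENNReal.pow_ne_top (mt _)) h2
      rw [ENNReal.toReal_mul, ENNReal.toReal_pow] at h3
      simp only [hu', hv', hw']
      rw [div_mul_div_comm, div_pow, s2]
      gcongr
  have eu : ∫⁻ x, u x = ENNReal.ofReal A * ∫⁻ x, ENNReal.ofReal (u' x) := by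
    rw [← lintegral_const_mul']
    · congr 1; ext x
      rw [← ENNReal.ofReal_mul Apos.le]
      simp only [hu']
      rw [mul_div_cancel₀ _ Apos.ne', ENNReal.ofReal_toReal (hut x)]
    · exact ENNReal.ofReal_ne_top
  have ev : ∫⁻ x, v x = ENNReal.ofReal B * ∫⁻ x, ENNReal.ofReal (v' x) := by
    rw [← lintegral_const_mul']
    · congr 1; ext x
      rw [← ENNReal.ofReal_mul Bpos.le]
      simp only [hv']
      rw [mul_div_cancel₀ _ Bpos.ne', ENNReal.ofReal_toReal (hvt x)]
    · exact ENNReal.ofReal_ne_top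
  have ew : ENNReal.ofReal s * ∫⁻ x, ENNReal.ofReal (w' x) ≤ ∫⁻ x, w x := by
    rw [← lintegral_const_mul' _ _ ENNReal.ofReal_ne_top]
    refine lintegral_mono fun x => ?_
    rw [← ENNReal.ofReal_mul spos.le]
    simp only [hw']
    rw [mul_div_cancel₀ _ spos.ne', ENNReal.ofReal_toReal (mt x)]
    exact min_le_left _ _
  set a' := ∫⁻ x, ENNReal.ofReal (u' x)
  set b' := ∫⁻ x, ENNReal.ofReal (v' x)
  set c' := ∫⁻ x, ENNReal.ofReal (w' x)
  rw [eu, ev]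
  have h4 : 4 * (a' * b') ≤ 4 * c' ^ 2 := by
    calc 4 * (a' * b') ≤ (a' + b') ^ 2 := amgm_ennreal _ _
      _ ≤ (2 * c') ^ 2 := by gcongr
      _ = 4 * c' ^ 2 := by ring
  have h5 : a' * b' ≤ c' ^ 2 := by
    rwa [ENNReal.mul_le_mul_iff_right (by norm_num) (by norm_num)] at h4
  calc _ = ENNReal.ofReal (A * B) * (a' * b') := by rw [ENNReal.ofReal_mul Apos.le]; ring
    _ ≤ ENNReal.ofReal (A * B) * c' ^ 2 := by gcongr
    _ = (ENNReal.ofReal s * c') ^ 2 := by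
      rw [← s2, ENNReal.ofReal_pow spos.le]; ring
    _ ≤ _ := by gcongr

lemma lintegral_trunc {u : ℝ → ℝ≥0∞} (hu : Measurable u) :
    ∫⁻ x, u x = ⨆ m : ℕ, ∫⁻ x, min (u x) m := by
  rw [← lintegral_iSup]
  · congr 1; ext x
    apply le_antisymm
    · rcases eq_or_ne (u x) ∞ with h | h
      · simp [h, ENNReal.iSup_natCast]
      · obtain ⟨m, hm⟩ := ENNReal.exists_nat_gt h
        exact le_iSup_of_le m (by rw [min_eq_left hm.le])
    · exact iSup_le fun m => min_le_left _ _
  · intro m; exact hu.min measurable_const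
  · intro a b hab x
    exact min_le_min_left _ (by exact_mod_cast hab)

lemma pl_one {u v w : ℝ → ℝ≥0∞} (hu : Measurable u) (hv : Measurable v) (hw : Measurable w)
    (h : ∀ x y, u x * v y ≤ w ((x + y) / 2) ^ 2) :
    (∫⁻ x, u x) * (∫⁻ x, v x) ≤ (∫⁻ x, w x) ^ 2 := by
  rw [lintegral_trunc hu, lintegral_trunc hv, ENNReal.iSup_mul, iSup_le_iff]
  intro m
  rw [ENNReal.mul_iSup, iSup_le_iff]
  intro m'
  refine pl_bdd (m := (max m m' : ℕ)) (hu.min measurable_const) (hv.min measurable_const) hw ?_ ?_ ?_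
  · intro x; refine (min_le_right _ _).trans ?_; push_cast; exact le_max_left _ _
  · intro x; refine (min_le_right _ _).trans ?_; push_cast; exact le_max_right _ _
  · intro x y
    exact (mul_le_mul' (min_le_left _ _) (min_le_left _ _)).trans (h x y)

end

section

/-- Midpoint Prékopa–Leindler property with cost `c`. -/
def PLc {E : Type*} [AddCommGroup E] [Module ℝ E] [MeasurableSpace E] (μ : Measure E)
    (c : E → E → ℝ) : Prop :=
  ∀ u v w : E → ℝ≥0∞, Measurable u → Measurable v → Measurable w →
    (∀ x y, u x * v y ≤ w ((1/2 : ℝ) • (x + y)) ^ 2 * ENNReal.ofReal (exp (c x y))) →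
    (∫⁻ x, u x ∂μ) * (∫⁻ x, v x ∂μ) ≤ (∫⁻ x, w x ∂μ) ^ 2

lemma PLc_real : PLc (volume : Measure ℝ) (fun _ _ => 0) := by
  intro u v w hu hv hw h
  refine pl_one hu hv hw fun x y => ?_
  have := h x y
  simp only [exp_zero, ENNReal.ofReal_one, mul_one] at this
  convert this using 3
  simp; ring

lemma PLc_prod {E F : Type*} [AddCommGroup E] [Module ℝ E] [MeasurableSpace E]
    [AddCommGroup F] [Module ℝ F] [MeasurableSpace F] {μ : Measure E} {ν : Measure F}
    [SFinite μ] [SFinite ν] {c : E → E → ℝ} {d : F → F → ℝ} (hμ : PLc μ c) (hν : PLc ν d) :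
    PLc (μ.prod ν) (fun x y => c x.1 y.1 + d x.2 y.2) := by
  intro u v w hu hv hw h
  rw [lintegral_prod_symm' _ hu, lintegral_prod_symm' _ hv, lintegral_prod_symm' _ hw]
  refine hν _ _ _ hu.lintegral_prod_left' hv.lintegral_prod_left' hw.lintegral_prod_left' ?_
  intro y₁ y₂
  set r := ENNReal.ofReal (exp (d y₁ y₂ / 2)) with hr
  have hr2 : r ^ 2 = ENNReal.ofReal (exp (d y₁ y₂)) := by
    rw [hr, ← ENNReal.ofReal_pow (exp_pos _).le, ← Real.exp_nat_mul]
    congr 2; push_cast; ring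
  have key := hμ (fun x => u (x, y₁)) (fun x => v (x, y₂))
    (fun x => r * w (x, (1/2 : ℝ) • (y₁ + y₂))) (by fun_prop) (by fun_prop) (by fun_prop) ?_
  · rw [lintegral_const_mul _ (by fun_prop), mul_pow, hr2, mul_comm (ENNReal.ofReal _)] at key
    exact key
  · intro x₁ x₂
    refine (h (x₁, y₁) (x₂, y₂)).trans (le_of_eq ?_)
    simp only [mul_pow, hr2, Prod.mk_add_mk, Prod.smul_mk]
    rw [Real.exp_add, ENNReal.ofReal_mul (exp_pos _).le]
    ring

lemma PLc_map {E F : Type*} [AddCommGroup E] [Module ℝ E] [MeasurableSpace E]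
    [AddCommGroup F] [Module ℝ F] [MeasurableSpace F] {μ : Measure E} {ν : Measure F}
    {c : E → E → ℝ} {d : F → F → ℝ} (hμ : PLc μ c) (e : E → F)
    (he : MeasurePreserving e μ ν)
    (hlin : ∀ x y, e ((1/2 : ℝ) • (x + y)) = (1/2 : ℝ) • (e x + e y))
    (hc : ∀ x y, d (e x) (e y) ≤ c x y) : PLc ν d := by
  intro u v w hu hv hw h
  rw [← he.lintegral_comp hu, ← he.lintegral_comp hv, ← he.lintegral_comp hw]
  refine hμ _ _ _ (hu.comp he.measurable) (hv.comp he.measurable) (hw.comp he.measurable) ?_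
  intro x y
  rw [hlin]
  refine (h (e x) (e y)).trans ?_
  gcongr
  exact hc x y

lemma PLc_pi {E : Type*} [AddCommGroup E] [Module ℝ E] [MeasurableSpace E]
    {μ : Measure E} [SigmaFinite μ] {c : E → E → ℝ} (hμ : PLc μ c) (k : ℕ) :
    PLc (Measure.pi fun _ : Fin k => μ) (fun x y => ∑ i, c (x i) (y i)) := by
  induction k with
  | zero =>
    intro u v w hu hv hw h
    have : ∀ g : (Fin 0 → E) → ℝ≥0∞, ∫⁻ x, g x ∂(Measure.pi fun _ : Fin 0 => μ) = g 0 := by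
      intro g
      rw [Measure.pi_of_empty _ 0, lintegral_dirac]
    rw [this, this, this]
    have := h 0 0
    simpa using this
  | succ k ih =>
    have e := (measurePreserving_piFinSuccAbove (fun _ : Fin (k+1) => μ) 0).symm
    refine PLc_map (PLc_prod hμ ih) _ e ?_ ?_
    · intro x y
      ext i
      refine Fin.cases ?_ (fun j => ?_) i <;>
      simp [MeasurableEquiv.piFinSuccAbove]
    · intro x y
      rw [Fin.sum_univ_succ]
      simp [MeasurableEquiv.piFinSuccAbove]

lemma PLc_mono {E : Type*} [AddCommGroup E] [Module ℝ E] [MeasurableSpace E]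
    {μ : Measure E} {c d : E → E → ℝ} (hμ : PLc μ c) (h : ∀ x y, d x y ≤ c x y) : PLc μ d := by
  intro u v w hu hv hw h'
  refine hμ u v w hu hv hw fun x y => (h' x y).trans ?_
  gcongr
  exact h x y

lemma PLc_euclid (n : ℕ) : PLc (volume : Measure (EuclideanSpace ℝ (Fin n))) (fun _ _ => 0) := by
  refine PLc_map (PLc_pi PLc_real n) _ (PiLp.volume_preserving_toLp (Fin n)) ?_ ?_
  · intro x y; rfl
  · intro x y; simp

lemma PLc_density {E : Type*} [AddCommGroup E] [Module ℝ E] [MeasurableSpace E]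
    {μ : Measure E} (hμ : PLc μ (fun _ _ => 0)) {g : E → ℝ} (gm : Measurable g) (g0 : ∀ x, 0 ≤ g x)
    {c : E → E → ℝ}
    (h : ∀ x y, g x * g y * exp (c x y) ≤ g ((1/2 : ℝ) • (x + y)) ^ 2) :
    PLc (μ.withDensity fun x => ENNReal.ofReal (g x)) c := by
  intro u v w hu hv hw h'
  rw [lintegral_withDensity_eq_lintegral_mul _ (by fun_prop) hu,
    lintegral_withDensity_eq_lintegral_mul _ (by fun_prop) hv,
    lintegral_withDensity_eq_lintegral_mul _ (by fun_prop) hw]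
  refine hμ _ _ _ (by fun_prop) (by fun_prop) (by fun_prop) ?_
  intro x y
  simp only [Pi.mul_apply, exp_zero, ENNReal.ofReal_one, mul_one]
  calc _ = ENNReal.ofReal (g x) * ENNReal.ofReal (g y) * (u x * v y) := by ring
    _ ≤ ENNReal.ofReal (g x) * ENNReal.ofReal (g y) *
      (w ((1/2 : ℝ) • (x + y)) ^ 2 * ENNReal.ofReal (exp (c x y))) := mul_le_mul_right (h' x y) _
    _ = ENNReal.ofReal (g x * g y * exp (c x y)) * w ((1/2 : ℝ) • (x + y)) ^ 2 := by
      rw [ENNReal.ofReal_mul (mul_nonneg (g0 x) (g0 y)), ENNReal.ofReal_mul (g0 x)]; ring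
    _ ≤ ENNReal.ofReal (g ((1/2 : ℝ) • (x + y)) ^ 2) * w ((1/2 : ℝ) • (x + y)) ^ 2 := by
      gcongr; exact h x y
    _ = _ := by rw [ENNReal.ofReal_pow (g0 _)]; ring

/-- Gaussian density. -/
def gdens (n : ℕ) (x : EuclideanSpace ℝ (Fin n)) : ℝ :=
  (2 * π) ^ (-(n:ℝ)/2) * Real.exp (-‖x‖ ^ 2 / 2)

/-- Standard Gaussian measure. -/
def gam (n : ℕ) : Measure (EuclideanSpace ℝ (Fin n)) :=
  volume.withDensity fun x => ENNReal.ofReal (gdens n x)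

lemma gdens_meas (n : ℕ) : Measurable (gdens n) := by unfold gdens; fun_prop

lemma gdens_nonneg (n : ℕ) (x) : 0 ≤ gdens n x := by unfold gdens; positivity

lemma PLc_gam (n : ℕ) : PLc (gam n) (fun x y => ‖x - y‖ ^ 2 / 4) := by
  refine PLc_density (PLc_euclid n) (gdens_meas n) (gdens_nonneg n) ?_
  intro x y
  unfold gdens
  rw [mul_pow, ← Real.exp_nat_mul]
  have e : Real.exp (-‖x‖ ^ 2 / 2) * Real.exp (-‖y‖ ^ 2 / 2) * Real.exp (‖x - y‖ ^ 2 / 4)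
    = Real.exp (((2:ℕ):ℝ) * (-‖(1/2:ℝ) • (x + y)‖ ^ 2 / 2)) := by
    rw [← Real.exp_add, ← Real.exp_add]
    congr 1
    rw [norm_smul, mul_pow, @norm_add_sq_real, @norm_sub_sq_real]
    norm_num; ring
  rw [← e]
  apply le_of_eq; ring

instance gam_sfin (n : ℕ) : SigmaFinite (gam n) := by
  unfold gam
  exact SigmaFinite.withDensity_ofReal _

lemma PLc_gampi (n k : ℕ) : PLc (Measure.pi fun _ : Fin k => gam n)
    (fun x y => ∑ i, ‖x i - y i‖ ^ 2 / 4) := PLc_pi (PLc_gam n) k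

end

section

/-- Abbreviation for Euclidean space. -/
abbrev EE (n : ℕ) := EuclideanSpace ℝ (Fin n)

lemma PL_half {E : Type*} [AddCommGroup E] [Module ℝ E] [MeasurableSpace E] {μ : Measure E}
    [SFinite μ] (hμ : PLc μ (fun _ _ => 0)) {u v w : E × ℝ → ℝ≥0∞}
    (hu : Measurable u) (hv : Measurable v) (hw : Measurable w)
    (h : ∀ x y t s, 0 < t → 0 < s →
      u (x, t) * v (y, s) ≤ w ((1/2 : ℝ) • (x + y), (1/2 : ℝ) * (t + s)) ^ 2) :
    (∫⁻ z, u z ∂(μ.prod (volume.restrict (Set.Ioi 0)))) *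
      (∫⁻ z, v z ∂(μ.prod (volume.restrict (Set.Ioi 0)))) ≤
      (∫⁻ z, w z ∂(μ.prod (volume.restrict (Set.Ioi 0)))) ^ 2 := by
  have e : μ.prod (volume.restrict (Set.Ioi (0:ℝ))) =
      (μ.prod volume).restrict (Set.univ ×ˢ Set.Ioi (0:ℝ)) := by
    rw [← Measure.prod_restrict, Measure.restrict_univ]
  have ms : MeasurableSet ((Set.univ : Set E) ×ˢ Set.Ioi (0:ℝ)) :=
    MeasurableSet.univ.prod measurableSet_Ioi
  rw [e, ← lintegral_indicator ms, ← lintegral_indicator ms, ← lintegral_indicator ms]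
  refine PLc_prod hμ PLc_real _ _ _ (hu.indicator ms) (hv.indicator ms) (hw.indicator ms) ?_
  rintro ⟨x, t⟩ ⟨y, s⟩
  by_cases ht : 0 < t
  · by_cases hs : 0 < s
    · have hts : 0 < t + s := by positivity
      have h1 := h x y t s ht hs
      simpa [Set.indicator, ht, hs, hts] using h1
    · simp [Set.indicator, hs]
  · simp [Set.indicator, ht]

variable {n k : ℕ}

/-- squared length of `s = t e - Γ L x`. -/
def S2 (L : EE n →L[ℝ] EE n) (e : Fin k → ℝ) (Γ : Fin k → EE n) (z : EE n × ℝ) : ℝ :=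
  ∑ i, (z.2 * e i - ⟪Γ i, L z.1⟫) ^ 2

lemma S2_nonneg (L : EE n →L[ℝ] EE n) (e : Fin k → ℝ) (Γ : Fin k → EE n) (z : EE n × ℝ) :
    0 ≤ S2 L e Γ z := Finset.sum_nonneg fun i _ => sq_nonneg _

@[fun_prop]
lemma S2_cont (L : EE n →L[ℝ] EE n) (e : Fin k → ℝ) :
    Continuous (fun p : (Fin k → EE n) × (EE n × ℝ) => S2 L e p.1 p.2) := by
  unfold S2
  fun_prop

@[fun_prop]
lemma S2_cont' (L : EE n →L[ℝ] EE n) (e : Fin k → ℝ) (Γ : Fin k → EE n) :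
    Continuous (S2 L e Γ) := by
  unfold S2
  fun_prop

/-- Lebesgue measure on the half-line times `μ`. -/
def hl (μ : Measure (EE n)) : Measure (EE n × ℝ) := μ.prod (volume.restrict (Set.Ioi 0))

/-- The integrals `h_q(Γ)`. -/
def HH (μ : Measure (EE n)) (L : EE n →L[ℝ] EE n) (e : Fin k → ℝ) (q : ℝ) (Γ : Fin k → EE n) :
    ℝ≥0∞ :=
  ∫⁻ z, ENNReal.ofReal (z.2 ^ q * exp (-(S2 L e Γ z) / 2)) ∂(hl μ)

lemma HH_meas (μ : Measure (EE n)) [SFinite μ] (L : EE n →L[ℝ] EE n) (e : Fin k → ℝ) (q : ℝ) :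
    Measurable (HH μ L e q) := by
  unfold HH
  have : SFinite (hl μ) := by unfold hl; infer_instance
  refine Measurable.lintegral_prod_right' (ν := hl μ)
    (f := fun p : (Fin k → EE n) × (EE n × ℝ) =>
      ENNReal.ofReal (p.2.2 ^ q * exp (-(S2 L e p.1 p.2) / 2))) ?_
  have := (S2_cont (k := k) L e).measurable
  fun_prop

lemma S2_mid (L : EE n →L[ℝ] EE n) (e : Fin k → ℝ) (Γ : Fin k → EE n) (x y : EE n) (t s : ℝ) :
    2 * S2 L e Γ ((1/2 : ℝ) • (x + y), (1/2 : ℝ) * (t + s)) ≤ S2 L e Γ (x, t) + S2 L e Γ (y, s) := by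
  unfold S2
  rw [Finset.mul_sum, ← Finset.sum_add_distrib]
  refine Finset.sum_le_sum fun i _ => ?_
  simp only [map_smul, map_add, inner_smul_right, inner_add_right]
  nlinarith [sq_nonneg ((t * e i - ⟪Γ i, L x⟫) - (s * e i - ⟪Γ i, L y⟫))]

lemma HH_pl {μ : Measure (EE n)} [SFinite μ] (hμ : PLc μ (fun _ _ => 0))
    (L : EE n →L[ℝ] EE n) (e : Fin k → ℝ) (Γ : Fin k → EE n) {a b q K : ℝ} (hK : 0 ≤ K)
    (h : ∀ t s : ℝ, 0 < t → 0 < s → t ^ a * s ^ b ≤ K * ((1/2) * (t + s)) ^ (2 * q)) :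
    HH μ L e a Γ * HH μ L e b Γ ≤ ENNReal.ofReal K * HH μ L e q Γ ^ 2 := by
  have hm : ∀ q : ℝ, Measurable fun z : EE n × ℝ =>
      ENNReal.ofReal (z.2 ^ q * exp (-(S2 L e Γ z) / 2)) := by
    intro q
    have := (S2_cont' (k := k) L e Γ).measurable
    fun_prop
  have e1 : ENNReal.ofReal K * HH μ L e q Γ ^ 2 = (∫⁻ z, ENNReal.ofReal (√K) *
      ENNReal.ofReal (z.2 ^ q * exp (-(S2 L e Γ z) / 2)) ∂(hl μ)) ^ 2 := by
    rw [lintegral_const_mul _ (hm q), mul_pow, ← ENNReal.ofReal_pow (Real.sqrt_nonneg _),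
      Real.sq_sqrt hK]
    rfl
  rw [e1]
  refine PL_half hμ (hm a) (hm b) ((hm q).const_mul _) ?_
  intro x y t s ht hs
  have hts : 0 < (1/2:ℝ) * (t + s) := by positivity
  rw [← ENNReal.ofReal_mul (by positivity), ← ENNReal.ofReal_mul (by positivity),
    ← ENNReal.ofReal_pow (by positivity)]
  apply ENNReal.ofReal_le_ofReal
  have h1 := h t s ht hs
  have h2 := S2_mid L e Γ x y t s
  simp only
  rw [mul_pow, mul_pow, Real.sq_sqrt hK, ← Real.exp_nat_mul, ← Real.rpow_natCast (_ ^ q),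
    ← Real.rpow_mul hts.le]
  calc _ = (t ^ a * s ^ b) * exp (-(S2 L e Γ (x, t)) / 2 + -(S2 L e Γ (y, s)) / 2) := by
        rw [Real.exp_add]; ring
    _ ≤ (K * ((1/2) * (t + s)) ^ (2 * q)) *
        exp ((2:ℕ) * (-(S2 L e Γ ((1/2 : ℝ) • (x + y), (1/2 : ℝ) * (t + s))) / 2)) := by
      gcongr
      push_cast
      linarith
    _ = _ := by push_cast; ring_nf

lemma am1 {q t s : ℝ} (hq : 0 ≤ q) (ht : 0 < t) (hs : 0 < s) :
    t ^ (2 * q) * s ^ (0:ℝ) ≤ 4 ^ q * ((1/2) * (t + s)) ^ (2 * q) := by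
  rw [Real.rpow_zero, mul_one]
  have : (4:ℝ) ^ q = 2 ^ (2 * q) := by
    rw [Real.rpow_mul (by norm_num)]; norm_num
  rw [this, ← Real.mul_rpow (by norm_num) (by positivity)]
  apply Real.rpow_le_rpow ht.le _ (by positivity)
  linarith

lemma am2 {q a t s : ℝ} (ha : 0 ≤ a) (haq : a < q) (ht : 0 < t) (hs : 0 < s) :
    t ^ (q - a) * s ^ (q + a) ≤ exp (2 * a ^ 2 / q) * ((1/2) * (t + s)) ^ (2 * q) := by
  have hq : 0 < q := by linarith
  have h1 : 0 < q - a := by linarith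
  have h2 : 0 < q + a := by linarith
  have hts : 0 < (1/2:ℝ) * (t + s) := by positivity
  rw [Real.rpow_def_of_pos ht, Real.rpow_def_of_pos hs, Real.rpow_def_of_pos hts, ← Real.exp_add,
    ← Real.exp_add]
  apply Real.exp_le_exp.2
  -- log t ≤ log (m (q-a)/q) + (t q/(m (q-a)) - 1)
  set m := (1/2:ℝ) * (t + s) with hm
  have key : ∀ c t : ℝ, 0 < c → 0 < t → c * Real.log t ≤ c * Real.log m + c * Real.log (c / q) +
      (t * q / m - c) := by
    intro c t hc ht
    have := Real.log_le_sub_one_of_pos (x := t * q / (m * c)) (by positivity)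
    rw [Real.log_div (by positivity) (by positivity), Real.log_mul (by positivity) (by positivity),
      Real.log_mul (by positivity) (by positivity)] at this
    rw [Real.log_div (by positivity) (by positivity)]
    have h3 : c * (t * q / (m * c)) = t * q / m := by field_simp
    nlinarith [mul_le_mul_of_nonneg_left this hc.le]
  have k1 := key (q - a) t h1 ht
  have k2 := key (q + a) s h2 hs
  have e3 : t * q / m + s * q / m = 2 * q := by
    rw [← add_div, div_eq_iff hts.ne', hm]; ring
  have l1 := mul_le_mul_of_nonneg_left
    (Real.log_le_sub_one_of_pos (x := (q - a) / q) (by positivity)) h1.le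
  have l2 := mul_le_mul_of_nonneg_left
    (Real.log_le_sub_one_of_pos (x := (q + a) / q) (by positivity)) h2.le
  have e4 : (q - a) * ((q - a) / q - 1) + (q + a) * ((q + a) / q - 1) = 2 * a ^ 2 / q := by
    field_simp; ring
  nlinarith

end

section

lemma lint_gauss {V : Type*} [NormedAddCommGroup V] [InnerProductSpace ℝ V] [FiniteDimensional ℝ V]
    [MeasurableSpace V] [BorelSpace V] {b : ℝ} (hb : 0 < b) (w : V) :
    ∫⁻ x : V, ENNReal.ofReal (exp (-b * ‖x‖ ^ 2 + ⟪w, x⟫)) =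
      ENNReal.ofReal ((π / b) ^ (Module.finrank ℝ V / 2 : ℝ) * exp (‖w‖ ^ 2 / (4 * b))) := by
  have h1 : ∫⁻ x : V, ENNReal.ofReal (exp (-b * ‖x‖ ^ 2)) =
      ENNReal.ofReal ((π / b) ^ (Module.finrank ℝ V / 2 : ℝ)) := by
    rw [← GaussianFourier.integral_rexp_neg_mul_sq_norm hb, ofReal_integral_eq_lintegral_ofReal]
    · by_contra hcon
      have := GaussianFourier.integral_rexp_neg_mul_sq_norm (V := V) hb
      rw [integral_undef hcon] at this
      have : 0 < (π / b) ^ (Module.finrank ℝ V / 2 : ℝ) := by positivity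
      linarith
    · exact ae_of_all _ fun x => (exp_pos _).le
  rw [← lintegral_add_right_eq_self _ ((1/(2*b)) • w), ENNReal.ofReal_mul (by positivity), ← h1,
    ← lintegral_mul_const _ (by fun_prop)]
  congr 1; ext x
  rw [← ENNReal.ofReal_mul (exp_pos _).le, ← Real.exp_add]
  congr 2
  rw [@norm_add_sq_real, inner_add_right, inner_smul_right, inner_smul_right, norm_smul,
    real_inner_self_eq_norm_sq, real_inner_comm]
  rw [mul_pow, Real.norm_eq_abs, sq_abs]
  field_simp; ring

lemma gdens_eq (n : ℕ) (x : EE n) : gdens n x = (2 * π) ^ (-(n:ℝ)/2) * Real.exp (-‖x‖ ^ 2 / 2) := rfl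

lemma lint_gam {n : ℕ} {F : EE n → ℝ≥0∞} (hF : Measurable F) :
    ∫⁻ x, F x ∂(gam n) = ∫⁻ x, ENNReal.ofReal (gdens n x) * F x := by
  unfold gam
  rw [lintegral_withDensity_eq_lintegral_mul _ _ hF]
  · rfl
  · exact (gdens_meas n).ennreal_ofReal

lemma gam_exp_sq {n : ℕ} {l : ℝ} (hl : l < 1/2) (v : EE n) :
    ∫⁻ x, ENNReal.ofReal (exp (l * ‖v + x‖ ^ 2)) ∂(gam n) =
      ENNReal.ofReal ((1 - 2 * l) ^ (-(n:ℝ)/2) * exp (l * ‖v‖ ^ 2 / (1 - 2 * l))) := by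
  rw [lint_gam (by fun_prop)]
  have hb : 0 < 1/2 - l := by linarith
  have := lint_gauss hb ((2 * l) • v)
  have e : ∀ x : EE n, ENNReal.ofReal (gdens n x) * ENNReal.ofReal (exp (l * ‖v + x‖ ^ 2)) =
      ENNReal.ofReal ((2 * π) ^ (-(n:ℝ)/2) * exp (l * ‖v‖ ^ 2)) *
      ENNReal.ofReal (exp (-(1/2 - l) * ‖x‖ ^ 2 + ⟪(2 * l) • v, x⟫)) := by
    intro x
    rw [← ENNReal.ofReal_mul (gdens_nonneg n x), ← ENNReal.ofReal_mul (by positivity), gdens_eq,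
      mul_assoc, mul_assoc, ← Real.exp_add, ← Real.exp_add]
    congr 3
    rw [@norm_add_sq_real, inner_smul_left]
    simp; ring
  simp_rw [e]
  rw [lintegral_const_mul _ (by fun_prop), this, ← ENNReal.ofReal_mul (by positivity)]
  congr 1
  have e2 : π / (1/2 - l) = (2 * π) / (1 - 2 * l) := by
    field_simp; 
  have h12 : 0 < 1 - 2 * l := by linarith
  simp only [finrank_euclideanSpace, Fintype.card_fin]
  rw [e2, Real.div_rpow (by positivity) (by positivity), neg_div,
    Real.rpow_neg (by positivity), Real.rpow_neg (by positivity)]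
  have h3 : exp (l * ‖v‖ ^ 2) * exp (‖(2 * l) • v‖ ^ 2 / (4 * (1/2 - l))) =
      exp (l * ‖v‖ ^ 2 / (1 - 2 * l)) := by
    rw [← Real.exp_add]
    congr 1
    rw [norm_smul, mul_pow, Real.norm_eq_abs, sq_abs]
    have : 4 * (1/2 - l) = 2 * (1 - 2 * l) := by ring
    rw [this]
    have h13 : 1 - 2 * l ≠ 0 := h12.ne'
    rw [eq_div_iff h13, add_mul]
    have h14 : (2 * l) ^ 2 * ‖v‖ ^ 2 / (2 * (1 - 2 * l)) * (1 - 2 * l) = 2 * l ^ 2 * ‖v‖ ^ 2 := by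
      rw [div_mul_eq_mul_div, div_eq_iff (by positivity)]; ring
    rw [h14]; ring
  have hp : 0 < (2 * π) ^ ((n:ℝ)/2) := by positivity
  rw [← h3]
  field_simp

instance gam_prob (n : ℕ) : IsProbabilityMeasure (gam n) := by
  constructor
  have := gam_exp_sq (n := n) (l := 0) (by norm_num) 0
  simpa using this

lemma gam_map_inner {n : ℕ} (y : EE n) :
    (gam n).map (fun x => ⟪x, y⟫) = gaussianReal 0 (‖y‖₊ ^ 2) := by
  have hm : Measurable (fun x : EE n => ⟪x, y⟫) := by fun_prop
  have : IsProbabilityMeasure ((gam n).map (fun x => ⟪x, y⟫)) :=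
    Measure.isProbabilityMeasure_map hm.aemeasurable
  apply Measure.ext_of_charFun
  ext t
  rw [charFun_gaussianReal, charFun_apply_real, integral_map hm.aemeasurable (by fun_prop)]
  unfold gam
  rw [integral_withDensity_eq_integral_toReal_smul (by have := gdens_meas n; fun_prop) (by simp)]
  have h := GaussianFourier.integral_cexp_neg_mul_sq_norm_add_of_euclideanSpace (ι := Fin n) (b := 1/2)
    (by norm_num) (t * Complex.I) y
  have e : ∀ x : EE n, (ENNReal.ofReal (gdens n x)).toReal •
      Complex.exp (t * (⟪x, y⟫ : ℝ) * Complex.I) = (((2 * π) ^ (-(n:ℝ)/2) : ℝ) : ℂ) *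
      Complex.exp (- (1/2) * ‖x‖ ^ 2 + (t * Complex.I) * (⟪y, x⟫ : ℝ)) := by
    intro x
    rw [ENNReal.toReal_ofReal (gdens_nonneg n x), gdens_eq, Complex.real_smul]
    push_cast
    rw [mul_assoc, ← Complex.exp_add]
    congr 2
    rw [real_inner_comm]
    ring
  simp_rw [e]
  rw [integral_const_mul, h, ← mul_assoc]
  have e2 : (((2 * π) ^ (-(n:ℝ)/2) : ℝ) : ℂ) * ((π:ℂ) / (1/2)) ^ ((Fintype.card (Fin n) : ℂ)/ 2) = 1 := by
    have : ((π:ℂ) / (1/2)) = ((2 * π : ℝ) : ℂ) := by push_cast; ring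
    rw [this, Fintype.card_fin]
    have h5 : ((n:ℂ)/2) = (((n:ℝ)/2 : ℝ) : ℂ) := by push_cast; ring
    rw [h5, ← Complex.ofReal_cpow (by positivity), ← Complex.ofReal_mul, ← Real.rpow_add (by positivity)]
    have : -(n:ℝ)/2 + n/2 = 0 := by ring
    rw [this]; simp
  rw [e2, one_mul]
  congr 1
  push_cast
  rw [mul_pow, Complex.I_sq]
  simp; ring

lemma lint_gauss1 {b : ℝ} (hb : 0 < b) (c : ℝ) :
    ∫⁻ x : ℝ, ENNReal.ofReal (exp (-b * x ^ 2 + c * x)) =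
      ENNReal.ofReal (√(π / b) * exp (c ^ 2 / (4 * b))) := by
  have := lint_gauss (V := ℝ) hb c
  rw [Real.sqrt_eq_rpow]
  simp only [Module.finrank_self, Nat.cast_one, Real.norm_eq_abs, sq_abs] at this
  rw [← this]
  congr 1; ext x; congr 3
  simp [mul_comm]

lemma gam_row {n : ℕ} (y : EE n) (a : ℝ) :
    ∫⁻ x, ENNReal.ofReal (exp (-(a - ⟪x, y⟫) ^ 2 / 2)) ∂(gam n) =
      ENNReal.ofReal ((√(1 + ‖y‖ ^ 2))⁻¹ * exp (-a ^ 2 / (2 * (1 + ‖y‖ ^ 2)))) := by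
  have hm : Measurable (fun x : EE n => ⟪x, y⟫) := by fun_prop
  have h1 : ∫⁻ x, ENNReal.ofReal (exp (-(a - ⟪x, y⟫) ^ 2 / 2)) ∂(gam n) =
      ∫⁻ z, ENNReal.ofReal (exp (-(a - z) ^ 2 / 2)) ∂(gaussianReal 0 (‖y‖₊ ^ 2)) := by
    rw [← gam_map_inner, lintegral_map (by fun_prop) hm]
  rw [h1]
  by_cases hy : y = 0
  · simp [hy]
  have hv : ‖y‖₊ ^ 2 ≠ 0 := by simpa using hy
  rw [gaussianReal_of_var_ne_zero _ hv, lintegral_withDensity_eq_lintegral_mul _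
    (measurable_gaussianPDF _ _) (by fun_prop)]
  have hy' : 0 < ‖y‖ := by positivity
  set v := ‖y‖ ^ 2 with hvdef
  have hvp : 0 < v := by positivity
  have e : ∀ z, (gaussianPDF 0 (‖y‖₊ ^ 2) * fun z => ENNReal.ofReal (exp (-(a - z) ^ 2 / 2))) z =
      ENNReal.ofReal ((√(2 * π * v))⁻¹ * exp (-a ^ 2 / 2)) *
      ENNReal.ofReal (exp (-((1 + v) / (2 * v)) * z ^ 2 + a * z)) := by
    intro z
    rw [Pi.mul_apply, gaussianPDF, gaussianPDFReal, ← ENNReal.ofReal_mul (by positivity),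
      ← ENNReal.ofReal_mul (by positivity)]
    push_cast
    rw [← hvdef, mul_assoc (√(2 * π * v))⁻¹, mul_assoc (√(2 * π * v))⁻¹, ← Real.exp_add, ← Real.exp_add]
    congr 3
    field_simp
    ring
  simp_rw [e]
  rw [lintegral_const_mul _ (by fun_prop), lint_gauss1 (by positivity),
    ← ENNReal.ofReal_mul (by positivity)]
  congr 1
  have e1 : √(π / ((1 + v) / (2 * v))) = √(2 * π * v) / √(1 + v) := by
    rw [← Real.sqrt_div (by positivity)]; congr 1; field_simp
  have e2 : exp (-a ^ 2 / (2 * (1 + v))) = exp (-a ^ 2 / 2) * exp (a ^ 2 / (4 * ((1 + v) / (2 * v)))) := by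
    rw [← Real.exp_add]; congr 1; field_simp; ring
  rw [e1, e2]
  have : 0 < √(2 * π * v) := by positivity
  field_simp

lemma gam_shift {n : ℕ} {F : EE n → ℝ≥0∞} (hF : Measurable F) (w : EE n) :
    ∫⁻ x, F x * ENNReal.ofReal (exp ⟪x, w⟫) ∂(gam n) =
      ENNReal.ofReal (exp (‖w‖ ^ 2 / 2)) * ∫⁻ x, F (x + w) ∂(gam n) := by
  rw [lint_gam (by fun_prop), lint_gam (by fun_prop), ← lintegral_add_right_eq_self _ w,
    ← lintegral_const_mul _ (by have := gdens_meas n; fun_prop)]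
  congr 1; ext x
  have : ENNReal.ofReal (gdens n (x + w)) * ENNReal.ofReal (exp ⟪x + w, w⟫) =
      ENNReal.ofReal (exp (‖w‖ ^ 2 / 2)) * ENNReal.ofReal (gdens n x) := by
    rw [← ENNReal.ofReal_mul (gdens_nonneg n _), ← ENNReal.ofReal_mul (exp_pos _).le, gdens_eq,
      gdens_eq, mul_assoc, ← Real.exp_add, mul_left_comm, ← Real.exp_add]
    congr 3
    rw [@norm_add_sq_real, inner_add_left, real_inner_self_eq_norm_sq]
    ring
  calc _ = F (x + w) * (ENNReal.ofReal (gdens n (x + w)) * ENNReal.ofReal (exp ⟪x + w, w⟫)) := by ring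
    _ = _ := by rw [this]; ring

lemma gam_row_bad {n : ℕ} (y θ : EE n) (hθ : ‖θ‖ ≤ 1) (a : ℝ) :
    ∫⁻ x, ENNReal.ofReal (exp (-(a - ⟪x, y⟫) ^ 2 / 2)) * ENNReal.ofReal (exp (⟪x, θ⟫ ^ 2 / 8)) ∂(gam n) ≤
      ENNReal.ofReal (√2 * (√(1 + ‖y‖ ^ 2))⁻¹ * exp (-a ^ 2 / (4 * (1 + ‖y‖ ^ 2)))) := by
  set r2 := 1 + ‖y‖ ^ 2 with hr2
  have r2pos : 0 < r2 := by positivity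
  have hs : 0 < √(2 * π) := by positivity
  have hg : ∀ w : ℝ, ENNReal.ofReal (√(2 * π)) * ENNReal.ofReal (exp (w ^ 2 / 8)) =
      ∫⁻ g : ℝ, ENNReal.ofReal (exp (-(1/2) * g ^ 2)) * ENNReal.ofReal (exp ((w / 2) * g)) := by
    intro w
    simp_rw [← ENNReal.ofReal_mul (exp_pos _).le, ← Real.exp_add]
    rw [lint_gauss1 (by norm_num), ← ENNReal.ofReal_mul hs.le]
    congr 2
    · congr 1; ring
    · congr 1; ring
  rw [← ENNReal.mul_le_mul_iff_right (a := ENNReal.ofReal (√(2 * π))) (by simpa using hs)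
    ENNReal.ofReal_ne_top, ← lintegral_const_mul _ (by fun_prop)]
  calc ∫⁻ x, ENNReal.ofReal (√(2 * π)) * (ENNReal.ofReal (exp (-(a - ⟪x, y⟫) ^ 2 / 2)) * ENNReal.ofReal (exp (⟪x, θ⟫ ^ 2 / 8))) ∂(gam n)
      = ∫⁻ x, ∫⁻ g : ℝ, ENNReal.ofReal (exp (-(1/2) * g ^ 2)) * (ENNReal.ofReal (exp (-(a - ⟪x, y⟫) ^ 2 / 2)) *
          ENNReal.ofReal (exp ⟪x, (g / 2) • θ⟫)) ∂volume ∂(gam n) := by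
        congr 1; ext x
        rw [mul_left_comm, hg, ← lintegral_const_mul _ (by fun_prop)]
        congr 1; ext g
        rw [inner_smul_right, mul_left_comm]
        congr 4; ring
    _ = ∫⁻ g : ℝ, ∫⁻ x, ENNReal.ofReal (exp (-(1/2) * g ^ 2)) * (ENNReal.ofReal (exp (-(a - ⟪x, y⟫) ^ 2 / 2)) *
          ENNReal.ofReal (exp ⟪x, (g / 2) • θ⟫)) ∂(gam n) := by
        rw [lintegral_lintegral_swap]
        apply Measurable.aemeasurable
        fun_prop
    _ = ∫⁻ g : ℝ, ENNReal.ofReal (exp (-(1/2) * g ^ 2)) * (ENNReal.ofReal (exp (‖(g / 2) • θ‖ ^ 2 / 2)) *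
          ENNReal.ofReal ((√r2)⁻¹ * exp (-(a - ⟪(g / 2) • θ, y⟫) ^ 2 / (2 * r2)))) := by
        congr 1; ext g
        rw [lintegral_const_mul _ (by fun_prop), gam_shift (by fun_prop)]
        congr 2
        rw [hr2, ← gam_row]
        congr 1; ext x
        rw [inner_add_left]; congr 3; ring
    _ ≤ ∫⁻ g : ℝ, ENNReal.ofReal ((√r2)⁻¹ * exp (-a ^ 2 / (4 * r2))) *
          ENNReal.ofReal (exp (-(1/4) * g ^ 2 + 0 * g)) := by
        refine lintegral_mono fun g => ?_
        rw [← ENNReal.ofReal_mul (exp_pos _).le, ← ENNReal.ofReal_mul (exp_pos _).le,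
          ← ENNReal.ofReal_mul (by positivity)]
        apply ENNReal.ofReal_le_ofReal
        have e1 : ∀ p q r s : ℝ, exp p * (exp q * (s * exp r)) = s * exp (p + q + r) := by
          intro p q r s; rw [Real.exp_add, Real.exp_add]; ring
        rw [e1, mul_assoc, ← Real.exp_add]
        refine mul_le_mul_of_nonneg_left (Real.exp_le_exp.2 ?_) (by positivity)
        have h1 : ‖(g / 2) • θ‖ ^ 2 ≤ g ^ 2 / 4 := by
          rw [norm_smul, mul_pow, Real.norm_eq_abs, sq_abs]
          have : ‖θ‖ ^ 2 ≤ 1 := by nlinarith [norm_nonneg θ]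
          nlinarith [sq_nonneg g]
        have h2 : ⟪(g / 2) • θ, y⟫ ^ 2 ≤ g ^ 2 / 4 * r2 := by
          have h3 := abs_real_inner_le_norm ((g / 2) • θ) y
          have h4 : ⟪(g / 2) • θ, y⟫ ^ 2 ≤ (‖(g / 2) • θ‖ * ‖y‖) ^ 2 := by
            rw [← sq_abs]; gcongr
          rw [mul_pow] at h4
          refine h4.trans ?_
          gcongr
          rw [hr2]; linarith
        set m := ⟪(g / 2) • θ, y⟫
        have h5 : -(a - m) ^ 2 / (2 * r2) ≤ -a ^ 2 / (4 * r2) + g ^ 2 / 8 := by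
          have h6 : -a ^ 2 / (4 * r2) + g ^ 2 / 8 - -(a - m) ^ 2 / (2 * r2) =
            ((g ^ 2 / 4 * r2 - m ^ 2) + (a - 2 * m) ^ 2 / 2) / (2 * r2) := by
            field_simp; ring
          have h7 : 0 ≤ ((g ^ 2 / 4 * r2 - m ^ 2) + (a - 2 * m) ^ 2 / 2) / (2 * r2) := by
            apply div_nonneg _ (by positivity)
            nlinarith [sq_nonneg (a - 2 * m)]
          linarith
        linarith
    _ = _ := by
        rw [lintegral_const_mul _ (by fun_prop), lint_gauss1 (by norm_num),
          ← ENNReal.ofReal_mul (by positivity), ← ENNReal.ofReal_mul (by positivity)]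
        congr 1
        have : √(π / (1/4)) = √2 * √(2 * π) := by
          rw [← Real.sqrt_mul (by norm_num)]; congr 1; ring
        rw [this]
        simp; ring

end

section

lemma PLc_logconcave {n : ℕ} {f : EE n → ℝ} (hf : IsLogConcaveFn f) :
    PLc (volume.withDensity fun x => ENNReal.ofReal (f x)) (fun _ _ => 0) := by
  obtain ⟨f0, hf⟩ := hf
  set S : Set (EE n) := {x | 0 < f x} with hS
  have hconv : Convex ℝ S := by
    intro x hx y hy a b ha hb hab
    have hb' : b = 1 - a := by linarith
    subst hb'
    have := hf x y a ha (by linarith)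
    have h2 : 0 < f x ^ a * f y ^ (1 - a) :=
      mul_pos (Real.rpow_pos_of_pos hx _) (Real.rpow_pos_of_pos hy _)
    exact lt_of_lt_of_le h2 this
  have hconc : ConcaveOn ℝ (interior S) (fun x => Real.log (f x)) := by
    refine ⟨hconv.interior, ?_⟩
    intro x hx y hy a b ha hb hab
    have hb' : b = 1 - a := by linarith
    subst hb'
    have hx' : x ∈ S := interior_subset hx
    replace hx' : 0 < f x := hx'
    have hy' : y ∈ S := interior_subset hy
    replace hy' : 0 < f y := hy'
    have := hf x y a ha (by linarith)
    have h2 := Real.log_le_log (mul_pos (Real.rpow_pos_of_pos hx' _) (Real.rpow_pos_of_pos hy' _)) this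
    rw [Real.log_mul (Real.rpow_pos_of_pos hx' _).ne' (Real.rpow_pos_of_pos hy' _).ne',
      Real.log_rpow hx', Real.log_rpow hy'] at h2
    simpa using h2
  have hcont : ContinuousOn f (interior S) := by
    have h1 := hconc.continuousOn isOpen_interior
    have h2 : ContinuousOn (fun x => Real.exp (Real.log (f x))) (interior S) := h1.rexp
    refine h2.congr fun x hx => ?_
    have hx' : x ∈ S := interior_subset hx
    replace hx' : 0 < f x := hx'
    simp only [Real.exp_log hx']
  set g : EE n → ℝ := (interior S).indicator f with hg
  have gm : Measurable g := by
    classical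
    have := hcont.measurable_piecewise (g := fun _ => 0) (continuousOn_const)
      (isOpen_interior.measurableSet : MeasurableSet (interior S))
    have e : (interior S).piecewise f (fun _ => 0) = g := Set.piecewise_eq_indicator
    rwa [e] at this
  have g0 : ∀ x, 0 ≤ g x := fun x => Set.indicator_nonneg (fun y _ => f0 y) x
  have ae : (fun x => ENNReal.ofReal (f x)) =ᵐ[volume] fun x => ENNReal.ofReal (g x) := by
    have hfr : volume (frontier S) = 0 := hconv.addHaar_frontier volume
    have h2 : ∀ᵐ x ∂(volume : Measure (EE n)), x ∉ frontier S := measure_eq_zero_iff_ae_notMem.1 hfr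
    filter_upwards [h2] with x hx
    by_cases hi : x ∈ interior S
    · simp [hg, hi]
    · have hc : x ∉ closure S := fun h => hx ⟨h, hi⟩
      have hs : x ∉ S := fun h => hc (subset_closure h)
      have : f x = 0 := le_antisymm (not_lt.1 hs) (f0 x)
      simp [hg, hi, this]
  rw [withDensity_congr_ae ae]
  refine PLc_density (PLc_euclid n) gm g0 ?_
  intro x y
  rw [exp_zero, mul_one]
  by_cases hx : x ∈ interior S
  · by_cases hy : y ∈ interior S
    · have hm : (1/2:ℝ) • (x + y) ∈ interior S := by
        rw [smul_add]
        exact hconv.interior hx hy (by norm_num) (by norm_num) (by norm_num)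
      rw [hg, Set.indicator_of_mem hx, Set.indicator_of_mem hy, Set.indicator_of_mem hm]
      have := hf x y (1/2) (by norm_num) (by norm_num)
      have e2 : (1/2:ℝ) • x + (1 - 1/2 : ℝ) • y = (1/2:ℝ) • (x + y) := by
        rw [smul_add]; norm_num
      rw [e2] at this
      have e3 : f x * f y = (f x ^ (1/2:ℝ) * f y ^ (1 - 1/2:ℝ)) ^ 2 := by
        have : (1 - 1/2 : ℝ) = 1/2 := by norm_num
        rw [this, mul_pow, ← Real.sqrt_eq_rpow, ← Real.sqrt_eq_rpow, Real.sq_sqrt (f0 x),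
          Real.sq_sqrt (f0 y)]
      rw [e3]
      have := f0 x
      have := f0 y
      gcongr
    · simp only [hg, Set.indicator_of_notMem hy, mul_zero]; positivity
  · simp only [hg, Set.indicator_of_notMem hx, zero_mul]; positivity

lemma pl_moment {n : ℕ} {μ : Measure (EE n)} (hμ : PLc μ (fun _ _ => 0)) (v : EE n) (q : ℕ)
    (hq : q ≠ 0) :
    (∫⁻ x, ENNReal.ofReal ((max ⟪x, v⟫ 0) ^ (2 * q)) ∂μ) * μ {x | 0 < ⟪x, v⟫} ≤
      (2 ^ q * ∫⁻ x, ENNReal.ofReal ((max ⟪x, v⟫ 0) ^ q) ∂μ) ^ 2 := by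
  have ms : MeasurableSet {x : EE n | 0 < ⟪x, v⟫} :=
    (isOpen_lt continuous_const (by fun_prop)).measurableSet
  rw [← lintegral_indicator_one ms, ← lintegral_const_mul (2 ^ q) (by fun_prop)]
  have m1 : Measurable fun x : EE n => ENNReal.ofReal ((max ⟪x, v⟫ 0) ^ (2 * q)) := by fun_prop
  have m2 : Measurable fun x : EE n => 2 ^ q * ENNReal.ofReal ((max ⟪x, v⟫ 0) ^ q) := by fun_prop
  refine hμ _ _ _ m1 (measurable_one.indicator ms) m2 ?_
  intro x y
  rw [exp_zero, ENNReal.ofReal_one, mul_one]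
  by_cases hy : 0 < ⟪y, v⟫
  · rw [Set.indicator_of_mem (by exact hy), Pi.one_apply, mul_one]
    have : (2:ℝ≥0∞) ^ q = ENNReal.ofReal (2 ^ q) := by
      rw [ENNReal.ofReal_pow (by norm_num)]; norm_num
    rw [this, ← ENNReal.ofReal_mul (by positivity), ← ENNReal.ofReal_pow (by positivity),
      ← mul_pow, ← pow_mul, mul_comm q 2]
    apply ENNReal.ofReal_le_ofReal
    gcongr
    rw [inner_smul_left, inner_add_left]
    apply max_le
    · have := le_max_left ((starRingEnd ℝ) (1/2) * (⟪x, v⟫ + ⟪y, v⟫)) 0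
      have e7 : (starRingEnd ℝ) (1/2) = 1/2 := by simp
      rw [e7] at this ⊢
      linarith
    · positivity
  · simp [hy]

structure IsoLaw {n : ℕ} (μ : Measure (EE n)) : Prop where
  prob : IsProbabilityMeasure μ
  pl : PLc μ (fun _ _ => 0)
  mean : ∫ x, x ∂μ = 0
  cov : ∀ θ η : EE n, ∫ x, ⟪x, θ⟫ * ⟪x, η⟫ ∂μ = ⟪θ, η⟫

lemma IsoLaw.int_sq {n : ℕ} {μ : Measure (EE n)} (h : IsoLaw μ) (v : EE n) :
    Integrable (fun x => ⟪x, v⟫ ^ 2) μ := by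
  by_cases hv : v = 0
  · simp [hv]
  by_contra hc
  have := h.cov v v
  simp_rw [← sq] at this
  rw [integral_undef hc, real_inner_self_eq_norm_sq] at this
  have : ‖v‖ = 0 := by simpa using this.symm
  simp_all

lemma IsoLaw.lint_sq {n : ℕ} {μ : Measure (EE n)} (h : IsoLaw μ) (v : EE n) :
    ∫⁻ x, ENNReal.ofReal (⟪x, v⟫ ^ 2) ∂μ = ENNReal.ofReal (‖v‖ ^ 2) := by
  rw [← ofReal_integral_eq_lintegral_ofReal (h.int_sq v) (ae_of_all _ fun x => sq_nonneg _)]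
  have := h.cov v v
  simp_rw [← sq] at this
  rw [this, real_inner_self_eq_norm_sq]

lemma IsoLaw.int_inner {n : ℕ} {μ : Measure (EE n)} (h : IsoLaw μ) (v : EE n) :
    Integrable (fun x => ⟪x, v⟫) μ := by
  have := h.prob
  refine (((integrable_const (1:ℝ)).add (h.int_sq v))).mono' (by fun_prop) (ae_of_all _ fun x => ?_)
  simp only [Pi.add_apply, Real.norm_eq_abs]
  rw [← sq_abs ⟪x, v⟫]
  nlinarith [sq_nonneg (|⟪x, v⟫| - 1), abs_nonneg ⟪x, v⟫]

lemma IsoLaw.mean_inner {n : ℕ} {μ : Measure (EE n)} (h : IsoLaw μ) (v : EE n) :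
    ∫ x, ⟪x, v⟫ ∂μ = 0 := by
  have := h.prob
  have hi : Integrable (fun x : EE n => x) μ := by
    have hs : Integrable (fun x : EE n => ∑ i, ⟪x, EuclideanSpace.single i (1:ℝ)⟫ ^ 2) μ :=
      integrable_finsetSum _ fun i _ => h.int_sq _
    refine ((integrable_const (1:ℝ)).add hs).mono' (by fun_prop) (ae_of_all _ fun x => ?_)
    have e : ∑ i, ⟪x, EuclideanSpace.single i (1:ℝ)⟫ ^ 2 = ‖x‖ ^ 2 := by
      rw [EuclideanSpace.norm_sq_eq]
      refine Finset.sum_congr rfl fun i _ => ?_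
      rw [EuclideanSpace.inner_single_right]; simp
    simp only [Pi.add_apply]
    rw [e]
    nlinarith [sq_nonneg (‖x‖ - 1), norm_nonneg x]
  have h2 := integral_inner (𝕜 := ℝ) hi v
  have e : ∀ x : EE n, ⟪x, v⟫ = ⟪v, x⟫ := fun x => real_inner_comm _ _
  simp_rw [e]
  rw [h2, h.mean]; simp

lemma IsoLaw.pos_ne {n : ℕ} {μ : Measure (EE n)} (h : IsoLaw μ) {v : EE n} (hv : v ≠ 0) :
    μ {x | 0 < ⟪x, v⟫} ≠ 0 := by
  intro h0
  have hae : ∀ᵐ x ∂μ, ⟪x, v⟫ ≤ 0 := by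
    have := measure_eq_zero_iff_ae_notMem.1 h0
    filter_upwards [this] with x hx
    exact not_lt.1 hx
  have h1 : ∫ x, -⟪x, v⟫ ∂μ = 0 := by rw [integral_neg, h.mean_inner, neg_zero]
  rw [integral_eq_zero_iff_of_nonneg_ae (by filter_upwards [hae] with x hx; simpa using hx)
    (by simpa using (h.int_inner v).neg)] at h1
  have h2 := h.cov v v
  have h3 : ∫ x, ⟪x, v⟫ * ⟪x, v⟫ ∂μ = 0 := by
    apply integral_eq_zero_of_ae
    filter_upwards [h1] with x hx
    have : ⟪x, v⟫ = 0 := by simpa using hx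
    simp [this]
  rw [h3, real_inner_self_eq_norm_sq] at h2
  have : ‖v‖ = 0 := by simpa using h2.symm
  exact hv (norm_eq_zero.1 this)

lemma IsoLaw.fin_moment {n : ℕ} {μ : Measure (EE n)} (h : IsoLaw μ) (v : EE n) (m : ℕ) :
    ∫⁻ x, ENNReal.ofReal (⟪x, v⟫ ^ (2 * m)) ∂μ ≠ ⊤ := by
  have hp := h.prob
  by_cases hm : m = 0
  · simp [hm]
  by_cases hv : v = 0
  · simp [hv, hm]
  have key : ∀ v : EE n, v ≠ 0 → ∀ j : ℕ,
      ∫⁻ x, ENNReal.ofReal ((max ⟪x, v⟫ 0) ^ (2 ^ (j+1))) ∂μ ≠ ⊤ := by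
    intro v hv j
    induction j with
    | zero =>
      have h1 : ∫⁻ x, ENNReal.ofReal (⟪x, v⟫ ^ 2) ∂μ ≠ ⊤ := by rw [h.lint_sq]; simp
      refine ne_top_of_le_ne_top h1 (lintegral_mono fun x => ENNReal.ofReal_le_ofReal ?_)
      simp only [zero_add, pow_one]
      rcases le_total ⟪x, v⟫ 0 with hx | hx
      · rw [max_eq_right hx]; simpa using sq_nonneg _
      · rw [max_eq_left hx]
    | succ j ih =>
      have h1 := pl_moment h.pl v (2 ^ (j+1)) (by positivity)
      intro htop
      rw [pow_succ' 2 (j+1)] at htop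
      rw [htop, ENNReal.top_mul (h.pos_ne hv)] at h1
      have h2 : (2 ^ (2 ^ (j+1)) * ∫⁻ x, ENNReal.ofReal ((max ⟪x, v⟫ 0) ^ (2 ^ (j+1))) ∂μ) ^ 2 ≠ ⊤ :=
        ENNReal.pow_ne_top (ENNReal.mul_ne_top (by simp) ih)
      exact h2 (top_le_iff.1 h1)
  have h1 := key v hv (2 * m)
  have h2 := key (-v) (by simpa using hv) (2 * m)
  have hfin : 1 + (∫⁻ x, ENNReal.ofReal ((max ⟪x, v⟫ 0) ^ (2 ^ (2*m+1))) ∂μ +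
      ∫⁻ x, ENNReal.ofReal ((max ⟪x, -v⟫ 0) ^ (2 ^ (2*m+1))) ∂μ) ≠ ⊤ := by
    exact ENNReal.add_ne_top.2 ⟨by simp, ENNReal.add_ne_top.2 ⟨h1, h2⟩⟩
  refine ne_top_of_le_ne_top hfin ?_
  have e1 : (1 : ℝ≥0∞) = ∫⁻ x, 1 ∂μ := by simp
  rw [e1, ← lintegral_add_left (by fun_prop), ← lintegral_add_left (by fun_prop)]
  refine lintegral_mono fun x => ?_
  rw [← ENNReal.ofReal_add (by positivity) (by positivity), ← ENNReal.ofReal_one,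
    ← ENNReal.ofReal_add (by positivity) (by positivity)]
  apply ENNReal.ofReal_le_ofReal
  have gen : ∀ t : ℝ, 0 ≤ t → t ^ (2 * m) ≤ 1 + t ^ (2 ^ (2*m+1)) := by
    intro t ht
    rcases le_total t 1 with h3 | h3
    · have : t ^ (2*m) ≤ 1 := pow_le_one₀ ht h3
      have : 0 ≤ t ^ (2 ^ (2*m+1)) := by positivity
      linarith
    · have h4 : 2 * m ≤ 2 ^ (2*m+1) := by
        have := Nat.lt_two_pow_self (n := 2*m+1)
        omega
      have := pow_le_pow_right₀ h3 h4
      linarith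
  rw [inner_neg_right]
  have p1 : 0 ≤ (max ⟪x, v⟫ 0) ^ (2 ^ (2*m+1)) := by positivity
  have p2 : 0 ≤ (max (-⟪x, v⟫) 0) ^ (2 ^ (2*m+1)) := by positivity
  rcases le_total ⟪x, v⟫ 0 with hx | hx
  · have := gen (-⟪x, v⟫) (by linarith)
    rw [max_eq_left (by linarith : 0 ≤ -⟪x, v⟫)]
    rw [Even.neg_pow ⟨m, by ring⟩] at this
    linarith
  · have := gen ⟪x, v⟫ hx
    rw [max_eq_left hx]
    linarith

/-- the moment bounds that we use -/
def PsiLaw {n : ℕ} (μ : Measure (EE n)) (α b : ℝ) : Prop :=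
  ∀ (v : EE n) (m : ℕ), 1 ≤ m → ∫⁻ x, ENNReal.ofReal (⟪x, v⟫ ^ (2 * m)) ∂μ ≤
    ENNReal.ofReal ((b * (2 * m) ^ (1/α) * ‖v‖) ^ (2 * m))

lemma isoLaw_of {Ω : Type*} [MeasurableSpace Ω] {P : Measure Ω} [IsProbabilityMeasure P] {n : ℕ}
    {X : Ω → EE n} {f : EE n → ℝ} (hd : HasDensityFn P X f) (hf : IsLogConcaveFn f)
    (hi : Isotropic P X) : IsoLaw (P.map X) := by
  refine ⟨Measure.isProbabilityMeasure_map hd.1.aemeasurable, ?_, ?_, ?_⟩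
  · rw [hd.2]; exact PLc_logconcave hf
  · rw [integral_map hd.1.aemeasurable (by fun_prop)]; exact hi.1
  · intro θ η
    rw [integral_map hd.1.aemeasurable (by fun_prop)]; exact hi.2 θ η

lemma psi_b {Ω : Type*} [MeasurableSpace Ω] {P : Measure Ω} [IsProbabilityMeasure P] {n : ℕ}
    {X : Ω → EE n} {α b : ℝ} (hn : 0 < n) (hα : 1 ≤ α) (hi : Isotropic P X)
    (hp : IsPsiAlpha P X α b) : 1/2 ≤ b := by
  have := hp 2 le_rfl (EuclideanSpace.single ⟨0, hn⟩ 1)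
  have h2 := hi.2 (EuclideanSpace.single ⟨0, hn⟩ 1) (EuclideanSpace.single ⟨0, hn⟩ 1)
  simp_rw [← sq] at h2
  have e : ∀ x : ℝ, |x| ^ (2:ℝ) = x ^ 2 := fun x => by
    rw [Real.rpow_two, sq_abs]
  simp_rw [e] at this
  rw [h2, real_inner_self_eq_norm_sq] at this
  simp at this
  have h3 : (2:ℝ) ^ (α⁻¹) ≤ 2 := by
    have := Real.rpow_le_rpow_of_exponent_le (x := 2) (by norm_num) (inv_le_one_of_one_le₀ hα)
    simpa using this
  have h4 : 0 < (2:ℝ) ^ (α⁻¹) := by positivity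
  nlinarith

lemma psiLaw_of {Ω : Type*} [MeasurableSpace Ω] {P : Measure Ω} [IsProbabilityMeasure P] {n : ℕ}
    {X : Ω → EE n} {f : EE n → ℝ} {α b : ℝ} (hd : HasDensityFn P X f) (hf : IsLogConcaveFn f)
    (hi : Isotropic P X) (hp : IsPsiAlpha P X α b) : PsiLaw (P.map X) α b := by
  intro v m hm
  have h := isoLaw_of hd hf hi
  have hfin := h.fin_moment v m
  have hint : Integrable (fun x => ⟪x, v⟫ ^ (2 * m)) (P.map X) := by
    refine ⟨by fun_prop, ?_⟩
    rw [hasFiniteIntegral_iff_ofReal (ae_of_all _ fun x => by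
      rw [pow_mul]; positivity)]
    exact hfin.lt_top
  rw [← ofReal_integral_eq_lintegral_ofReal hint (ae_of_all _ fun x => by
    simp only [Pi.zero_apply]; rw [pow_mul]; positivity)]
  apply ENNReal.ofReal_le_ofReal
  have h1 := hp (2 * m) (by norm_cast; omega) v
  have h2 := hi.2 v v
  simp_rw [← sq] at h2
  rw [h2, real_inner_self_eq_norm_sq, ← Real.sqrt_eq_rpow, Real.sqrt_sq (norm_nonneg v)] at h1
  have e : ∀ x : ℝ, |x| ^ (2 * (m:ℝ)) = x ^ (2 * m) := fun x => by
    rw [← Even.pow_abs (n := 2 * m) ⟨m, by ring⟩, ← Real.rpow_natCast]; push_cast; rfl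
  simp_rw [e] at h1
  rw [integral_map hd.1.aemeasurable (by fun_prop)]
  have h0 : 0 ≤ ∫ ω, ⟪X ω, v⟫ ^ (2 * m) ∂P := integral_nonneg fun ω => by
    simp only [Pi.zero_apply]; rw [pow_mul]; positivity
  have h3 := pow_le_pow_left₀ (Real.rpow_nonneg h0 _) h1 (2 * m)
  rw [← Real.rpow_natCast, ← Real.rpow_mul h0] at h3
  have : (m:ℝ) ≠ 0 := by exact_mod_cast (by omega : m ≠ 0)
  have e5 : 1 / (2 * (m:ℝ)) * ((2 * m : ℕ) : ℝ) = 1 := by push_cast; field_simp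
  rw [e5, Real.rpow_one] at h3
  exact h3

end

section

lemma lint_pi_prod {E : Type*} [MeasurableSpace E] {μ : Measure E} [SigmaFinite μ] {k : ℕ}
    {F : Fin k → E → ℝ≥0∞} (hF : ∀ i, Measurable (F i)) :
    ∫⁻ x, ∏ i, F i (x i) ∂(Measure.pi fun _ : Fin k => μ) = ∏ i, ∫⁻ x, F i x ∂μ := by
  induction k with
  | zero => rw [Measure.pi_of_empty _ (fun i => i.elim0), lintegral_dirac]; simp
  | succ k ih =>
    have e := (measurePreserving_piFinSuccAbove (fun _ : Fin (k+1) => μ) 0).symm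
    have hm : Measurable fun x : Fin (k+1) → E => ∏ i, F i (x i) :=
      Finset.measurable_fun_prod _ fun i _ => (hF i).comp (measurable_pi_apply i)
    rw [← e.lintegral_comp hm, Fin.prod_univ_succ]
    have : ∀ a : E × (Fin k → E), ∏ i, F i ((MeasurableEquiv.piFinSuccAbove (fun _ => E) 0).symm a i)
        = F 0 a.1 * ∏ i, F (Fin.succ i) (a.2 i) := by
      intro a
      rw [Fin.prod_univ_succ]
      simp [MeasurableEquiv.piFinSuccAbove]
    simp_rw [this]
    rw [← ih (fun i => hF _)]
    exact lintegral_prod_mul (hF 0).aemeasurable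
      (Finset.measurable_fun_prod _ fun i _ => (hF _).comp (measurable_pi_apply i)).aemeasurable

/-- One dimensional Gaussian type moments. -/
def JJ (q : ℝ) : ℝ≥0∞ := ∫⁻ t in Set.Ioi (0:ℝ), ENNReal.ofReal (t ^ q * exp (-t ^ 2 / 2))

/-- the function `r`. -/
def rr {n : ℕ} (L : EE n →L[ℝ] EE n) (x : EE n) : ℝ := √(1 + ‖L x‖ ^ 2)

lemma rr_pos {n : ℕ} (L : EE n →L[ℝ] EE n) (x : EE n) : 0 < rr L x := by
  unfold rr; positivity

lemma rr_sq {n : ℕ} (L : EE n →L[ℝ] EE n) (x : EE n) : rr L x ^ 2 = 1 + ‖L x‖ ^ 2 := by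
  unfold rr; rw [Real.sq_sqrt (by positivity)]

@[fun_prop]
lemma rr_meas {n : ℕ} (L : EE n →L[ℝ] EE n) : Measurable (rr L) := by
  unfold rr; fun_prop

/-- moments of `r`. -/
def RR {n : ℕ} (μ : Measure (EE n)) (L : EE n →L[ℝ] EE n) (s : ℝ) : ℝ≥0∞ :=
  ∫⁻ x, ENNReal.ofReal (rr L x ^ s) ∂μ

lemma JJ_scale {s : ℝ} (hs : 0 < s) (q : ℝ) :
    ∫⁻ t in Set.Ioi (0:ℝ), ENNReal.ofReal (t ^ q * exp (-t ^ 2 / (2 * s ^ 2))) =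
      ENNReal.ofReal (s ^ (q + 1)) * JJ q := by
  have h := lintegral_image_eq_lintegral_abs_deriv_mul (s := Set.Ioi (0:ℝ)) measurableSet_Ioi
    (f := fun t => s * t) (f' := fun _ => s)
    (fun x _ => by simpa using ((hasDerivAt_id x).const_mul s).hasDerivWithinAt)
    (fun x _ y _ hxy => mul_left_cancel₀ hs.ne' hxy)
    (fun t => ENNReal.ofReal (t ^ q * exp (-t ^ 2 / (2 * s ^ 2))))
  have e : (fun t => s * t) '' (Set.Ioi (0:ℝ)) = Set.Ioi 0 := by
    ext t
    simp only [Set.mem_image, Set.mem_Ioi]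
    constructor
    · rintro ⟨x, hx, rfl⟩; positivity
    · intro ht; exact ⟨t / s, by positivity, by field_simp⟩
  rw [e] at h
  rw [h]
  unfold JJ
  rw [← lintegral_const_mul' _ _ ENNReal.ofReal_ne_top]
  refine setLIntegral_congr_fun measurableSet_Ioi fun t ht => ?_
  have ht' : (0:ℝ) < t := ht
  rw [← ENNReal.ofReal_mul (by positivity), ← ENNReal.ofReal_mul (by positivity), abs_of_pos hs,
    Real.mul_rpow hs.le ht'.le, Real.rpow_add hs, Real.rpow_one]
  congr 1
  have : -(s * t) ^ 2 / (2 * s ^ 2) = -t ^ 2 / 2 := by field_simp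
  rw [this]; ring

variable {n k : ℕ}

lemma HH_rows (L : EE n →L[ℝ] EE n) (e : Fin k → ℝ) (Γ : Fin k → EE n) (z : EE n × ℝ) :
    ENNReal.ofReal (exp (-(S2 L e Γ z) / 2)) =
      ∏ i, ENNReal.ofReal (exp (-(z.2 * e i - ⟪Γ i, L z.1⟫) ^ 2 / 2)) := by
  rw [← ENNReal.ofReal_prod_of_nonneg (fun i _ => (exp_pos _).le), ← Real.exp_sum]
  congr 2
  unfold S2
  rw [← Finset.sum_div, Finset.sum_neg_distrib]

lemma hl_lint {μ : Measure (EE n)} [SFinite μ] {F : EE n × ℝ → ℝ≥0∞} (hF : Measurable F) :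
    ∫⁻ z, F z ∂(hl μ) = ∫⁻ x, ∫⁻ t in Set.Ioi (0:ℝ), F (x, t) ∂volume ∂μ := by
  unfold hl
  rw [lintegral_prod _ hF.aemeasurable]

lemma HH_swap {μ : Measure (EE n)} [SFinite μ] (L : EE n →L[ℝ] EE n) (e : Fin k → ℝ) (q : ℝ)
    {F : Fin k → EE n → ℝ≥0∞} (hF : ∀ i, Measurable (F i)) :
    ∫⁻ Γ, HH μ L e q Γ * ∏ i, F i (Γ i) ∂(Measure.pi fun _ : Fin k => gam n) =
      ∫⁻ x, ∫⁻ t in Set.Ioi (0:ℝ), ENNReal.ofReal (t ^ q) * ∏ i,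
        ∫⁻ g, ENNReal.ofReal (exp (-(t * e i - ⟪g, L x⟫) ^ 2 / 2)) * F i g ∂(gam n) ∂volume ∂μ := by
  have hFm : Measurable fun Γ : Fin k → EE n => ∏ i, F i (Γ i) :=
    Finset.measurable_fun_prod _ fun i _ => (hF i).comp (measurable_pi_apply i)
  have hsf : SFinite (hl μ) := by unfold hl; infer_instance
  have hS := (S2_cont (k := k) L e).measurable
  have hcal : ∀ Γ, HH μ L e q Γ * ∏ i, F i (Γ i) = ∫⁻ z, ENNReal.ofReal (z.2 ^ q) *
      ∏ i, (ENNReal.ofReal (exp (-(z.2 * e i - ⟪Γ i, L z.1⟫) ^ 2 / 2)) * F i (Γ i)) ∂(hl μ) := by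
    intro Γ
    unfold HH
    rw [← lintegral_mul_const]
    · congr 1; ext z
      rw [ENNReal.ofReal_mul' (exp_pos _).le, HH_rows, Finset.prod_mul_distrib, mul_assoc]
    · have := (S2_cont' (k := k) L e Γ).measurable
      fun_prop
  simp_rw [hcal]
  have hrow : Measurable fun p : ((Fin k → EE n) × (EE n × ℝ)) =>
      ∏ i, (ENNReal.ofReal (exp (-(p.2.2 * e i - ⟪p.1 i, L p.2.1⟫) ^ 2 / 2)) * F i (p.1 i)) := by
    refine Finset.measurable_fun_prod _ fun i _ => ?_
    refine Measurable.mul (by fun_prop) ((hF i).comp (by fun_prop))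
  rw [lintegral_lintegral_swap]
  · have h2 : ∀ z : EE n × ℝ, ∫⁻ Γ, ENNReal.ofReal (z.2 ^ q) *
      ∏ i, (ENNReal.ofReal (exp (-(z.2 * e i - ⟪Γ i, L z.1⟫) ^ 2 / 2)) * F i (Γ i))
        ∂(Measure.pi fun _ : Fin k => gam n) = ENNReal.ofReal (z.2 ^ q) * ∏ i,
        ∫⁻ g, ENNReal.ofReal (exp (-(z.2 * e i - ⟪g, L z.1⟫) ^ 2 / 2)) * F i g ∂(gam n) := by
      intro z
      rw [lintegral_const_mul, lint_pi_prod (F := fun i g =>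
        ENNReal.ofReal (exp (-(z.2 * e i - ⟪g, L z.1⟫) ^ 2 / 2)) * F i g)]
      · exact fun i => Measurable.mul (by fun_prop) (hF i)
      · refine Finset.measurable_fun_prod _ fun i _ => ?_
        exact Measurable.mul (by fun_prop) ((hF i).comp (by fun_prop))
    simp_rw [h2]
    rw [hl_lint]
    refine Measurable.mul (by fun_prop) (Finset.measurable_fun_prod _ fun i _ => ?_)
    refine Measurable.lintegral_prod_right' (ν := gam n) (f := fun p : (EE n × ℝ) × EE n =>
      ENNReal.ofReal (exp (-(p.1.2 * e i - ⟪p.2, L p.1.1⟫) ^ 2 / 2)) * F i p.2) ?_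
    exact Measurable.mul (by fun_prop) ((hF i).comp (by fun_prop))
  · apply Measurable.aemeasurable
    exact Measurable.mul (by fun_prop) hrow

lemma HH_avg {μ : Measure (EE n)} [SFinite μ] (L : EE n →L[ℝ] EE n) {e : Fin k → ℝ}
    (he : ∑ i, e i ^ 2 = 1) (q : ℝ) :
    ∫⁻ Γ, HH μ L e q Γ ∂(Measure.pi fun _ : Fin k => gam n) = JJ q * RR μ L (q + 1 - k) := by
  have h := HH_swap (μ := μ) L e q (F := fun _ _ => 1) (fun _ => measurable_const)
  simp only [Finset.prod_const_one, mul_one] at h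
  rw [h]
  unfold RR
  rw [← lintegral_const_mul _ (by fun_prop)]
  congr 1; ext x
  rw [mul_comm]
  have : ENNReal.ofReal (rr L x ^ (q + 1 - k)) = ENNReal.ofReal (rr L x ^ (-(k:ℝ))) *
      ENNReal.ofReal (rr L x ^ (q + 1)) := by
    rw [← ENNReal.ofReal_mul (by have := rr_pos L x; positivity), ← Real.rpow_add (rr_pos L x)]
    congr 2; ring
  rw [this, mul_assoc, ← JJ_scale (rr_pos L x), ← lintegral_const_mul' _ _ ENNReal.ofReal_ne_top]
  refine setLIntegral_congr_fun measurableSet_Ioi fun t ht => ?_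
  have ht' : (0:ℝ) < t := ht
  have hr := rr_pos L x
  simp only [gam_row]
  rw [← ENNReal.ofReal_prod_of_nonneg (fun i _ => by positivity), ← ENNReal.ofReal_mul (by positivity),
    ← ENNReal.ofReal_mul (by positivity)]
  congr 1
  rw [Finset.prod_mul_distrib, Finset.prod_const, ← Real.exp_sum, ← Finset.sum_div,
    Finset.sum_neg_distrib]
  simp_rw [mul_pow]
  rw [← Finset.mul_sum, he, mul_one, ← rr_sq, Finset.card_univ, Fintype.card_fin, Real.rpow_neg hr.le,
    Real.rpow_natCast, inv_pow, Real.sqrt_sq hr.le]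
  ring

lemma HH_avg_bad {μ : Measure (EE n)} [SFinite μ] (L : EE n →L[ℝ] EE n) {e : Fin k → ℝ}
    (he : ∑ i, e i ^ 2 = 1) (q : ℝ) {θ : EE n} (hθ : ‖θ‖ ≤ 1) :
    ∫⁻ Γ, HH μ L e q Γ * ENNReal.ofReal (exp (∑ i, ⟪Γ i, θ⟫ ^ 2 / 8))
      ∂(Measure.pi fun _ : Fin k => gam n) ≤
      ENNReal.ofReal (√2 ^ k * √2 ^ (q + 1)) * (JJ q * RR μ L (q + 1 - k)) := by
  have h := HH_swap (μ := μ) L e q (F := fun _ g => ENNReal.ofReal (exp (⟪g, θ⟫ ^ 2 / 8)))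
    (fun _ => by fun_prop)
  simp only [← ENNReal.ofReal_prod_of_nonneg (fun i _ => (exp_pos _).le), ← Real.exp_sum] at h
  rw [h]
  unfold RR
  rw [← lintegral_const_mul _ (by fun_prop), ← lintegral_const_mul _ (by fun_prop)]
  refine lintegral_mono fun x => ?_
  have hr := rr_pos L x
  have h2 : (0:ℝ) < √2 := by positivity
  have : ENNReal.ofReal (√2 ^ k * √2 ^ (q + 1)) * (JJ q * ENNReal.ofReal (rr L x ^ (q + 1 - k))) =
      ENNReal.ofReal (√2 ^ k * rr L x ^ (-(k:ℝ))) *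
      (ENNReal.ofReal ((√2 * rr L x) ^ (q + 1)) * JJ q) := by
    rw [mul_comm (JJ q), ← mul_assoc, ← mul_assoc, ← ENNReal.ofReal_mul (by positivity),
      ← ENNReal.ofReal_mul (by positivity)]
    congr 2
    rw [Real.mul_rpow h2.le hr.le, sub_eq_add_neg, Real.rpow_add hr (q+1)]; ring
  rw [this, ← JJ_scale (by positivity), ← lintegral_const_mul' _ _ ENNReal.ofReal_ne_top]
  refine setLIntegral_mono' measurableSet_Ioi fun t ht => ?_
  have ht' : (0:ℝ) < t := ht
  calc _ ≤ ENNReal.ofReal (t ^ q) * ∏ i, ENNReal.ofReal (√2 * (√(1 + ‖L x‖ ^ 2))⁻¹ *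
        exp (-(t * e i) ^ 2 / (4 * (1 + ‖L x‖ ^ 2)))) := by
        refine mul_le_mul' le_rfl (Finset.prod_le_prod' fun i _ => ?_)
        exact gam_row_bad (L x) θ hθ (t * e i)
    _ = _ := by
      rw [← ENNReal.ofReal_prod_of_nonneg (fun i _ => by positivity), ← ENNReal.ofReal_mul (by positivity),
        ← ENNReal.ofReal_mul (by positivity)]
      congr 1
      rw [Finset.prod_mul_distrib, Finset.prod_const, ← Real.exp_sum, ← Finset.sum_div,
        Finset.sum_neg_distrib]
      simp_rw [mul_pow]
      rw [← Finset.mul_sum, he, mul_one, ← rr_sq, Finset.card_univ, Fintype.card_fin, Real.rpow_neg hr.le,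
        Real.rpow_natCast, inv_pow, Real.sq_sqrt (by norm_num), Real.sqrt_sq hr.le]
      ring_nf

/-- the quadratic form `Q(Γ)`. -/
def QQ (L : EE n →L[ℝ] EE n) (Γ : Fin k → EE n) : ℝ :=
  ∑ j : Fin n, ∑ i, ⟪Γ i, L (EuclideanSpace.single j 1)⟫ ^ 2

lemma QQ_meas (L : EE n →L[ℝ] EE n) : Measurable (QQ (k := k) L) := by
  unfold QQ; fun_prop

lemma HH_avg_Q {μ : Measure (EE n)} [SFinite μ] (L : EE n →L[ℝ] EE n)
    (hL : ∑ j : Fin n, ‖L (EuclideanSpace.single j 1)‖ ^ 2 = 1) {e : Fin k → ℝ}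
    (he : ∑ i, e i ^ 2 = 1) (q : ℝ) :
    ∫⁻ Γ, HH μ L e q Γ * ENNReal.ofReal (exp (QQ L Γ / 8))
      ∂(Measure.pi fun _ : Fin k => gam n) ≤
      ENNReal.ofReal (√2 ^ k * √2 ^ (q + 1)) * (JJ q * RR μ L (q + 1 - k)) := by
  set l : Fin n → EE n := fun j => L (EuclideanSpace.single j 1) with hl
  set θ : Fin n → EE n := fun j => ‖l j‖⁻¹ • l j with hθ
  have hθ1 : ∀ j, ‖θ j‖ ≤ 1 := by
    intro j
    rw [hθ]; simp only
    rw [norm_smul, norm_inv, norm_norm]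
    exact inv_mul_le_one
  have hjen : ∀ Γ : Fin k → EE n, exp (QQ L Γ / 8) ≤
      ∑ j, ‖l j‖ ^ 2 * exp (∑ i, ⟪Γ i, θ j⟫ ^ 2 / 8) := by
    intro Γ
    have h1 := convexOn_exp.map_sum_le (t := Finset.univ) (w := fun j => ‖l j‖ ^ 2)
      (p := fun j => ∑ i, ⟪Γ i, θ j⟫ ^ 2 / 8) (fun j _ => by positivity) hL (fun _ _ => Set.mem_univ _)
    have e1 : QQ L Γ / 8 = ∑ j, ‖l j‖ ^ 2 • ∑ i, ⟪Γ i, θ j⟫ ^ 2 / 8 := by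
      unfold QQ
      rw [Finset.sum_div]
      refine Finset.sum_congr rfl fun j _ => ?_
      rw [Finset.sum_div, Finset.smul_sum]
      refine Finset.sum_congr rfl fun i _ => ?_
      simp only [hθ, inner_smul_right, smul_eq_mul]
      by_cases h0 : ‖l j‖ = 0
      · have h00 : l j = 0 := norm_eq_zero.1 h0
        change ⟪Γ i, l j⟫ ^ 2 / 8 = _
        simp [h00]
      · change ⟪Γ i, l j⟫ ^ 2 / 8 = _
        field_simp
    rw [e1]
    simpa only [smul_eq_mul] using h1
  have hmH := HH_meas (k := k) μ L e q
  calc _ ≤ ∫⁻ Γ, ∑ j, ENNReal.ofReal (‖l j‖ ^ 2) * (HH μ L e q Γ *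
          ENNReal.ofReal (exp (∑ i, ⟪Γ i, θ j⟫ ^ 2 / 8))) ∂(Measure.pi fun _ : Fin k => gam n) := by
        refine lintegral_mono fun Γ => ?_
        refine (mul_le_mul' le_rfl (ENNReal.ofReal_le_ofReal (hjen Γ))).trans ?_
        rw [ENNReal.ofReal_sum_of_nonneg (fun j _ => by positivity), Finset.mul_sum]
        refine Finset.sum_le_sum fun j _ => ?_
        rw [ENNReal.ofReal_mul (by positivity), mul_left_comm]
    _ = ∑ j, ENNReal.ofReal (‖l j‖ ^ 2) * ∫⁻ Γ, (HH μ L e q Γ *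
          ENNReal.ofReal (exp (∑ i, ⟪Γ i, θ j⟫ ^ 2 / 8))) ∂(Measure.pi fun _ : Fin k => gam n) := by
        rw [lintegral_finsetSum _ (fun j _ => by fun_prop)]
        refine Finset.sum_congr rfl fun j _ => ?_
        rw [lintegral_const_mul _ (by fun_prop)]
    _ ≤ ∑ j, ENNReal.ofReal (‖l j‖ ^ 2) * (ENNReal.ofReal (√2 ^ k * √2 ^ (q + 1)) *
          (JJ q * RR μ L (q + 1 - k))) := by
        refine Finset.sum_le_sum fun j _ => mul_le_mul' le_rfl ?_
        exact HH_avg_bad L he q (hθ1 j)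
    _ = _ := by
        rw [← Finset.sum_mul, ← ENNReal.ofReal_sum_of_nonneg (fun j _ => by positivity), hL]
        simp

end

section

lemma jensen_exp {β : Type*} [MeasurableSpace β] {lam : Measure β} {w : β → ℝ≥0∞} {ψ : β → ℝ}
    (hw : Measurable w) (hψ : Measurable ψ) (h0 : ∀ z, 0 ≤ ψ z) {m : ℝ} (hm : 0 ≤ m)
    (hI : ∫⁻ z, w z ∂lam ≠ ⊤)
    (h : ∫⁻ z, ENNReal.ofReal (ψ z) * w z ∂lam ≤ ENNReal.ofReal m * ∫⁻ z, w z ∂lam) :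
    ∫⁻ z, w z ∂lam ≤ ENNReal.ofReal (exp m) * ∫⁻ z, ENNReal.ofReal (exp (-ψ z)) * w z ∂lam := by
  set I := ∫⁻ z, w z ∂lam with hIdef
  set K := ∫⁻ z, ENNReal.ofReal (exp (-ψ z)) * w z ∂lam with hK
  have h1 : ENNReal.ofReal (1 + m) * I ≤ ENNReal.ofReal (exp m) * K + ENNReal.ofReal m * I := by
    calc ENNReal.ofReal (1 + m) * I = ∫⁻ z, ENNReal.ofReal (1 + m) * w z ∂lam := by
          rw [lintegral_const_mul _ hw]
      _ ≤ ∫⁻ z, (ENNReal.ofReal (exp m) * (ENNReal.ofReal (exp (-ψ z)) * w z) +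
            ENNReal.ofReal (ψ z) * w z) ∂lam := by
          refine lintegral_mono fun z => ?_
          rw [← mul_assoc, ← add_mul, ← ENNReal.ofReal_mul (exp_pos _).le,
            ← ENNReal.ofReal_add (by positivity) (h0 z)]
          refine mul_le_mul' (ENNReal.ofReal_le_ofReal ?_) le_rfl
          rw [← Real.exp_add]
          have := Real.add_one_le_exp (m + -ψ z)
          linarith
      _ = ENNReal.ofReal (exp m) * K + ∫⁻ z, ENNReal.ofReal (ψ z) * w z ∂lam := by
          rw [lintegral_add_left (by fun_prop), lintegral_const_mul _ (by fun_prop)]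
      _ ≤ _ := by gcongr
  rw [ENNReal.ofReal_add (by norm_num) hm, add_mul, ENNReal.ofReal_one, one_mul] at h1
  exact (ENNReal.add_le_add_iff_right (ENNReal.mul_ne_top ENNReal.ofReal_ne_top hI)).1 h1

lemma cs_sq {β : Type*} [MeasurableSpace β] {lam : Measure β} {f g : β → ℝ≥0∞}
    (hf : Measurable f) (hg : Measurable g) :
    (∫⁻ z, f z * g z ∂lam) ^ 2 ≤ (∫⁻ z, f z ^ 2 ∂lam) * ∫⁻ z, g z ^ 2 ∂lam := by
  have h := ENNReal.lintegral_mul_le_Lp_mul_Lq lam (Real.HolderConjugate.two_two) hf.aemeasurable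
    hg.aemeasurable
  simp only [ENNReal.rpow_two] at h
  calc _ ≤ ((∫⁻ z, f z ^ 2 ∂lam) ^ (1/2:ℝ) * (∫⁻ z, g z ^ 2 ∂lam) ^ (1/2:ℝ)) ^ 2 := by
        gcongr; exact h
    _ = _ := by
      rw [mul_pow, ← ENNReal.rpow_natCast, ← ENNReal.rpow_natCast, ← ENNReal.rpow_mul,
        ← ENNReal.rpow_mul]
      norm_num

variable {n k : ℕ}

/-- the weight -/
def WW (L : EE n →L[ℝ] EE n) (e : Fin k → ℝ) (q : ℝ) (Γ : Fin k → EE n) (z : EE n × ℝ) : ℝ≥0∞ :=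
  ENNReal.ofReal (z.2 ^ q * exp (-(S2 L e Γ z) / 2))

@[fun_prop]
lemma WW_meas (L : EE n →L[ℝ] EE n) (e : Fin k → ℝ) (q : ℝ) (Γ : Fin k → EE n) :
    Measurable (WW L e q Γ) := by
  unfold WW
  have := (S2_cont' (k := k) L e Γ).measurable
  fun_prop

lemma hl_pos (μ : Measure (EE n)) [SFinite μ] : ∀ᵐ z ∂(hl μ), 0 < z.2 := by
  have e : hl μ = (μ.prod volume).restrict (Set.univ ×ˢ Set.Ioi (0:ℝ)) := by
    unfold hl
    rw [← Measure.prod_restrict, Measure.restrict_univ]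
  rw [e]
  filter_upwards [ae_restrict_mem (MeasurableSet.univ.prod measurableSet_Ioi)] with z hz
  exact hz.2

lemma core_cs {μ : Measure (EE n)} [SFinite μ] (hμ : PLc μ (fun _ _ => 0))
    (L : EE n →L[ℝ] EE n) (e : Fin k → ℝ) (Γ : Fin k → EE n) {q : ℝ} (hq : 0 ≤ q)
    {Ψ : EE n × ℝ → ℝ≥0∞} (hΨ : Measurable Ψ) :
    (∫⁻ z, Ψ z * WW L e q Γ z ∂(hl μ)) ^ 2 * HH μ L e 0 Γ ≤
      ENNReal.ofReal (4 ^ q) * (∫⁻ z, Ψ z ^ 2 * WW L e 0 Γ z ∂(hl μ)) * HH μ L e q Γ ^ 2 := by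
  have hS := (S2_cont' (k := k) L e Γ).measurable
  have h1 := cs_sq (lam := hl μ) (f := fun z => Ψ z * ENNReal.ofReal (exp (-(S2 L e Γ z) / 4)))
    (g := fun z => ENNReal.ofReal (z.2 ^ q * exp (-(S2 L e Γ z) / 4))) (by fun_prop) (by fun_prop)
  have e0 : ∀ z : EE n × ℝ, ENNReal.ofReal (exp (-(S2 L e Γ z) / 4)) ^ 2 =
      ENNReal.ofReal (exp (-(S2 L e Γ z) / 2)) := by
    intro z
    rw [← ENNReal.ofReal_pow (exp_pos _).le, ← Real.exp_nat_mul]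
    congr 2; push_cast; ring
  have e1 : ∫⁻ z, (Ψ z * ENNReal.ofReal (exp (-(S2 L e Γ z) / 4))) *
      ENNReal.ofReal (z.2 ^ q * exp (-(S2 L e Γ z) / 4)) ∂(hl μ) =
      ∫⁻ z, Ψ z * WW L e q Γ z ∂(hl μ) := by
    congr 1; ext z
    unfold WW
    rw [ENNReal.ofReal_mul' (exp_pos _).le, ENNReal.ofReal_mul' (exp_pos _).le, ← e0]; ring
  have e2 : ∫⁻ z, (Ψ z * ENNReal.ofReal (exp (-(S2 L e Γ z) / 4))) ^ 2 ∂(hl μ) =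
      ∫⁻ z, Ψ z ^ 2 * WW L e 0 Γ z ∂(hl μ) := by
    congr 1; ext z
    unfold WW
    rw [Real.rpow_zero, one_mul, mul_pow, e0]
  have e3 : ∫⁻ z, ENNReal.ofReal (z.2 ^ q * exp (-(S2 L e Γ z) / 4)) ^ 2 ∂(hl μ) =
      HH μ L e (2 * q) Γ := by
    unfold HH
    refine lintegral_congr_ae ?_
    filter_upwards [hl_pos μ] with z hz
    rw [ENNReal.ofReal_mul' (exp_pos _).le, ENNReal.ofReal_mul' (exp_pos _).le, mul_pow, e0,
      ← ENNReal.ofReal_pow (by positivity), ← Real.rpow_natCast (_ ^ q), ← Real.rpow_mul hz.le]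
    congr 3; push_cast; ring
  rw [e1, e2, e3] at h1
  have h2 := HH_pl hμ L e Γ (a := 2 * q) (b := 0) (q := q) (K := 4 ^ q) (by positivity)
    (fun t s ht hs => am1 hq ht hs)
  calc _ ≤ (∫⁻ z, Ψ z ^ 2 * WW L e 0 Γ z ∂(hl μ)) * HH μ L e (2 * q) Γ * HH μ L e 0 Γ := by gcongr
    _ = (∫⁻ z, Ψ z ^ 2 * WW L e 0 Γ z ∂(hl μ)) * (HH μ L e (2 * q) Γ * HH μ L e 0 Γ) := by ring
    _ ≤ (∫⁻ z, Ψ z ^ 2 * WW L e 0 Γ z ∂(hl μ)) * (ENNReal.ofReal (4 ^ q) * HH μ L e q Γ ^ 2) := by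
      gcongr
    _ = _ := by ring

lemma iso_quad {μ : Measure (EE n)} (h : IsoLaw μ) (L : EE n →L[ℝ] EE n) (Γ : Fin k → EE n) :
    ∫⁻ x, ENNReal.ofReal (∑ i, ⟪Γ i, L x⟫ ^ 2) ∂μ = ENNReal.ofReal (QQ L Γ) := by
  have e1 : ∀ x, ENNReal.ofReal (∑ i, ⟪Γ i, L x⟫ ^ 2) =
      ∑ i, ENNReal.ofReal (⟪x, ContinuousLinearMap.adjoint L (Γ i)⟫ ^ 2) := by
    intro x
    rw [ENNReal.ofReal_sum_of_nonneg (fun i _ => sq_nonneg _)]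
    refine Finset.sum_congr rfl fun i _ => ?_
    rw [ContinuousLinearMap.adjoint_inner_right, real_inner_comm]
  simp_rw [e1]
  rw [lintegral_finsetSum _ (fun i _ => by fun_prop)]
  simp_rw [h.lint_sq]
  rw [← ENNReal.ofReal_sum_of_nonneg (fun i _ => sq_nonneg _)]
  congr 1
  unfold QQ
  rw [Finset.sum_comm]
  refine Finset.sum_congr rfl fun i _ => ?_
  rw [EuclideanSpace.norm_sq_eq]
  refine Finset.sum_congr rfl fun j _ => ?_
  rw [← ContinuousLinearMap.adjoint_inner_left, EuclideanSpace.inner_single_right]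
  simp

lemma QQ_nonneg (L : EE n →L[ℝ] EE n) (Γ : Fin k → EE n) : 0 ≤ QQ L Γ :=
  Finset.sum_nonneg fun _ _ => Finset.sum_nonneg fun _ _ => sq_nonneg _

lemma HH0_lower {μ : Measure (EE n)} (h : IsoLaw μ) (L : EE n →L[ℝ] EE n) {e : Fin k → ℝ}
    (he : ∑ i, e i ^ 2 = 1) (Γ : Fin k → EE n) :
    ENNReal.ofReal (exp (-1 - QQ L Γ)) ≤ HH μ L e 0 Γ := by
  have hp := h.prob
  have hS := (S2_cont' (k := k) L e Γ).measurable
  have h1 : (1:ℝ≥0∞) ≤ ENNReal.ofReal (exp (QQ L Γ)) *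
      ∫⁻ x, ENNReal.ofReal (exp (-(∑ i, ⟪Γ i, L x⟫ ^ 2))) ∂μ := by
    have := jensen_exp (lam := μ) (w := fun _ => 1) (ψ := fun x => ∑ i, ⟪Γ i, L x⟫ ^ 2)
      measurable_const (by fun_prop) (fun x => Finset.sum_nonneg fun _ _ => sq_nonneg _)
      (QQ_nonneg L Γ) (by simp) (by simp [iso_quad h])
    simpa using this
  have h2 : ENNReal.ofReal (exp (-1)) * ∫⁻ x, ENNReal.ofReal (exp (-(∑ i, ⟪Γ i, L x⟫ ^ 2))) ∂μ ≤
      HH μ L e 0 Γ := by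
    unfold HH
    rw [hl_lint (by fun_prop), ← lintegral_const_mul _ (by fun_prop)]
    refine lintegral_mono fun x => ?_
    have e3 : ENNReal.ofReal (exp (-1)) * ENNReal.ofReal (exp (-(∑ i, ⟪Γ i, L x⟫ ^ 2))) =
        ∫⁻ t in Set.Ioc (0:ℝ) 1, ENNReal.ofReal (exp (-1)) * ENNReal.ofReal (exp (-(∑ i, ⟪Γ i, L x⟫ ^ 2))) := by
      simp
    rw [e3]
    refine (setLIntegral_mono' measurableSet_Ioc fun t ht => ?_).trans
      (lintegral_mono_set Set.Ioc_subset_Ioi_self)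
    rw [Real.rpow_zero, one_mul, ← ENNReal.ofReal_mul (exp_pos _).le, ← Real.exp_add]
    apply ENNReal.ofReal_le_ofReal
    apply Real.exp_le_exp.2
    have h3 : S2 L e Γ (x, t) ≤ 2 * t ^ 2 * ∑ i, e i ^ 2 + 2 * ∑ i, ⟪Γ i, L x⟫ ^ 2 := by
      unfold S2
      rw [Finset.mul_sum, Finset.mul_sum, ← Finset.sum_add_distrib]
      refine Finset.sum_le_sum fun i _ => ?_
      simp only
      nlinarith [sq_nonneg (t * e i + ⟪Γ i, L x⟫)]
    rw [he] at h3
    have : t ^ 2 ≤ 1 := by nlinarith [ht.1, ht.2]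
    linarith
  refine le_trans ?_ h2
  calc ENNReal.ofReal (exp (-1 - QQ L Γ)) = ENNReal.ofReal (exp (-1 - QQ L Γ)) * 1 := by simp
    _ ≤ ENNReal.ofReal (exp (-1 - QQ L Γ)) * (ENNReal.ofReal (exp (QQ L Γ)) *
      ∫⁻ x, ENNReal.ofReal (exp (-(∑ i, ⟪Γ i, L x⟫ ^ 2))) ∂μ) := by gcongr
    _ = _ := by
      rw [← mul_assoc, ← ENNReal.ofReal_mul (exp_pos _).le, ← Real.exp_add]
      congr 3; ring

lemma core_cs' {μ : Measure (EE n)} (h : IsoLaw μ)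
    (L : EE n →L[ℝ] EE n) {e : Fin k → ℝ} (he : ∑ i, e i ^ 2 = 1) (hk : 1 ≤ k)
    {Γ : Fin k → EE n} (hΓ : QQ L Γ ≤ 24 * k) {q : ℝ} (hq : 0 ≤ q) (hqk : q ≤ 3 * k)
    {Ψ : EE n × ℝ → ℝ≥0∞} (hΨ : Measurable Ψ) :
    (∫⁻ z, Ψ z * WW L e q Γ z ∂(hl μ)) ^ 2 ≤
      ENNReal.ofReal (exp (32 * k)) * (∫⁻ z, Ψ z ^ 2 * WW L e 0 Γ z ∂(hl μ)) * HH μ L e q Γ ^ 2 := by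
  have hp := h.prob
  have h1 := core_cs h.pl L e Γ hq hΨ
  have h2 := HH0_lower h L he Γ
  have hk' : (1:ℝ) ≤ k := by exact_mod_cast hk
  set I := (∫⁻ z, Ψ z * WW L e q Γ z ∂(hl μ)) ^ 2
  have h3 : I * ENNReal.ofReal (exp (-(25 * k))) ≤
      ENNReal.ofReal (exp (6 * k)) * (∫⁻ z, Ψ z ^ 2 * WW L e 0 Γ z ∂(hl μ)) * HH μ L e q Γ ^ 2 := by
    refine le_trans ?_ (h1.trans ?_)
    · gcongr
      refine le_trans (ENNReal.ofReal_le_ofReal (Real.exp_le_exp.2 ?_)) h2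
      linarith
    · gcongr
      have h4 : (4:ℝ) ≤ exp 2 := by
        have := Real.add_one_le_exp (1:ℝ)
        have e2 : exp 2 = exp 1 * exp 1 := by rw [← Real.exp_add]; norm_num
        rw [e2]; nlinarith
      calc (4:ℝ) ^ q ≤ (exp 2) ^ q := Real.rpow_le_rpow (by norm_num) h4 hq
        _ = exp (2 * q) := by rw [← Real.exp_mul]
        _ ≤ _ := Real.exp_le_exp.2 (by linarith)
  calc I = ENNReal.ofReal (exp (25 * k)) * (I * ENNReal.ofReal (exp (-(25 * k)))) := by
        rw [mul_left_comm, ← ENNReal.ofReal_mul (exp_pos _).le, ← Real.exp_add]; simp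
    _ ≤ ENNReal.ofReal (exp (25 * k)) * (ENNReal.ofReal (exp (6 * k)) *
        (∫⁻ z, Ψ z ^ 2 * WW L e 0 Γ z ∂(hl μ)) * HH μ L e q Γ ^ 2) := by gcongr
    _ = ENNReal.ofReal (exp (25 * k + 6 * k)) *
        (∫⁻ z, Ψ z ^ 2 * WW L e 0 Γ z ∂(hl μ)) * HH μ L e q Γ ^ 2 := by
        rw [Real.exp_add, ENNReal.ofReal_mul (exp_pos _).le]; ring
    _ ≤ _ := by gcongr; linarith

lemma core_cs'' {μ : Measure (EE n)} (h : IsoLaw μ)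
    (L : EE n →L[ℝ] EE n) {e : Fin k → ℝ} (he : ∑ i, e i ^ 2 = 1) (hk : 1 ≤ k)
    {Γ : Fin k → EE n} (hΓ : QQ L Γ ≤ 24 * k) {q : ℝ} (hq : 0 ≤ q) (hqk : q ≤ 3 * k)
    {Ψ : EE n × ℝ → ℝ≥0∞} (hΨ : Measurable Ψ)
    (hb : ∫⁻ z, Ψ z ^ 2 * WW L e 0 Γ z ∂(hl μ) ≤ ENNReal.ofReal (4 * exp (-(36 * k)))) :
    (∫⁻ z, Ψ z * WW L e q Γ z ∂(hl μ)) ≤ ENNReal.ofReal (1/3) * HH μ L e q Γ := by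
  have h1 := core_cs' h L he hk hΓ hq hqk hΨ
  have hk' : (1:ℝ) ≤ k := by exact_mod_cast hk
  rw [← ENNReal.pow_le_pow_left_iff (two_ne_zero)]
  refine h1.trans ?_
  rw [mul_pow, ← ENNReal.ofReal_pow (by norm_num)]
  gcongr
  calc _ ≤ ENNReal.ofReal (exp (32 * k)) * ENNReal.ofReal (4 * exp (-(36 * k))) := by gcongr
    _ = ENNReal.ofReal (4 * exp (-(4 * k))) := by
      rw [← ENNReal.ofReal_mul (exp_pos _).le, mul_left_comm, ← Real.exp_add]; congr 3; ring
    _ ≤ _ := by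
      apply ENNReal.ofReal_le_ofReal
      have : exp (-(4 * (k:ℝ))) ≤ exp (-4) := Real.exp_le_exp.2 (by linarith)
      have h4 : exp (-4) ≤ 1/36 := by
        rw [Real.exp_neg, inv_eq_one_div]
        apply one_div_le_one_div_of_le (by norm_num)
        have := Real.exp_one_gt_d9
        have e4 : exp 4 = exp 1 ^ 4 := by rw [← Real.exp_nat_mul]; norm_num
        rw [e4]
        calc (36:ℝ) ≤ 2.7182818283 ^ 4 := by norm_num
          _ ≤ _ := by gcongr
      norm_num
      linarith

lemma int_quarter {μ : Measure (EE n)} [SFinite μ] (L : EE n →L[ℝ] EE n) {e : Fin k → ℝ}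
    (he : ∑ i, e i ^ 2 = 1) (Γ : Fin k → EE n) {F : EE n → ℝ≥0∞} (hF : Measurable F) :
    ∫⁻ z, F z.1 * ENNReal.ofReal (exp (-(S2 L e Γ z) / 4)) ∂(hl μ) ≤ 4 * ∫⁻ x, F x ∂μ := by
  have hS := (S2_cont' (k := k) L e Γ).measurable
  rw [hl_lint (by fun_prop), ← lintegral_const_mul _ hF]
  refine lintegral_mono fun x => ?_
  simp only
  rw [lintegral_const_mul _ (by fun_prop), mul_comm]
  gcongr
  set c := ∑ i, e i * ⟪Γ i, L x⟫ with hc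
  have hlow : ∀ t : ℝ, (t - c) ^ 2 ≤ S2 L e Γ (x, t) := by
    intro t
    have h1 := Finset.sum_mul_sq_le_sq_mul_sq Finset.univ e (fun i => t * e i - ⟪Γ i, L x⟫)
    have e1 : ∑ i, e i * (t * e i - ⟪Γ i, L x⟫) = t - c := by
      rw [hc]
      simp_rw [mul_sub]
      rw [Finset.sum_sub_distrib]
      have : ∑ i, e i * (t * e i) = t * ∑ i, e i ^ 2 := by
        rw [Finset.mul_sum]; exact Finset.sum_congr rfl fun i _ => by ring
      rw [this, he, mul_one]
    rw [e1, he, one_mul] at h1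
    exact h1
  calc _ ≤ ∫⁻ t, ENNReal.ofReal (exp (-(S2 L e Γ (x, t)) / 4)) := setLIntegral_le_lintegral _ _
    _ ≤ ∫⁻ t, ENNReal.ofReal (exp (-(1/4) * (t - c) ^ 2 + 0 * (t - c))) := by
      refine lintegral_mono fun t => ENNReal.ofReal_le_ofReal (Real.exp_le_exp.2 ?_)
      have := hlow t
      linarith
    _ = ∫⁻ t, ENNReal.ofReal (exp (-(1/4) * t ^ 2 + 0 * t)) :=
      lintegral_sub_right_eq_self (fun t => ENNReal.ofReal (exp (-(1/4) * t ^ 2 + 0 * t))) c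
    _ ≤ _ := by
      rw [lint_gauss1 (by norm_num)]
      simp only [ne_eq, OfNat.ofNat_ne_zero, not_false_eq_true, zero_pow, zero_div, exp_zero, mul_one]
      have : (4:ℝ≥0∞) = ENNReal.ofReal 4 := by simp
      rw [this]
      apply ENNReal.ofReal_le_ofReal
      rw [Real.sqrt_le_left (by norm_num)]
      have := Real.pi_lt_four
      linarith

end

section

variable {n k : ℕ}

lemma HH_eq_WW (μ : Measure (EE n)) (L : EE n →L[ℝ] EE n) (e : Fin k → ℝ) (q : ℝ)
    (Γ : Fin k → EE n) : HH μ L e q Γ = ∫⁻ z, WW L e q Γ z ∂(hl μ) := rfl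

lemma core_a {μ : Measure (EE n)} (h : IsoLaw μ)
    (L : EE n →L[ℝ] EE n) {e : Fin k → ℝ} (he : ∑ i, e i ^ 2 = 1) (hk : 1 ≤ k)
    {Γ : Fin k → EE n} (hΓ : QQ L Γ ≤ 24 * k) {q : ℝ} (hq : 0 ≤ q) (hqk : q ≤ 3 * k) :
    ∫⁻ z, ENNReal.ofReal (S2 L e Γ z) * WW L e q Γ z ∂(hl μ) ≤
      ENNReal.ofReal (163 * k) * HH μ L e q Γ := by
  have hp := h.prob
  have hS := (S2_cont' (k := k) L e Γ).measurable
  have hk' : (1:ℝ) ≤ k := by exact_mod_cast hk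
  have h1 := core_cs'' h L he hk hΓ hq hqk
    (Ψ := fun z => ENNReal.ofReal (exp ((S2 L e Γ z - 160 * k) / 8))) (by fun_prop) (by
      have h2 := int_quarter (μ := μ) L he Γ (F := fun _ => ENNReal.ofReal (exp (-(40 * k))))
        measurable_const
      have h3 : ∀ z, ENNReal.ofReal (exp ((S2 L e Γ z - 160 * k) / 8)) ^ 2 * WW L e 0 Γ z =
          ENNReal.ofReal (exp (-(40 * k))) * ENNReal.ofReal (exp (-(S2 L e Γ z) / 4)) := by
        intro z
        unfold WW
        rw [Real.rpow_zero, one_mul, ← ENNReal.ofReal_pow (exp_pos _).le, ← ENNReal.ofReal_mul (by positivity),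
          ← ENNReal.ofReal_mul (by positivity), ← Real.exp_nat_mul, ← Real.exp_add, ← Real.exp_add]
        congr 2; push_cast; ring
      simp_rw [h3]
      refine h2.trans ?_
      have e4 : (4:ℝ≥0∞) = ENNReal.ofReal 4 := by simp
      rw [lintegral_const, measure_univ, mul_one, e4, ← ENNReal.ofReal_mul (by norm_num)]
      apply ENNReal.ofReal_le_ofReal
      gcongr
      norm_num)
  calc _ ≤ ∫⁻ z, (ENNReal.ofReal (160 * k) * WW L e q Γ z + ENNReal.ofReal 8 *
        (ENNReal.ofReal (exp ((S2 L e Γ z - 160 * k) / 8)) * WW L e q Γ z)) ∂(hl μ) := by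
        refine lintegral_mono fun z => ?_
        rw [← mul_assoc, ← add_mul, ← ENNReal.ofReal_mul (by norm_num),
          ← ENNReal.ofReal_add (by positivity) (by positivity)]
        refine mul_le_mul' (ENNReal.ofReal_le_ofReal ?_) le_rfl
        have := Real.add_one_le_exp ((S2 L e Γ z - 160 * k) / 8)
        linarith
    _ = ENNReal.ofReal (160 * k) * HH μ L e q Γ + ENNReal.ofReal 8 *
        ∫⁻ z, (ENNReal.ofReal (exp ((S2 L e Γ z - 160 * k) / 8)) * WW L e q Γ z) ∂(hl μ) := by
        rw [lintegral_add_left (by fun_prop), lintegral_const_mul _ (by fun_prop),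
          lintegral_const_mul _ (by fun_prop)]
        rfl
    _ ≤ ENNReal.ofReal (160 * k) * HH μ L e q Γ + ENNReal.ofReal 8 *
        (ENNReal.ofReal (1/3) * HH μ L e q Γ) := by gcongr
    _ ≤ _ := by
        rw [← mul_assoc, ← add_mul, ← ENNReal.ofReal_mul (by norm_num),
          ← ENNReal.ofReal_add (by positivity) (by positivity)]
        refine mul_le_mul' (ENNReal.ofReal_le_ofReal ?_) le_rfl
        linarith

lemma core_b {μ : Measure (EE n)} (h : IsoLaw μ)
    (L : EE n →L[ℝ] EE n) {e : Fin k → ℝ} (he : ∑ i, e i ^ 2 = 1) (hk : 1 ≤ k)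
    {Γ : Fin k → EE n} (hΓ : QQ L Γ ≤ 24 * k) {q : ℝ} (hq : 0 ≤ q) (hqk : q ≤ 3 * k)
    {τ : ℝ} (hτ : 0 < τ) (hT : ∀ δ, ∫⁻ x, ENNReal.ofReal (⟪L x, δ⟫ ^ (4 * k)) ∂μ ≤
      ENNReal.ofReal ((τ * ‖δ‖) ^ (4 * k))) (δ : EE n) :
    ∫⁻ z, ENNReal.ofReal (⟪δ, L z.1⟫ ^ 2) * WW L e q Γ z ∂(hl μ) ≤
      ENNReal.ofReal (2 * (exp 9 * τ) ^ 2 * ‖δ‖ ^ 2) * HH μ L e q Γ := by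
  have hp := h.prob
  by_cases hδ : δ = 0
  · simp [hδ]
  have hδ' : 0 < ‖δ‖ := norm_pos_iff.2 hδ
  have hS := (S2_cont' (k := k) L e Γ).measurable
  have hk' : (1:ℝ) ≤ k := by exact_mod_cast hk
  set T := exp 9 * τ * ‖δ‖ with hTd
  have hTp : 0 < T := by positivity
  have h1 := core_cs'' h L he hk hΓ hq hqk
    (Ψ := fun z => ENNReal.ofReal ((⟪L z.1, δ⟫ / T) ^ (2 * k))) (by fun_prop) (by
      have h2 := int_quarter (μ := μ) L he Γ (F := fun x => ENNReal.ofReal ((T⁻¹) ^ (4 * k)) *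
        ENNReal.ofReal (⟪L x, δ⟫ ^ (4 * k))) (by fun_prop)
      have ev : ∀ x : EE n, 0 ≤ ⟪L x, δ⟫ ^ (4 * k) := fun x => by
        have : Even (4 * k) := ⟨2 * k, by ring⟩
        exact this.pow_nonneg _
      have h3 : ∀ z, ENNReal.ofReal ((⟪L z.1, δ⟫ / T) ^ (2 * k)) ^ 2 * WW L e 0 Γ z ≤
          ENNReal.ofReal ((T⁻¹) ^ (4 * k)) * ENNReal.ofReal (⟪L z.1, δ⟫ ^ (4 * k)) *
            ENNReal.ofReal (exp (-(S2 L e Γ z) / 4)) := by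
        intro z
        unfold WW
        rw [Real.rpow_zero, one_mul, ← ENNReal.ofReal_pow (by rw [pow_mul]; positivity)]
        have e5 : ((⟪L z.1, δ⟫ / T) ^ (2 * k)) ^ 2 = (T⁻¹) ^ (4 * k) * ⟪L z.1, δ⟫ ^ (4 * k) := by
          rw [← pow_mul, ← mul_pow]
          have : 2 * k * 2 = 4 * k := by ring
          rw [this]; congr 1; field_simp
        rw [e5, ENNReal.ofReal_mul (by positivity)]
        refine mul_le_mul' le_rfl (ENNReal.ofReal_le_ofReal (Real.exp_le_exp.2 ?_))
        have := S2_nonneg L e Γ z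
        linarith
      refine (lintegral_mono h3).trans (h2.trans ?_)
      rw [lintegral_const_mul _ (by fun_prop)]
      have e4 : (4:ℝ≥0∞) = ENNReal.ofReal 4 := by simp
      refine (mul_le_mul' le_rfl (mul_le_mul' le_rfl (hT δ))).trans ?_
      rw [e4, ← ENNReal.ofReal_mul (by positivity), ← ENNReal.ofReal_mul (by norm_num), ← mul_pow]
      apply ENNReal.ofReal_le_ofReal
      have e6 : T⁻¹ * (τ * ‖δ‖) = exp (-9) := by
        rw [hTd, Real.exp_neg]; field_simp
      rw [e6, ← Real.exp_nat_mul]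
      apply le_of_eq; congr 2; push_cast; ring)
  have hpt : ∀ w : ℝ, w ^ 2 ≤ T ^ 2 + T ^ 2 * (w / T) ^ (2 * k) := by
    intro w
    have e7 : w ^ 2 = T ^ 2 * (w / T) ^ 2 := by field_simp
    rw [e7]
    have : (w / T) ^ 2 ≤ 1 + (w / T) ^ (2 * k) := by
      rw [pow_mul]
      set s := (w / T) ^ 2
      have hs : 0 ≤ s := by positivity
      rcases le_total s 1 with h8 | h8
      · have : 0 ≤ s ^ k := by positivity
        linarith
      · have := le_self_pow₀ h8 (by omega : k ≠ 0)
        linarith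
    nlinarith [sq_nonneg T]
  have ev2 : ∀ w : ℝ, 0 ≤ (w / T) ^ (2 * k) := fun w => by rw [pow_mul]; positivity
  calc _ ≤ ∫⁻ z, (ENNReal.ofReal (T ^ 2) * WW L e q Γ z + ENNReal.ofReal (T ^ 2) *
        (ENNReal.ofReal ((⟪L z.1, δ⟫ / T) ^ (2 * k)) * WW L e q Γ z)) ∂(hl μ) := by
        refine lintegral_mono fun z => ?_
        have := ev2 ⟪L z.1, δ⟫
        rw [← mul_assoc, ← add_mul, ← ENNReal.ofReal_mul (by positivity),
          ← ENNReal.ofReal_add (by positivity) (by positivity)]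
        refine mul_le_mul' (ENNReal.ofReal_le_ofReal ?_) le_rfl
        rw [real_inner_comm]
        exact hpt _
    _ = ENNReal.ofReal (T ^ 2) * HH μ L e q Γ + ENNReal.ofReal (T ^ 2) *
        ∫⁻ z, (ENNReal.ofReal ((⟪L z.1, δ⟫ / T) ^ (2 * k)) * WW L e q Γ z) ∂(hl μ) := by
        rw [lintegral_add_left (by fun_prop), lintegral_const_mul _ (by fun_prop),
          lintegral_const_mul _ (by fun_prop)]
        rfl
    _ ≤ ENNReal.ofReal (T ^ 2) * HH μ L e q Γ + ENNReal.ofReal (T ^ 2) *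
        (ENNReal.ofReal (1/3) * HH μ L e q Γ) := by gcongr
    _ ≤ _ := by
        rw [← mul_assoc, ← add_mul, ← ENNReal.ofReal_mul (by positivity),
          ← ENNReal.ofReal_add (by positivity) (by positivity)]
        refine mul_le_mul' (ENNReal.ofReal_le_ofReal ?_) le_rfl
        rw [hTd]
        have : 0 ≤ (exp 9 * τ * ‖δ‖) ^ 2 := by positivity
        nlinarith

lemma core_c {μ : Measure (EE n)} (h : IsoLaw μ)
    (L : EE n →L[ℝ] EE n) {e : Fin k → ℝ} (he : ∑ i, e i ^ 2 = 1) (hk : 1 ≤ k)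
    {Γ : Fin k → EE n} (hΓ : QQ L Γ ≤ 24 * k) {q : ℝ} (hq : 0 ≤ q) (hqk : q ≤ 3 * k)
    {τ : ℝ} (hτ : 0 < τ) (hT : ∀ δ, ∫⁻ x, ENNReal.ofReal (⟪L x, δ⟫ ^ (4 * k)) ∂μ ≤
      ENNReal.ofReal ((τ * ‖δ‖) ^ (4 * k))) {ρ : ℝ} (hρ : ρ = 2 * (exp 9 * τ) ^ 2) (hρ2 : ρ ≤ 1/2)
    (hfin : HH μ L e q Γ ≠ ⊤) (Δ : Fin k → EE n) :
    HH μ L e q Γ ≤ ENNReal.ofReal (exp (163 * ρ * k + (∑ i, ‖Δ i‖ ^ 2) / 2)) *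
      HH μ L e q (Γ + Δ) := by
  have hp := h.prob
  have hS := (S2_cont' (k := k) L e Γ).measurable
  have hk' : (1:ℝ) ≤ k := by exact_mod_cast hk
  have hρp : 0 < ρ := by rw [hρ]; positivity
  obtain ⟨c2, hc2⟩ : ∃ c2 : ℝ, c2 = 1 / (4 * ρ) + 1/2 := ⟨_, rfl⟩
  have hc2p : 0 < c2 := by rw [hc2]; positivity
  set ψ : EE n × ℝ → ℝ := fun z => ρ * S2 L e Γ z + c2 * ∑ i, ⟪Δ i, L z.1⟫ ^ 2 with hψ
  have ψm : Measurable ψ := by rw [hψ]; fun_prop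
  have ψ0 : ∀ z, 0 ≤ ψ z := fun z => by
    have := S2_nonneg L e Γ z
    simp only [hψ]; positivity
  set m : ℝ := 163 * ρ * k + (∑ i, ‖Δ i‖ ^ 2) / 2 with hm
  have hm0 : 0 ≤ m := by positivity
  have hEψ : ∫⁻ z, ENNReal.ofReal (ψ z) * WW L e q Γ z ∂(hl μ) ≤
      ENNReal.ofReal m * HH μ L e q Γ := by
    have e1 : ∀ z, ENNReal.ofReal (ψ z) * WW L e q Γ z = ENNReal.ofReal ρ *
        (ENNReal.ofReal (S2 L e Γ z) * WW L e q Γ z) + ENNReal.ofReal c2 * ∑ i,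
        (ENNReal.ofReal (⟪Δ i, L z.1⟫ ^ 2) * WW L e q Γ z) := by
      intro z
      have := S2_nonneg L e Γ z
      simp only [hψ]
      rw [ENNReal.ofReal_add (by positivity) (by positivity), ENNReal.ofReal_mul hρp.le,
        ENNReal.ofReal_mul hc2p.le, ENNReal.ofReal_sum_of_nonneg (fun i _ => by positivity),
        ← Finset.sum_mul]
      ring
    simp_rw [e1]
    rw [lintegral_add_left (by fun_prop), lintegral_const_mul _ (by fun_prop),
      lintegral_const_mul _ (by fun_prop), lintegral_finsetSum _ (fun i _ => by fun_prop)]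
    calc _ ≤ ENNReal.ofReal ρ * (ENNReal.ofReal (163 * k) * HH μ L e q Γ) + ENNReal.ofReal c2 *
          ∑ i, (ENNReal.ofReal (ρ * ‖Δ i‖ ^ 2) * HH μ L e q Γ) := by
          refine add_le_add (mul_le_mul' le_rfl (core_a h L he hk hΓ hq hqk))
            (mul_le_mul' le_rfl (Finset.sum_le_sum fun i _ => ?_))
          rw [hρ]
          exact core_b h L he hk hΓ hq hqk hτ hT (Δ i)
      _ = ENNReal.ofReal (ρ * (163 * k) + c2 * ∑ i, (ρ * ‖Δ i‖ ^ 2)) * HH μ L e q Γ := by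
          rw [ENNReal.ofReal_add (by positivity) (by positivity), ENNReal.ofReal_mul hρp.le,
            ENNReal.ofReal_mul hc2p.le, ENNReal.ofReal_sum_of_nonneg (fun i _ => by positivity),
            ← Finset.sum_mul]
          ring
      _ ≤ _ := by
          refine mul_le_mul' (ENNReal.ofReal_le_ofReal ?_) le_rfl
          rw [← Finset.mul_sum, ← mul_assoc, hm]
          have : c2 * ρ ≤ 1/2 := by
            rw [hc2, add_mul]
            have : 1 / (4 * ρ) * ρ = 1/4 := by field_simp
            rw [this]; linarith
          have h0 : 0 ≤ ∑ i, ‖Δ i‖ ^ 2 := by positivity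
          nlinarith
  have hj := jensen_exp (lam := hl μ) (WW_meas L e q Γ) ψm ψ0 hm0 hfin hEψ
  refine hj.trans (mul_le_mul' le_rfl ?_)
  rw [HH_eq_WW]
  refine lintegral_mono_ae ?_
  filter_upwards [hl_pos μ] with z hz
  unfold WW
  rw [← ENNReal.ofReal_mul (exp_pos _).le]
  apply ENNReal.ofReal_le_ofReal
  rw [mul_left_comm, ← Real.exp_add]
  refine mul_le_mul_of_nonneg_left (Real.exp_le_exp.2 ?_) (by positivity)
  have e2 : S2 L e (Γ + Δ) z ≤ S2 L e Γ z + 2 * ψ z := by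
    simp only [hψ]
    unfold S2
    rw [mul_add, ← mul_assoc, ← mul_assoc, Finset.mul_sum, Finset.mul_sum, ← Finset.sum_add_distrib,
      ← Finset.sum_add_distrib]
    refine Finset.sum_le_sum fun i _ => ?_
    simp only [Pi.add_apply, inner_add_left]
    set s := z.2 * e i - ⟪Γ i, L z.1⟫ with hs
    set d := ⟪Δ i, L z.1⟫ with hd
    have e3 : z.2 * e i - (⟪Γ i, L z.1⟫ + d) = s - d := by rw [hs]; ring
    rw [e3]
    have e4 : 2 * c2 * d ^ 2 = d ^ 2 / (2 * ρ) + d ^ 2 := by rw [hc2]; field_simp; ring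
    rw [e4]
    have e5 : 2 * ρ * s ^ 2 + d ^ 2 / (2 * ρ) + 2 * s * d = (2 * ρ * s + d) ^ 2 / (2 * ρ) := by
      field_simp; ring
    have : 0 ≤ (2 * ρ * s + d) ^ 2 / (2 * ρ) := by positivity
    nlinarith
  linarith

end

section

variable {n k : ℕ}

lemma JJ_fin {q : ℝ} (hq : -1 < q) : JJ q ≠ ⊤ := by
  have h := integrableOn_rpow_mul_exp_neg_mul_sq (b := 1/2) (by norm_num) hq
  have h2 := h.lintegral_lt_top
  unfold JJ
  convert h2.ne using 5
  congr 1
  ring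

lemma JJ_pos (q : ℝ) : JJ q ≠ 0 := by
  unfold JJ
  intro h
  rw [setLIntegral_eq_zero_iff' measurableSet_Ioi (by fun_prop)] at h
  have h2 : ∀ᵐ t : ℝ, t ∉ Set.Ioi (0:ℝ) := by
    filter_upwards [h] with t ht ht0
    have h3 := ht ht0
    rw [ENNReal.ofReal_eq_zero] at h3
    have ht' : (0:ℝ) < t := ht0
    have : 0 < t ^ q * exp (-t ^ 2 / 2) := by positivity
    linarith
  rw [ae_iff] at h2
  have h3 : {a : ℝ | ¬ a ∉ Set.Ioi (0:ℝ)} = Set.Ioi 0 := by ext; simp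
  rw [h3, Real.volume_Ioi] at h2
  exact ENNReal.top_ne_zero h2

lemma JJ_lc (q a : ℝ) : JJ q ^ 2 ≤ JJ (q - a) * JJ (q + a) := by
  have := cs_sq (lam := volume.restrict (Set.Ioi (0:ℝ)))
    (f := fun t => ENNReal.ofReal (t ^ ((q - a)/2) * exp (-t ^ 2 / 4)))
    (g := fun t => ENNReal.ofReal (t ^ ((q + a)/2) * exp (-t ^ 2 / 4))) (by fun_prop) (by fun_prop)
  unfold JJ
  convert this using 2
  · refine setLIntegral_congr_fun measurableSet_Ioi fun t ht => ?_
    have ht' : (0:ℝ) < t := ht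
    rw [← ENNReal.ofReal_mul (by positivity)]
    congr 1
    rw [mul_mul_mul_comm, ← Real.rpow_add ht', ← Real.exp_add]
    congr 2 <;> ring
  · refine setLIntegral_congr_fun measurableSet_Ioi fun t ht => ?_
    have ht' : (0:ℝ) < t := ht
    rw [← ENNReal.ofReal_pow (by positivity)]
    congr 1
    rw [mul_pow, ← Real.rpow_natCast (t ^ _), ← Real.rpow_mul ht'.le, ← Real.exp_nat_mul]
    congr 2 <;> (push_cast; ring)
  · refine setLIntegral_congr_fun measurableSet_Ioi fun t ht => ?_
    have ht' : (0:ℝ) < t := ht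
    rw [← ENNReal.ofReal_pow (by positivity)]
    congr 1
    rw [mul_pow, ← Real.rpow_natCast (t ^ _), ← Real.rpow_mul ht'.le, ← Real.exp_nat_mul]
    congr 2 <;> (push_cast; ring)

lemma rr_one (L : EE n →L[ℝ] EE n) (x : EE n) : 1 ≤ rr L x := by
  unfold rr
  rw [Real.one_le_sqrt]
  nlinarith [sq_nonneg ‖L x‖]

lemma normL_eq (L : EE n →L[ℝ] EE n) (x : EE n) : ‖L x‖ ^ 2 =
    ∑ j, ⟪x, ContinuousLinearMap.adjoint L (EuclideanSpace.single j 1)⟫ ^ 2 := by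
  rw [EuclideanSpace.norm_sq_eq]
  refine Finset.sum_congr rfl fun j _ => ?_
  rw [ContinuousLinearMap.adjoint_inner_right]
  simp [EuclideanSpace.inner_single_right]

lemma RR_fin {μ : Measure (EE n)} (h : IsoLaw μ) (L : EE n →L[ℝ] EE n) (s : ℝ) : RR μ L s ≠ ⊤ := by
  have hp := h.prob
  obtain ⟨m, hm⟩ := exists_nat_ge (s / 2)
  have h1 : ∀ x, rr L x ^ s ≤ 2 ^ m + 2 ^ m * (n:ℝ) ^ m * ∑ j,
      ⟪x, ContinuousLinearMap.adjoint L (EuclideanSpace.single j 1)⟫ ^ (2 * (m + 1)) := by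
    intro x
    have h1 := rr_one L x
    set u := ‖L x‖ ^ 2 with hu
    have hu0 : 0 ≤ u := by positivity
    have h2 : rr L x ^ s ≤ (1 + u) ^ (m + 1) := by
      rw [← rr_sq, ← pow_mul, ← Real.rpow_natCast (rr L x)]
      refine Real.rpow_le_rpow_of_exponent_le h1 ?_
      push_cast; linarith
    have h3 := add_pow_le zero_le_one hu0 (m + 1)
    have h4 : u ^ (m + 1) ≤ (n:ℝ) ^ m * ∑ j,
      ⟪x, ContinuousLinearMap.adjoint L (EuclideanSpace.single j 1)⟫ ^ (2 * (m + 1)) := by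
      rcases Nat.eq_zero_or_pos n with h0 | h0
      · subst h0
        have : u = 0 := by rw [hu, normL_eq]; simp
        rw [this]; simp
      rw [hu, normL_eq]
      have h5 := pow_sum_div_card_le_sum_pow (s := Finset.univ) (f := fun j : Fin n =>
        ⟪x, ContinuousLinearMap.adjoint L (EuclideanSpace.single j 1)⟫ ^ 2) (fun i _ => by positivity) m
      rw [Finset.card_univ, Fintype.card_fin, div_le_iff₀ (by positivity)] at h5
      simp_rw [pow_mul]
      rw [mul_comm ((n:ℝ) ^ m)]
      exact h5
    rw [one_pow, Nat.add_sub_cancel] at h3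
    refine h2.trans (h3.trans ?_)
    rw [mul_add, mul_one, mul_assoc]
    gcongr
  refine ne_top_of_le_ne_top ?_ (lintegral_mono fun x => ENNReal.ofReal_le_ofReal (h1 x))
  have e0 : ∀ x : EE n, ∀ j, 0 ≤ ⟪x, ContinuousLinearMap.adjoint L (EuclideanSpace.single j 1)⟫ ^ (2 * (m + 1)) :=
    fun x j => by rw [pow_mul]; positivity
  have e1 : ∀ x : EE n, ENNReal.ofReal (2 ^ m + 2 ^ m * (n:ℝ) ^ m * ∑ j,
      ⟪x, ContinuousLinearMap.adjoint L (EuclideanSpace.single j 1)⟫ ^ (2 * (m + 1))) =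
      ENNReal.ofReal (2 ^ m) + ENNReal.ofReal (2 ^ m * (n:ℝ) ^ m) * ∑ j,
        ENNReal.ofReal (⟪x, ContinuousLinearMap.adjoint L (EuclideanSpace.single j 1)⟫ ^ (2 * (m + 1))) := by
    intro x
    rw [ENNReal.ofReal_add (by positivity) (mul_nonneg (by positivity) (Finset.sum_nonneg fun j _ => e0 x j)),
      ENNReal.ofReal_mul (by positivity), ENNReal.ofReal_sum_of_nonneg (fun j _ => e0 x j)]
  simp_rw [e1]
  rw [lintegral_add_left (by fun_prop), lintegral_const_mul _ (by fun_prop),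
    lintegral_finsetSum _ (fun i _ => by fun_prop), lintegral_const, measure_univ]
  refine ENNReal.add_ne_top.2 ⟨by simp, ENNReal.mul_ne_top ENNReal.ofReal_ne_top ?_⟩
  exact ENNReal.sum_ne_top.2 fun j _ => h.fin_moment _ _

/-- the good event -/
def good (μ : Measure (EE n)) (L : EE n →L[ℝ] EE n) (e : Fin k → ℝ) (q : ℝ) : Set (Fin k → EE n) :=
  {Γ | QQ L Γ ≤ 24 * k ∧ HH μ L e q Γ ≠ ⊤}

lemma good_meas (μ : Measure (EE n)) [SFinite μ] (L : EE n →L[ℝ] EE n) (e : Fin k → ℝ) (q : ℝ) :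
    MeasurableSet (good μ L e q) := by
  have h1 := HH_meas μ L e q
  have h2 := QQ_meas (k := k) L
  refine (measurableSet_le h2 measurable_const).inter ?_
  exact h1 (measurableSet_singleton _).compl

lemma HH_avg_fin {μ : Measure (EE n)} (h : IsoLaw μ) (L : EE n →L[ℝ] EE n) {e : Fin k → ℝ}
    (he : ∑ i, e i ^ 2 = 1) {q : ℝ} (hq : 0 ≤ q) :
    ∫⁻ Γ, HH μ L e q Γ ∂(Measure.pi fun _ : Fin k => gam n) ≠ ⊤ := by
  have hp := h.prob
  rw [HH_avg L he q]
  exact ENNReal.mul_ne_top (JJ_fin (by linarith)) (RR_fin h L _)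

lemma good_bound {μ : Measure (EE n)} (h : IsoLaw μ) (L : EE n →L[ℝ] EE n)
    (hL : ∑ j, ‖L (EuclideanSpace.single j 1)‖ ^ 2 = 1) {e : Fin k → ℝ}
    (he : ∑ i, e i ^ 2 = 1) (hk : 1 ≤ k) {q : ℝ} (hq : 0 ≤ q) (hqk : q + 1 ≤ 3 * k) :
    JJ q * RR μ L (q + 1 - k) ≤ ENNReal.ofReal (exp (2 * exp (-k))) *
      ∫⁻ Γ, (good μ L e q).indicator (HH μ L e q) Γ ∂(Measure.pi fun _ : Fin k => gam n) := by
  have hp := h.prob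
  have hk' : (1:ℝ) ≤ k := by exact_mod_cast hk
  set ν := Measure.pi fun _ : Fin k => gam n with hν
  have hE := HH_avg L (μ := μ) he q
  have hEf := HH_avg_fin h L he hq
  have hm := HH_meas μ L e q
  rw [← hν] at hE hEf
  rw [← hE]
  set E := ∫⁻ Γ, HH μ L e q Γ ∂ν with hEd
  set I := ∫⁻ Γ, (good μ L e q).indicator (HH μ L e q) Γ ∂ν with hI
  have hQ := HH_avg_Q (k := k) (μ := μ) L hL he q
  rw [← hν, ← hE] at hQ
  have h1 : E ≤ I + ENNReal.ofReal (exp (-k)) * E := by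
    have h2 : ∀ᵐ Γ ∂ν, HH μ L e q Γ ≤ (good μ L e q).indicator (HH μ L e q) Γ +
        ENNReal.ofReal (exp (-(3 * k))) * (HH μ L e q Γ * ENNReal.ofReal (exp (QQ L Γ / 8))) := by
      filter_upwards [ae_lt_top hm hEf] with Γ hΓ
      by_cases hg : Γ ∈ good μ L e q
      · rw [Set.indicator_of_mem hg]; exact le_self_add
      · rw [Set.indicator_of_notMem hg, zero_add, mul_left_comm, ← ENNReal.ofReal_mul (exp_pos _).le,
          ← Real.exp_add]
        have : ¬ QQ L Γ ≤ 24 * k := fun h6 => hg ⟨h6, hΓ.ne⟩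
        push Not at this
        have h7 : 1 ≤ ENNReal.ofReal (exp (-(3 * k) + QQ L Γ / 8)) := by
          rw [ENNReal.one_le_ofReal, Real.one_le_exp_iff]; linarith
        calc HH μ L e q Γ = HH μ L e q Γ * 1 := (mul_one _).symm
          _ ≤ _ := mul_le_mul' le_rfl h7
    have h3 := lintegral_mono_ae h2
    rw [lintegral_add_left (hm.indicator (good_meas μ L e q)),
      lintegral_const_mul' _ _ ENNReal.ofReal_ne_top] at h3
    refine h3.trans (add_le_add le_rfl ?_)
    refine (mul_le_mul' le_rfl hQ).trans ?_
    rw [← mul_assoc, ← ENNReal.ofReal_mul (exp_pos _).le]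
    refine mul_le_mul' (ENNReal.ofReal_le_ofReal ?_) le_rfl
    have h8 : √2 ≤ exp (1/2) := by
      rw [Real.sqrt_le_left (exp_pos _).le, ← Real.exp_nat_mul]
      have := Real.add_one_le_exp (1:ℝ)
      norm_num; linarith
    have h9 : √2 ^ k ≤ exp (k / 2) := by
      refine (pow_le_pow_left₀ (by positivity) h8 k).trans (le_of_eq ?_)
      rw [← Real.exp_nat_mul]; congr 1; ring
    have h10 : √2 ^ (q + 1) ≤ exp ((q + 1) / 2) := by
      refine (Real.rpow_le_rpow (by positivity) h8 (by linarith)).trans (le_of_eq ?_)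
      rw [← Real.exp_mul]; congr 1; ring
    calc exp (-(3 * k)) * (√2 ^ k * √2 ^ (q + 1)) ≤ exp (-(3 * k)) * (exp (k / 2) * exp ((q + 1) / 2)) := by
          gcongr
      _ = exp (-(3 * k) + (k / 2 + (q + 1) / 2)) := by rw [Real.exp_add, Real.exp_add]
      _ ≤ _ := by rw [Real.exp_le_exp]; linarith
  have hIE : I ≤ E := lintegral_mono fun Γ => Set.indicator_le_self _ _ _
  have hIf : I ≠ ⊤ := ne_top_of_le_ne_top hEf hIE
  rw [← ENNReal.ofReal_toReal hEf, ← ENNReal.ofReal_toReal hIf] at h1 ⊢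
  have a0 : 0 ≤ E.toReal := ENNReal.toReal_nonneg
  have b0 : 0 ≤ I.toReal := ENNReal.toReal_nonneg
  generalize E.toReal = a at *
  generalize I.toReal = b at *
  rw [← ENNReal.ofReal_mul (exp_pos _).le] at h1 ⊢
  rw [← ENNReal.ofReal_add b0 (by positivity)] at h1
  rw [ENNReal.ofReal_le_ofReal_iff (by positivity)] at h1
  apply ENNReal.ofReal_le_ofReal
  have hx : exp (-(k:ℝ)) ≤ 1/2 := by
    calc exp (-(k:ℝ)) ≤ exp (-1) := by rw [Real.exp_le_exp]; linarith
      _ ≤ 1/2 := by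
        rw [Real.exp_neg, one_div]
        refine inv_anti₀ (by norm_num) ?_
        have := Real.add_one_le_exp (1:ℝ); linarith
  have hx0 := exp_pos (-(k:ℝ))
  set x := exp (-(k:ℝ))
  have h11 := Real.add_one_le_exp (2 * x)
  have h12 : a * (1 - x) ≤ b := by linarith
  have h13 : 1 ≤ (1 + 2 * x) * (1 - x) := by nlinarith
  calc a ≤ a * ((1 + 2 * x) * (1 - x)) := le_mul_of_one_le_right a0 h13
    _ = (1 + 2 * x) * (a * (1 - x)) := by ring
    _ ≤ (1 + 2 * x) * b := by gcongr
    _ ≤ _ := by gcongr; linarith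

end

section

variable {n k : ℕ}

lemma adj_hs (L : EE n →L[ℝ] EE n) : ∑ j, ‖ContinuousLinearMap.adjoint L (EuclideanSpace.single j 1)‖ ^ 2 =
    ∑ j, ‖L (EuclideanSpace.single j 1)‖ ^ 2 := by
  have h0 := fun j => normL_eq L (EuclideanSpace.single j 1)
  simp_rw [h0]
  have : ∀ j, ‖ContinuousLinearMap.adjoint L (EuclideanSpace.single j 1)‖ ^ 2 = ∑ i,
      ⟪EuclideanSpace.single i (1:ℝ), ContinuousLinearMap.adjoint L (EuclideanSpace.single j 1)⟫ ^ 2 := by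
    intro j
    rw [EuclideanSpace.norm_sq_eq]
    refine Finset.sum_congr rfl fun i _ => ?_
    simp [EuclideanSpace.inner_single_left]
  simp_rw [this]
  rw [Finset.sum_comm]

lemma RR_two {μ : Measure (EE n)} (h : IsoLaw μ) (L : EE n →L[ℝ] EE n)
    (hL : ∑ j, ‖L (EuclideanSpace.single j 1)‖ ^ 2 = 1) : RR μ L 2 = 2 := by
  have hp := h.prob
  unfold RR
  have : ∀ x, ENNReal.ofReal (rr L x ^ (2:ℝ)) = 1 + ∑ j, ENNReal.ofReal
      (⟪x, ContinuousLinearMap.adjoint L (EuclideanSpace.single j 1)⟫ ^ 2) := by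
    intro x
    rw [Real.rpow_two, rr_sq, normL_eq, ENNReal.ofReal_add (by norm_num) (by positivity),
      ENNReal.ofReal_sum_of_nonneg (fun j _ => by positivity), ENNReal.ofReal_one]
  simp_rw [this]
  rw [lintegral_add_left (by fun_prop), lintegral_finsetSum _ (fun i _ => by fun_prop), lintegral_const,
    measure_univ]
  simp_rw [h.lint_sq]
  rw [← ENNReal.ofReal_sum_of_nonneg (fun j _ => by positivity), adj_hs, hL]
  norm_num

lemma HH_prod {μ : Measure (EE n)} (h : IsoLaw μ)
    (L : EE n →L[ℝ] EE n) {e : Fin k → ℝ} (he : ∑ i, e i ^ 2 = 1) (hk : 1 ≤ k)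
    {τ : ℝ} (hτ : 0 < τ) (hT : ∀ δ, ∫⁻ x, ENNReal.ofReal (⟪L x, δ⟫ ^ (4 * k)) ∂μ ≤
      ENNReal.ofReal ((τ * ‖δ‖) ^ (4 * k))) {ρ : ℝ} (hρ : ρ = 2 * (exp 9 * τ) ^ 2) (hρ2 : ρ ≤ 1/2)
    {q a : ℝ} (ha : 0 ≤ a) (haq : a < q) (hqk : q + a ≤ 3 * k) :
    (∫⁻ Γ, (good μ L e (q - a)).indicator (HH μ L e (q - a)) Γ ∂(Measure.pi fun _ : Fin k => gam n)) *
    (∫⁻ Γ, (good μ L e (q + a)).indicator (HH μ L e (q + a)) Γ ∂(Measure.pi fun _ : Fin k => gam n)) ≤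
    ENNReal.ofReal (exp (326 * ρ * k + 2 * a ^ 2 / q)) *
      (∫⁻ Γ, HH μ L e q Γ ∂(Measure.pi fun _ : Fin k => gam n)) ^ 2 := by
  have hp := h.prob
  have hm := HH_meas μ L e q
  have hm1 := HH_meas μ L e (q - a)
  have hm2 := HH_meas μ L e (q + a)
  have key := PLc_gampi n k ((good μ L e (q - a)).indicator (HH μ L e (q - a)))
    ((good μ L e (q + a)).indicator (HH μ L e (q + a)))
    (fun Γ => ENNReal.ofReal (exp (163 * ρ * k + a ^ 2 / q)) * HH μ L e q Γ)
    (hm1.indicator (good_meas _ _ _ _)) (hm2.indicator (good_meas _ _ _ _)) (hm.const_mul _) (by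
      intro x y
      by_cases hx : x ∈ good μ L e (q - a)
      swap
      · rw [Set.indicator_of_notMem hx, zero_mul]; exact zero_le
      by_cases hy : y ∈ good μ L e (q + a)
      swap
      · rw [Set.indicator_of_notMem hy, mul_zero]; exact zero_le
      rw [Set.indicator_of_mem hx, Set.indicator_of_mem hy]
      have c1 := core_c h L he hk hx.1 (q := q - a) (by linarith) (by linarith) hτ hT hρ hρ2 hx.2
        ((1/2:ℝ) • (y - x))
      have c2 := core_c h L he hk hy.1 (q := q + a) (by linarith) (by linarith) hτ hT hρ hρ2 hy.2
        ((1/2:ℝ) • (x - y))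
      have e1 : x + (1/2:ℝ) • (y - x) = (1/2:ℝ) • (x + y) := by module
      have e2 : y + (1/2:ℝ) • (x - y) = (1/2:ℝ) • (x + y) := by module
      rw [e1] at c1
      rw [e2] at c2
      have s1 : ∑ i, ‖((1/2:ℝ) • (y - x)) i‖ ^ 2 = (∑ i, ‖x i - y i‖ ^ 2 / 4) := by
        refine Finset.sum_congr rfl fun i _ => ?_
        rw [Pi.smul_apply, Pi.sub_apply, norm_smul, mul_pow, norm_sub_rev]
        norm_num; ring
      have s2 : ∑ i, ‖((1/2:ℝ) • (x - y)) i‖ ^ 2 = (∑ i, ‖x i - y i‖ ^ 2 / 4) := by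
        refine Finset.sum_congr rfl fun i _ => ?_
        rw [Pi.smul_apply, Pi.sub_apply, norm_smul, mul_pow]
        norm_num; ring
      rw [s1] at c1
      rw [s2] at c2
      set D := ∑ i, ‖x i - y i‖ ^ 2 / 4
      set z := (1/2:ℝ) • (x + y)
      have p1 := HH_pl h.pl L e z (a := q - a) (b := q + a) (q := q) (exp_pos (2 * a ^ 2 / q)).le
        (fun t s ht hs => am2 ha haq ht hs)
      calc _ ≤ (ENNReal.ofReal (exp (163 * ρ * k + D / 2)) * HH μ L e (q - a) z) *
            (ENNReal.ofReal (exp (163 * ρ * k + D / 2)) * HH μ L e (q + a) z) := mul_le_mul' c1 c2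
        _ = ENNReal.ofReal (exp (163 * ρ * k + D / 2)) * ENNReal.ofReal (exp (163 * ρ * k + D / 2)) *
            (HH μ L e (q - a) z * HH μ L e (q + a) z) := by ring
        _ ≤ ENNReal.ofReal (exp (163 * ρ * k + D / 2)) * ENNReal.ofReal (exp (163 * ρ * k + D / 2)) *
            (ENNReal.ofReal (exp (2 * a ^ 2 / q)) * HH μ L e q z ^ 2) := mul_le_mul' le_rfl p1
        _ = _ := by
            rw [mul_pow, ← mul_assoc, mul_right_comm (_ ^ 2)]
            congr 1
            rw [← ENNReal.ofReal_pow (exp_pos _).le, ← ENNReal.ofReal_mul (exp_pos _).le,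
              ← ENNReal.ofReal_mul (by positivity), ← ENNReal.ofReal_mul (by positivity),
              ← Real.exp_nat_mul, ← Real.exp_add, ← Real.exp_add, ← Real.exp_add]
            congr 2
            push_cast; ring)
  refine key.trans (le_of_eq ?_)
  rw [lintegral_const_mul _ hm, mul_pow, ← ENNReal.ofReal_pow (exp_pos _).le, ← Real.exp_nat_mul]
  congr 3
  push_cast; ring

lemma RR_prod {μ : Measure (EE n)} (h : IsoLaw μ)
    (L : EE n →L[ℝ] EE n) (hL : ∑ j, ‖L (EuclideanSpace.single j 1)‖ ^ 2 = 1)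
    {τ : ℝ} (hτ : 0 < τ) (hT : ∀ δ, ∫⁻ x, ENNReal.ofReal (⟪L x, δ⟫ ^ (4 * k)) ∂μ ≤
      ENNReal.ofReal ((τ * ‖δ‖) ^ (4 * k))) {ρ : ℝ} (hρ : ρ = 2 * (exp 9 * τ) ^ 2) (hρ2 : ρ ≤ 1/2)
    {a : ℝ} (ha : 2 ≤ a) (hak : 2 * a ≤ k) :
    RR μ L (2 - a) * RR μ L (2 + a) ≤
      ENNReal.ofReal (4 * exp (326 * ρ * k + 2 * a ^ 2 / (k + 1) + 4 * exp (-k))) := by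
  have hp := h.prob
  have hk' : (4:ℝ) ≤ k := by linarith
  have hk : 1 ≤ k := by
    have : (1:ℝ) ≤ k := by linarith
    exact_mod_cast this
  set e : Fin k → ℝ := fun _ => 1 / √k with hed
  have he : ∑ i, e i ^ 2 = 1 := by
    simp only [hed, Finset.sum_const, Finset.card_univ, Fintype.card_fin, nsmul_eq_mul, div_pow]
    rw [Real.sq_sqrt (by positivity)]
    field_simp
  set q : ℝ := k + 1 with hq
  have g1 := good_bound h L hL he hk (q := q - a) (by linarith) (by linarith)
  have g2 := good_bound h L hL he hk (q := q + a) (by linarith) (by linarith)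
  have g3 := HH_prod h L he hk hτ hT hρ hρ2 (q := q) (a := a) (by linarith) (by linarith) (by linarith)
  rw [HH_avg L he q] at g3
  have i1 : q - a + 1 - k = 2 - a := by rw [hq]; ring
  have i2 : q + a + 1 - k = 2 + a := by rw [hq]; ring
  have i3 : q + 1 - k = 2 := by rw [hq]; ring
  rw [i1] at g1
  rw [i2] at g2
  rw [i3, RR_two h L hL] at g3
  have j1 := JJ_lc q a
  have jf := JJ_fin (q := q) (by linarith)
  have jp := JJ_pos q
  set I1 := ∫⁻ Γ, (good μ L e (q - a)).indicator (HH μ L e (q - a)) Γ ∂(Measure.pi fun _ : Fin k => gam n)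
  set I2 := ∫⁻ Γ, (good μ L e (q + a)).indicator (HH μ L e (q + a)) Γ ∂(Measure.pi fun _ : Fin k => gam n)
  have hc : JJ q ^ 2 * (RR μ L (2 - a) * RR μ L (2 + a)) ≤ JJ q ^ 2 *
      ENNReal.ofReal (4 * exp (326 * ρ * k + 2 * a ^ 2 / (k + 1) + 4 * exp (-k))) := by
    calc _ ≤ (JJ (q - a) * JJ (q + a)) * (RR μ L (2 - a) * RR μ L (2 + a)) := mul_le_mul' j1 le_rfl
      _ = (JJ (q - a) * RR μ L (2 - a)) * (JJ (q + a) * RR μ L (2 + a)) := by ring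
      _ ≤ (ENNReal.ofReal (exp (2 * exp (-k))) * I1) * (ENNReal.ofReal (exp (2 * exp (-k))) * I2) :=
          mul_le_mul' g1 g2
      _ = (ENNReal.ofReal (exp (2 * exp (-k))) * ENNReal.ofReal (exp (2 * exp (-k)))) * (I1 * I2) := by ring
      _ ≤ (ENNReal.ofReal (exp (2 * exp (-k))) * ENNReal.ofReal (exp (2 * exp (-k)))) *
          (ENNReal.ofReal (exp (326 * ρ * k + 2 * a ^ 2 / q)) * (JJ q * 2) ^ 2) := mul_le_mul' le_rfl g3
      _ = JJ q ^ 2 * (ENNReal.ofReal 4 * ((ENNReal.ofReal (exp (2 * exp (-k))) *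
          ENNReal.ofReal (exp (2 * exp (-k)))) * ENNReal.ofReal (exp (326 * ρ * k + 2 * a ^ 2 / q)))) := by
          have : ENNReal.ofReal 4 = 2 ^ 2 := by norm_num
          rw [this]; ring
      _ = _ := by
          rw [← ENNReal.ofReal_mul (by positivity), ← ENNReal.ofReal_mul (by positivity),
            ← ENNReal.ofReal_mul (by positivity), ← Real.exp_add, ← Real.exp_add]
          congr 4
          rw [hq]; ring
  exact (ENNReal.mul_le_mul_iff_right (pow_ne_zero 2 jp) (ENNReal.pow_ne_top jf)).1 hc

end

section

variable {n k : ℕ}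

/-- small threshold constant -/
def cst1 : ℝ := (1 / (16 * exp 9)) ^ 3
/-- large error constant -/
def cst2 : ℝ := 83456 * exp 18 + 3

lemma cst1_pos : 0 < cst1 := by unfold cst1; positivity
lemma cst2_pos : 0 < cst2 := by unfold cst2; positivity

lemma psi_hT {μ : Measure (EE n)} {α b : ℝ} (hb : 0 ≤ b) (hψ : PsiLaw μ α b) (L : EE n →L[ℝ] EE n)
    (hk : 1 ≤ k) (δ : EE n) : ∫⁻ x, ENNReal.ofReal (⟪L x, δ⟫ ^ (4 * k)) ∂μ ≤
      ENNReal.ofReal ((b * ‖L‖ * (4 * k) ^ (1/α) * ‖δ‖) ^ (4 * k)) := by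
  have h := hψ (ContinuousLinearMap.adjoint L δ) (2 * k) (by omega)
  simp_rw [ContinuousLinearMap.adjoint_inner_right] at h
  have e1 : 2 * (2 * k) = 4 * k := by ring
  have e2 : (2 * ((2 * k : ℕ) : ℝ)) = 4 * k := by push_cast; ring
  rw [e1, e2] at h
  refine h.trans (ENNReal.ofReal_le_ofReal ?_)
  have h2 := (ContinuousLinearMap.adjoint L).le_opNorm δ
  rw [LinearIsometryEquiv.norm_map] at h2
  refine pow_le_pow_left₀ (by positivity) ?_ _
  calc b * (4 * k) ^ (1/α) * ‖ContinuousLinearMap.adjoint L δ‖ ≤ b * (4 * k) ^ (1/α) * (‖L‖ * ‖δ‖) := by gcongr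
    _ = _ := by ring

lemma RR_bound {μ : Measure (EE n)} (h : IsoLaw μ) {α b : ℝ} (hα1 : 1 ≤ α) (hα2 : α ≤ 2) (hb : 0 < b)
    (hψ : PsiLaw μ α b) (L : EE n →L[ℝ] EE n) (hL : ∑ j, ‖L (EuclideanSpace.single j 1)‖ ^ 2 = 1)
    {N : ℝ} (hN : 0 < N) (hκ : b * ‖L‖ = N ^ (-(1/α))) {P : ℝ} (hP : 4 ≤ P) (hPN : P ≤ cst1 * N) :
    RR μ L (2 - P) * RR μ L (2 + P) ≤ ENNReal.ofReal (4 * exp (cst2 * P * (P / N) ^ (1/(α+1)))) := by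
  set ε := (P / N) ^ (1/(α+1)) with hε
  have hPN0 : 0 < P / N := by positivity
  have hε0 : 0 < ε := by positivity
  have hE9 : (1:ℝ) ≤ exp 9 := Real.one_le_exp (by norm_num)
  set s : ℝ := 1 / (16 * exp 9) with hs
  have hs0 : 0 < s := by positivity
  have hs1 : s ≤ 1/16 := by
    rw [hs]; apply one_div_le_one_div_of_le (by norm_num); linarith
  have hεs : ε ≤ s := by
    have h1 : P / N ≤ s ^ 3 := by
      rw [div_le_iff₀ hN]; exact hPN
    calc ε ≤ (s ^ 3) ^ (1/(α+1)) := Real.rpow_le_rpow hPN0.le h1 (by positivity)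
      _ ≤ (s ^ 3) ^ (1/3 : ℝ) := by
          refine Real.rpow_le_rpow_of_exponent_ge (by positivity) (pow_le_one₀ hs0.le (by linarith)) ?_
          apply one_div_le_one_div_of_le (by linarith); linarith
      _ = s := by
          rw [← Real.rpow_natCast, ← Real.rpow_mul hs0.le]; norm_num
  set k := ⌈P / ε⌉₊ with hkd
  have hk1 : P / ε ≤ k := Nat.le_ceil _
  have hk2 : (k:ℝ) < P / ε + 1 := Nat.ceil_lt_add_one (by positivity)
  have hPε : 16 * P ≤ P / ε := by
    rw [le_div_iff₀ hε0]
    nlinarith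
  have hk3 : (k:ℝ) ≤ 2 * (P / ε) := by linarith
  have hk0 : (0:ℝ) < k := by linarith
  have hk : 1 ≤ k := by
    have : 0 < k := by exact_mod_cast hk0
    omega
  have hN' : 0 < N ^ (-(1/α)) := by positivity
  have h1 := RR_prod (k := k) h L hL (τ := b * ‖L‖ * (4 * k) ^ (1/α))
    (mul_pos (by rw [hκ]; positivity) (by positivity)) (psi_hT hb.le hψ L hk) rfl
  have hα0 : 0 < α := by linarith
  set ρ := 2 * (exp 9 * (b * ‖L‖ * (4 * k) ^ (1/α))) ^ 2 with hρ
  have hkN : (k:ℝ) / N ≤ 2 * ε ^ α := by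
    have h2 : ε ^ (α + 1) = P / N := by
      rw [hε, ← Real.rpow_mul hPN0.le]
      rw [one_div, inv_mul_cancel₀ (by linarith), Real.rpow_one]
    rw [Real.rpow_add hε0, Real.rpow_one] at h2
    calc (k:ℝ) / N ≤ 2 * (P / ε) / N := by gcongr
      _ = 2 * (P / N / ε) := by ring
      _ = 2 * ε ^ α := by rw [← h2]; field_simp
  have hρ1 : ρ ≤ 128 * exp 18 * ε ^ 2 := by
    have h3 : b * ‖L‖ * (4 * k) ^ (1/α) ≤ 8 * ε := by
      calc b * ‖L‖ * (4 * k) ^ (1/α) = (4 * k / N) ^ (1/α) := by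
            rw [hκ, Real.rpow_neg hN.le, Real.div_rpow (by positivity) hN.le]; field_simp
        _ ≤ (8 * ε ^ α) ^ (1/α) := by
            refine Real.rpow_le_rpow (by positivity) ?_ (by positivity)
            calc 4 * k / N = 4 * (k / N) := by ring
              _ ≤ 4 * (2 * ε ^ α) := by gcongr
              _ = _ := by ring
        _ = 8 ^ (1/α) * ε := by
            rw [Real.mul_rpow (by norm_num) (by positivity), ← Real.rpow_mul hε0.le,
              mul_one_div_cancel hα0.ne', Real.rpow_one]
        _ ≤ 8 ^ (1:ℝ) * ε := by
            gcongr
            · norm_num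
            · rw [div_le_one hα0]; exact hα1
        _ = 8 * ε := by rw [Real.rpow_one]
    have h4 : 0 ≤ b * ‖L‖ * (4 * k) ^ (1/α) := by positivity
    calc ρ ≤ 2 * (exp 9 * (8 * ε)) ^ 2 := by rw [hρ]; gcongr
      _ = 128 * exp 9 ^ 2 * ε ^ 2 := by ring
      _ = _ := by rw [← Real.exp_nat_mul]; norm_num
  have e18 : exp 18 = exp 9 ^ 2 := by rw [← Real.exp_nat_mul]; norm_num
  have hρ2 : ρ ≤ 1/2 := by
    refine hρ1.trans ?_
    calc 128 * exp 18 * ε ^ 2 ≤ 128 * exp 18 * s ^ 2 := by gcongr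
      _ = 1/2 := by rw [hs, e18]; field_simp; norm_num
  have h5 := h1 hρ2 (a := P) (by linarith) (by linarith)
  refine h5.trans (ENNReal.ofReal_le_ofReal ?_)
  gcongr
  have a1 : 326 * ρ * k ≤ 83456 * exp 18 * P * ε := by
    calc 326 * ρ * k ≤ 326 * (128 * exp 18 * ε ^ 2) * (2 * (P / ε)) := by gcongr
      _ = _ := by field_simp; norm_num
  have a2 : 2 * P ^ 2 / (k + 1) ≤ 2 * P * ε := by
    rw [div_le_iff₀ (by positivity)]
    have : P ≤ k * ε := by rw [div_le_iff₀ hε0] at hk1; exact hk1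
    nlinarith [mul_pos (by linarith : 0 < P) hε0]
  have a3 : 4 * exp (-(k:ℝ)) ≤ P * ε := by
    have h7 : exp (-(k:ℝ)) ≤ 1 / k := by
      rw [Real.exp_neg, ← one_div]
      apply one_div_le_one_div_of_le hk0
      have := Real.add_one_le_exp (k:ℝ); linarith
    have h8 : 1 / (k:ℝ) ≤ ε / P := by
      rw [div_le_div_iff₀ hk0 (by linarith)]
      rw [div_le_iff₀ hε0] at hk1; linarith
    have h9 : ε / P ≤ ε / 4 := by gcongr
    nlinarith
  unfold cst2
  calc _ ≤ 83456 * exp 18 * P * ε + 2 * P * ε + P * ε := by linarith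
    _ = _ := by ring

end

section

variable {n k : ℕ}

lemma gpos (hn : 0 < n) {p : ℝ} (hp : 0 < p) (hpn : 2 * p ≤ n) (v : EE n) :
    ∫⁻ x, ENNReal.ofReal (‖v + x‖ ^ p) ∂(gam n) ≤
      ENNReal.ofReal (√(n + ‖v‖ ^ 2) ^ p * exp (p ^ 2 / n)) := by
  have hn' : (0:ℝ) < n := by exact_mod_cast hn
  set R2 : ℝ := n + ‖v‖ ^ 2 with hR2
  have hR0 : 0 < R2 := by positivity
  have hRn : (n:ℝ) ≤ R2 := by rw [hR2]; nlinarith [sq_nonneg ‖v‖]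
  set t := p / R2 with ht
  have ht0 : 0 < t := by positivity
  have htn : t ≤ p / n := by rw [ht]; gcongr
  have ht2 : t ≤ 1/2 := by
    refine htn.trans ?_
    rw [div_le_iff₀ hn']; linarith
  have h1 : ∀ x : EE n, ‖v + x‖ ^ p ≤ √R2 ^ p * exp (-(p/2)) * exp (t/2 * ‖v + x‖ ^ 2) := by
    intro x
    have e1 : ‖v + x‖ = √R2 * √(‖v + x‖ ^ 2 / R2) := by
      rw [← Real.sqrt_mul hR0.le, mul_div_cancel₀ _ hR0.ne', Real.sqrt_sq (norm_nonneg _)]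
    set u := ‖v + x‖ ^ 2 / R2 with hu
    have hu0 : 0 ≤ u := by positivity
    have e2 : t/2 * ‖v + x‖ ^ 2 = p/2 * u := by rw [hu, ht]; field_simp
    rw [e2, e1, Real.mul_rpow (by positivity) (by positivity), mul_assoc, ← Real.exp_add]
    gcongr
    rw [Real.sqrt_eq_rpow, ← Real.rpow_mul hu0]
    calc u ^ (1/2 * p) ≤ (exp (u - 1)) ^ (1/2 * p) := by
          refine Real.rpow_le_rpow hu0 ?_ (by positivity)
          have := Real.add_one_le_exp (u - 1); linarith
      _ = _ := by rw [← Real.exp_mul]; congr 1; ring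
  calc _ ≤ ∫⁻ x, ENNReal.ofReal (√R2 ^ p * exp (-(p/2))) * ENNReal.ofReal (exp (t/2 * ‖v + x‖ ^ 2)) ∂(gam n) := by
        refine lintegral_mono fun x => ?_
        rw [← ENNReal.ofReal_mul (by positivity)]
        exact ENNReal.ofReal_le_ofReal (h1 x)
    _ = ENNReal.ofReal (√R2 ^ p * exp (-(p/2))) * ENNReal.ofReal
          ((1 - 2 * (t/2)) ^ (-(n:ℝ)/2) * exp (t/2 * ‖v‖ ^ 2 / (1 - 2 * (t/2)))) := by
        rw [lintegral_const_mul _ (by fun_prop), gam_exp_sq (by linarith)]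
    _ ≤ _ := by
        rw [← ENNReal.ofReal_mul (by positivity)]
        apply ENNReal.ofReal_le_ofReal
        rw [mul_assoc]
        gcongr
        have e3 : 2 * (t/2) = t := by ring
        have ht1 : 0 < 1 - t := by linarith
        rw [e3, Real.rpow_def_of_pos ht1, ← Real.exp_add, ← Real.exp_add, Real.exp_le_exp]
        have h3 : -log (1 - t) ≤ t / (1 - t) := by
          have := Real.log_le_sub_one_of_pos (inv_pos.2 ht1)
          rw [Real.log_inv] at this
          have e4 : (1 - t)⁻¹ - 1 = t / (1 - t) := by field_simp; ring
          linarith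
        have h4 : log (1 - t) * (-(n:ℝ)/2) ≤ n/2 * (t / (1 - t)) := by nlinarith
        have h5 : n/2 * (t / (1 - t)) + t/2 * ‖v‖ ^ 2 / (1 - t) = p / (2 * (1 - t)) := by
          have : p = t * R2 := by rw [ht]; field_simp
          rw [this, hR2]; field_simp
        have h6 : p / (2 * (1 - t)) - p / 2 ≤ p * t := by
          have : p / (2 * (1 - t)) - p / 2 = p * t / (2 * (1 - t)) := by field_simp; ring
          rw [this, div_le_iff₀ (by linarith)]
          nlinarith [mul_pos hp ht0]
        have h7 : p * t ≤ p ^ 2 / n := by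
          calc p * t ≤ p * (p / n) := by gcongr
            _ = _ := by ring
        linarith

lemma gamma_lint {s y : ℝ} (hs : 0 < s) (hy : 0 < y) :
    ∫⁻ t in Set.Ioi (0:ℝ), ENNReal.ofReal (t ^ (s - 1) * exp (-(y * t))) =
      ENNReal.ofReal (y ^ (-s) * Real.Gamma s) := by
  have h := Real.integral_rpow_mul_exp_neg_mul_Ioi hs hy
  have hi := Real.GammaIntegral_convergent hs
  rw [← ofReal_integral_eq_lintegral_ofReal, h]
  · rw [one_div, Real.inv_rpow hy.le, Real.rpow_neg hy.le]
  · have := integrableOn_rpow_mul_exp_neg_mul_rpow (s := s - 1) (p := 1) (b := y) (by linarith) one_pos hy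
    simpa [IntegrableOn] using this
  · filter_upwards [ae_restrict_mem measurableSet_Ioi] with t ht
    have : (0:ℝ) < t := ht
    positivity

lemma subst_lint {F : ℝ → ℝ≥0∞} : ∫⁻ t in Set.Ioi (0:ℝ), F t ≤
    ∫⁻ u in Set.Ioo (0:ℝ) (1/2), ENNReal.ofReal (1 / (1 - 2 * u) ^ 2) * F (u / (1 - 2 * u)) := by
  have h := lintegral_image_eq_lintegral_abs_deriv_mul (s := Set.Ioo (0:ℝ) (1/2))
    (f := fun u => u / (1 - 2 * u)) (f' := fun u => 1 / (1 - 2 * u) ^ 2) measurableSet_Ioo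
    (fun u hu => by
      have h1 : 1 - 2 * u ≠ 0 := by linarith [hu.2]
      have h2 : HasDerivAt (fun u : ℝ => 1 - 2 * u) (-2) u := by
        simpa using ((hasDerivAt_id u).const_mul (2:ℝ)).const_sub 1
      have := (hasDerivAt_id u).div h2 h1
      refine HasDerivAt.hasDerivWithinAt ?_
      exact this.congr_deriv (show (1 * (1 - 2 * u) - u * (-2)) / (1 - 2 * u) ^ 2 = 1 / (1 - 2 * u) ^ 2 by
        congr 1; ring))
    (fun a ha b hb hab => by
      have h1 : 1 - 2 * a ≠ 0 := by linarith [ha.2]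
      have h2 : 1 - 2 * b ≠ 0 := by linarith [hb.2]
      change a / (1 - 2 * a) = b / (1 - 2 * b) at hab
      rw [div_eq_div_iff h1 h2] at hab
      linarith) F
  have e : ∀ u : ℝ, |1 / (1 - 2 * u) ^ 2| = 1 / (1 - 2 * u) ^ 2 := fun u => abs_of_nonneg (by positivity)
  simp_rw [e] at h
  rw [← h]
  refine lintegral_mono_set fun t ht => ?_
  have ht' : (0:ℝ) < t := ht
  refine ⟨t / (1 + 2 * t), ⟨by positivity, ?_⟩, ?_⟩
  · rw [div_lt_div_iff₀ (by positivity) (by norm_num)]; linarith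
  · simp only
    field_simp
    ring

lemma gneg {s : ℝ} (hs : 0 < s) (hn : 4 * (s + 1) ≤ n) (v : EE n) :
    ∫⁻ x, ENNReal.ofReal (‖v + x‖ ^ (-(2 * s))) ∂(gam n) ≤
      ENNReal.ofReal (√(n + ‖v‖ ^ 2) ^ (-(2 * s)) * exp ((2 * s + 2) ^ 2 / n)) := by
  have hn' : (0:ℝ) < n := by linarith
  set R2 : ℝ := n + ‖v‖ ^ 2 with hR2
  have hR0 : 0 < R2 := by positivity
  have hRn : (n:ℝ) ≤ R2 := by rw [hR2]; nlinarith [sq_nonneg ‖v‖]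
  have hG : 0 < Real.Gamma s := Real.Gamma_pos_of_pos hs
  have h1 : ∀ x : EE n, ENNReal.ofReal (Real.Gamma s) * ENNReal.ofReal (‖v + x‖ ^ (-(2 * s))) ≤
      ∫⁻ t in Set.Ioi (0:ℝ), ENNReal.ofReal (t ^ (s - 1)) * ENNReal.ofReal (exp (-t * ‖v + x‖ ^ 2)) := by
    intro x
    rcases eq_or_lt_of_le (norm_nonneg (v + x)) with h0 | h0
    · rw [← h0, Real.zero_rpow (by linarith)]; simp
    · rw [← ENNReal.ofReal_mul hG.le]
      have h2 := gamma_lint hs (sq_pos_of_pos h0)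
      rw [← Real.rpow_natCast, ← Real.rpow_mul h0.le] at h2
      have e1 : Real.Gamma s * ‖v + x‖ ^ (-(2 * s)) = ‖v + x‖ ^ ((2:ℕ) * -s) * Real.Gamma s := by
        rw [mul_comm]; congr 2; push_cast; ring
      rw [e1, ← h2]
      refine le_of_eq (setLIntegral_congr_fun measurableSet_Ioi fun t ht => ?_)
      have ht' : (0:ℝ) < t := ht
      rw [← ENNReal.ofReal_mul (by positivity)]
      congr 3
      push_cast
      rw [Real.rpow_two]
      ring
  have h2 : ENNReal.ofReal (Real.Gamma s) * ∫⁻ x, ENNReal.ofReal (‖v + x‖ ^ (-(2 * s))) ∂(gam n) ≤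
      ENNReal.ofReal (Real.Gamma s) * ENNReal.ofReal ((R2 - (2 * s + 2)) ^ (-s)) := by
    rw [← lintegral_const_mul _ (by fun_prop)]
    calc _ ≤ ∫⁻ x, (∫⁻ t in Set.Ioi (0:ℝ), ENNReal.ofReal (t ^ (s - 1)) *
          ENNReal.ofReal (exp (-t * ‖v + x‖ ^ 2))) ∂(gam n) := lintegral_mono h1
      _ = ∫⁻ t in Set.Ioi (0:ℝ), ∫⁻ x, ENNReal.ofReal (t ^ (s - 1)) *
          ENNReal.ofReal (exp (-t * ‖v + x‖ ^ 2)) ∂(gam n) := by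
          rw [lintegral_lintegral_swap]
          fun_prop
      _ = ∫⁻ t in Set.Ioi (0:ℝ), ENNReal.ofReal (t ^ (s - 1)) * ENNReal.ofReal
            ((1 - 2 * (-t)) ^ (-(n:ℝ)/2) * exp (-t * ‖v‖ ^ 2 / (1 - 2 * (-t)))) := by
          refine setLIntegral_congr_fun measurableSet_Ioi fun t ht => ?_
          have ht' : (0:ℝ) < t := ht
          rw [lintegral_const_mul _ (by fun_prop), gam_exp_sq (by linarith)]
      _ ≤ _ := subst_lint
      _ ≤ ∫⁻ u in Set.Ioo (0:ℝ) (1/2), ENNReal.ofReal (u ^ (s - 1) * exp (-((R2 - (2 * s + 2)) * u))) := by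
          refine setLIntegral_mono' measurableSet_Ioo fun u hu => ?_
          have hu0 : 0 < u := hu.1
          have hw : 0 < 1 - 2 * u := by linarith [hu.2]
          rw [← ENNReal.ofReal_mul (by positivity), ← ENNReal.ofReal_mul (by positivity)]
          apply ENNReal.ofReal_le_ofReal
          have e1 : 1 - 2 * (-(u / (1 - 2 * u))) = (1 - 2 * u)⁻¹ := by field_simp; ring
          have e2 : -(u / (1 - 2 * u)) * ‖v‖ ^ 2 / (1 - 2 * u)⁻¹ = -(u * ‖v‖ ^ 2) := by
            rw [div_inv_eq_mul, mul_right_comm, neg_mul, div_mul_cancel₀ _ hw.ne']; ring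
          rw [e1, e2]
          set w := 1 - 2 * u with hwd
          have e3 : 1 / w ^ 2 = w ^ (-2 : ℝ) := by
            rw [Real.rpow_neg hw.le, Real.rpow_two, one_div]
          have e4 : (w⁻¹) ^ (-(n:ℝ)/2) = w ^ ((n:ℝ)/2) := by
            rw [Real.inv_rpow hw.le, ← Real.rpow_neg hw.le]; congr 1; ring
          have e5 : (u / w) ^ (s - 1) = u ^ (s - 1) * w ^ (1 - s) := by
            rw [Real.div_rpow hu0.le hw.le, div_eq_mul_inv, ← Real.rpow_neg hw.le]; congr 2; ring
          rw [e3, e4, e5]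
          have e6 : w ^ (-2 : ℝ) * (u ^ (s - 1) * w ^ (1 - s) * (w ^ ((n:ℝ)/2) * exp (-(u * ‖v‖ ^ 2)))) =
              u ^ (s - 1) * (w ^ ((n:ℝ)/2 - s - 1) * exp (-(u * ‖v‖ ^ 2))) := by
            have : (n:ℝ)/2 - s - 1 = -2 + (1 - s) + n/2 := by ring
            rw [this, Real.rpow_add hw, Real.rpow_add hw]; ring
          rw [e6]
          gcongr
          calc w ^ ((n:ℝ)/2 - s - 1) * exp (-(u * ‖v‖ ^ 2)) ≤
              (exp (-2 * u)) ^ ((n:ℝ)/2 - s - 1) * exp (-(u * ‖v‖ ^ 2)) := by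
                gcongr
                · linarith
                · have := Real.add_one_le_exp (-2 * u); linarith
            _ = _ := by
                rw [← Real.exp_mul, ← Real.exp_add]; congr 1; rw [hR2]; ring
      _ ≤ ∫⁻ u in Set.Ioi (0:ℝ), ENNReal.ofReal (u ^ (s - 1) * exp (-((R2 - (2 * s + 2)) * u))) :=
          lintegral_mono_set fun u hu => hu.1
      _ = _ := by
          rw [gamma_lint hs (by linarith), mul_comm, ENNReal.ofReal_mul hG.le]
  rw [ENNReal.mul_le_mul_iff_right (by simpa using hG) ENNReal.ofReal_ne_top] at h2
  refine h2.trans (ENNReal.ofReal_le_ofReal ?_)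
  have hd : 0 < 1 - (2 * s + 2) / R2 := by
    rw [sub_pos, div_lt_one hR0]; linarith
  have e7 : R2 - (2 * s + 2) = R2 * (1 - (2 * s + 2) / R2) := by field_simp
  rw [e7, Real.mul_rpow hR0.le hd.le]
  have e8 : √R2 ^ (-(2 * s)) = R2 ^ (-s) := by
    rw [Real.sqrt_eq_rpow, ← Real.rpow_mul hR0.le]; congr 1; ring
  rw [e8]
  gcongr
  set t := (2 * s + 2) / R2 with ht
  have ht0 : 0 < t := by positivity
  have htn : t ≤ (2 * s + 2) / n := by rw [ht]; gcongr
  have ht2 : t ≤ 1/2 := by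
    refine htn.trans ?_
    rw [div_le_iff₀ hn']; linarith
  rw [Real.rpow_def_of_pos hd, Real.exp_le_exp]
  have h3 : -log (1 - t) ≤ t / (1 - t) := by
    have := Real.log_le_sub_one_of_pos (inv_pos.2 hd)
    rw [Real.log_inv] at this
    have e4 : (1 - t)⁻¹ - 1 = t / (1 - t) := by field_simp; ring
    linarith
  have h4 : t / (1 - t) ≤ 2 * t := by
    rw [div_le_iff₀ hd]; nlinarith
  calc log (1 - t) * -s = s * (-log (1 - t)) := by ring
    _ ≤ s * (2 * t) := by gcongr; linarith
    _ ≤ s * (2 * ((2 * s + 2) / n)) := by gcongr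
    _ = (2 * s) * (2 * s + 2) / n := by ring
    _ ≤ _ := by gcongr; nlinarith

end

section

variable {n k : ℕ}

/-- p-th moment of `√n L x + g` -/
def MM (μ : Measure (EE n)) (L : EE n →L[ℝ] EE n) (p : ℝ) : ℝ≥0∞ :=
  ∫⁻ x, ∫⁻ g, ENNReal.ofReal (‖√n • L x + g‖ ^ p) ∂(gam n) ∂μ

/-- error constant -/
def cst3 : ℝ := cst2 + 13

lemma sqrt_rr (L : EE n →L[ℝ] EE n) (x : EE n) : √(n + ‖√n • L x‖ ^ 2) = √n * rr L x := by
  unfold rr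
  rw [← Real.sqrt_mul (by positivity), norm_smul, mul_pow, Real.norm_eq_abs, sq_abs,
    Real.sq_sqrt (by positivity)]
  congr 1; ring

lemma MM_le {μ : Measure (EE n)} (L : EE n →L[ℝ] EE n) (p K : ℝ) (hK : 0 ≤ K) (hg : ∀ v : EE n,
    ∫⁻ x, ENNReal.ofReal (‖v + x‖ ^ p) ∂(gam n) ≤
      ENNReal.ofReal (√(n + ‖v‖ ^ 2) ^ p * K)) :
    MM μ L p ≤ ENNReal.ofReal (K * √n ^ p) * RR μ L p := by
  unfold MM RR
  rw [← lintegral_const_mul' _ _ ENNReal.ofReal_ne_top]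
  refine lintegral_mono fun x => ?_
  have := hg (√n • L x)
  rw [sqrt_rr, Real.mul_rpow (by positivity) (rr_pos L x).le] at this
  refine this.trans (le_of_eq ?_)
  have := rr_pos L x
  rw [← ENNReal.ofReal_mul (by positivity)]
  congr 1; ring

lemma cst1_le : cst1 ≤ 1/4096 := by
  unfold cst1
  have hE9 : (1:ℝ) ≤ exp 9 := Real.one_le_exp (by norm_num)
  have : 1 / (16 * exp 9) ≤ 1/16 := by
    apply one_div_le_one_div_of_le (by norm_num); linarith
  calc _ ≤ (1/16:ℝ) ^ 3 := pow_le_pow_left₀ (by positivity) this 3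
    _ = _ := by norm_num

lemma MM_prod {μ : Measure (EE n)} (h : IsoLaw μ) {α b : ℝ} (hα1 : 1 ≤ α) (hα2 : α ≤ 2) (hb : 0 < b)
    (hψ : PsiLaw μ α b) (L : EE n →L[ℝ] EE n) (hL : ∑ j, ‖L (EuclideanSpace.single j 1)‖ ^ 2 = 1)
    {N : ℝ} (hN : 0 < N) (hNn : N ≤ 4 * n) (hκ : b * ‖L‖ = N ^ (-(1/α))) {P : ℝ} (hP : 4 ≤ P)
    (hPN : P ≤ cst1 * N) :
    MM μ L (2 - P) * MM μ L (2 + P) ≤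
      ENNReal.ofReal ((2 * n) ^ 2 * exp (cst3 * P * (P / N) ^ (1/(α+1)))) := by
  have hR := RR_bound h hα1 hα2 hb hψ L hL hN hκ hP hPN
  have hc := cst1_le
  have hPn : P ≤ n / 1024 := by nlinarith
  have hn' : (0:ℝ) < n := by linarith
  have hn : 0 < n := by exact_mod_cast hn'
  set ε := (P / N) ^ (1/(α+1)) with hε
  have g1 := MM_le (μ := μ) L (2 + P) (exp ((2 + P) ^ 2 / n)) (exp_pos _).le
    (gpos hn (by linarith) (by linarith))
  have g2 := MM_le (μ := μ) L (2 - P) (exp (P ^ 2 / n)) (exp_pos _).le (fun v => by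
    have := gneg (n := n) (s := (P - 2)/2) (by linarith) (by linarith) v
    have e1 : -(2 * ((P - 2)/2)) = 2 - P := by ring
    have e2 : 2 * ((P - 2)/2) + 2 = P := by ring
    rwa [e1, e2] at this)
  calc _ ≤ _ := mul_le_mul' g2 g1
    _ = ENNReal.ofReal (exp (P ^ 2 / n) * √n ^ (2 - P)) * ENNReal.ofReal (exp ((2 + P) ^ 2 / n) * √n ^ (2 + P)) *
        (RR μ L (2 - P) * RR μ L (2 + P)) := by ring
    _ ≤ ENNReal.ofReal (exp (P ^ 2 / n) * √n ^ (2 - P)) * ENNReal.ofReal (exp ((2 + P) ^ 2 / n) * √n ^ (2 + P)) *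
        ENNReal.ofReal (4 * exp (cst2 * P * ε)) := mul_le_mul' le_rfl hR
    _ = ENNReal.ofReal (√n ^ (2 - P) * √n ^ (2 + P) * 4 * exp (P ^ 2 / n + (2 + P) ^ 2 / n + cst2 * P * ε)) := by
        rw [← ENNReal.ofReal_mul (by positivity), ← ENNReal.ofReal_mul (by positivity), Real.exp_add,
          Real.exp_add]
        congr 1; ring
    _ ≤ _ := by
        apply ENNReal.ofReal_le_ofReal
        rw [← Real.rpow_add (by positivity)]
        have e3 : √(n:ℝ) ^ (2 - P + (2 + P)) = (n:ℝ) ^ 2 := by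
          have : 2 - P + (2 + P) = ((4:ℕ):ℝ) := by push_cast; ring
          rw [this, Real.rpow_natCast]
          have : √(n:ℝ) ^ 4 = (√n ^ 2) ^ 2 := by ring
          rw [this, Real.sq_sqrt hn'.le]
        rw [e3]
        have e4 : (n:ℝ) ^ 2 * 4 = (2 * n) ^ 2 := by ring
        rw [e4]
        gcongr
        have h1 : P / N ≤ ε := by
          have : P / N ≤ 1 := by rw [div_le_one hN]; nlinarith
          have h3 := Real.rpow_le_rpow_of_exponent_ge (by positivity : 0 < P / N) this
            (show 1/(α+1) ≤ 1 by rw [div_le_one (by linarith)]; linarith)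
          rwa [Real.rpow_one] at h3
        have h2 : P / n ≤ 4 * ε := by
          have : P / n ≤ 4 * (P / N) := by
            rw [← mul_div_assoc, div_le_div_iff₀ hn' hN]; nlinarith
          linarith
        have h3 : P ^ 2 / n + (2 + P) ^ 2 / n ≤ 13 * P * ε := by
          have : P ^ 2 / n + (2 + P) ^ 2 / n ≤ (13/4) * P * (P / n) := by
            rw [← add_div, ← mul_div_assoc]
            gcongr
            nlinarith
          nlinarith
        unfold cst3
        linarith

lemma gam_sq (v : EE n) : ∫⁻ x, ENNReal.ofReal (‖v + x‖ ^ (2:ℝ)) ∂(gam n) = ENNReal.ofReal (n + ‖v‖ ^ 2) := by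
  have h1 : ∀ x : EE n, ENNReal.ofReal (‖v + x‖ ^ (2:ℝ)) = ∑ j, ENNReal.ofReal
      ((v j + ⟪x, EuclideanSpace.single j 1⟫) ^ 2) := by
    intro x
    rw [Real.rpow_two, EuclideanSpace.norm_sq_eq, ENNReal.ofReal_sum_of_nonneg (fun j _ => by positivity)]
    refine Finset.sum_congr rfl fun j _ => ?_
    simp [EuclideanSpace.inner_single_right]
  simp_rw [h1]
  rw [lintegral_finsetSum _ (fun i _ => by fun_prop)]
  have h2 : ∀ j, ∫⁻ x, ENNReal.ofReal ((v j + ⟪x, EuclideanSpace.single j 1⟫) ^ 2) ∂(gam n) =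
      ENNReal.ofReal (1 + v j ^ 2) := by
    intro j
    have h3 := gam_map_inner (n := n) (EuclideanSpace.single j 1)
    have e0 : ‖(EuclideanSpace.single j (1:ℝ) : EE n)‖₊ ^ 2 = 1 := by
      ext; simp
    rw [e0] at h3
    have hm : Measurable (fun x : EE n => ⟪x, EuclideanSpace.single j (1:ℝ)⟫) := by fun_prop
    have h4 : ∫⁻ x, ENNReal.ofReal ((v j + ⟪x, EuclideanSpace.single j 1⟫) ^ 2) ∂(gam n) =
        ∫⁻ y, ENNReal.ofReal ((v j + y) ^ 2) ∂(gaussianReal 0 1) := by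
      rw [← h3, lintegral_map (by fun_prop) hm]
    rw [h4]
    have m2 : MemLp (fun y : ℝ => y) 2 (gaussianReal 0 1) := memLp_id_gaussianReal 2
    have i1 : Integrable (fun y : ℝ => y) (gaussianReal 0 1) := m2.integrable (by norm_num)
    have i2 : Integrable (fun y : ℝ => y ^ 2) (gaussianReal 0 1) := m2.integrable_sq
    have a1 : ∫ y, y ∂(gaussianReal 0 1) = 0 := integral_id_gaussianReal
    have a2 : ∫ y, y ^ 2 ∂(gaussianReal 0 1) = 1 := by
      have h5 := variance_fun_id_gaussianReal (μ := 0) (v := 1)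
      rw [variance_eq_integral (by fun_prop), a1] at h5
      simpa using h5
    have e5 : ∀ y : ℝ, (v j + y) ^ 2 = v j ^ 2 + 2 * v j * y + y ^ 2 := fun y => by ring
    have i3 : Integrable (fun y : ℝ => v j ^ 2 + 2 * v j * y) (gaussianReal 0 1) :=
      (integrable_const _).add (i1.const_mul _)
    rw [← ofReal_integral_eq_lintegral_ofReal]
    · congr 1
      simp_rw [e5]
      rw [integral_add i3 i2, integral_add (integrable_const _) (i1.const_mul _), integral_const_mul, a1, a2]
      simp
      ring
    · simp_rw [e5]
      exact i3.add i2
    · exact Filter.Eventually.of_forall fun y => by positivity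
  simp_rw [h2]
  rw [← ENNReal.ofReal_sum_of_nonneg (fun j _ => by positivity), Finset.sum_add_distrib, EuclideanSpace.norm_sq_eq]
  simp

lemma MM_two {μ : Measure (EE n)} (h : IsoLaw μ) (L : EE n →L[ℝ] EE n)
    (hL : ∑ j, ‖L (EuclideanSpace.single j 1)‖ ^ 2 = 1) : MM μ L 2 = ENNReal.ofReal (2 * n) := by
  unfold MM
  simp_rw [gam_sq]
  have h2 := RR_two h L hL
  unfold RR at h2
  have e1 : ∀ x, ENNReal.ofReal (n + ‖√n • L x‖ ^ 2) = ENNReal.ofReal n * ENNReal.ofReal (rr L x ^ (2:ℝ)) := by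
    intro x
    rw [Real.rpow_two, rr_sq, ← ENNReal.ofReal_mul (by positivity), norm_smul, mul_pow, Real.norm_eq_abs,
      sq_abs, Real.sq_sqrt (by positivity)]
    congr 1; ring
  simp_rw [e1]
  rw [lintegral_const_mul' _ _ ENNReal.ofReal_ne_top, h2, mul_comm, ENNReal.ofReal_mul (by norm_num)]
  norm_num

end

section

/-- p-th moment as an extended number -/
def mom {Ω : Type*} [MeasurableSpace Ω] (P : Measure Ω) (V : Ω → ℝ) (p : ℝ) : ℝ≥0∞ :=
  ∫⁻ ω, ENNReal.ofReal (V ω ^ p) ∂P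

section
variable {Ω : Type*} [MeasurableSpace Ω] {P : Measure Ω} [IsProbabilityMeasure P] {V : Ω → ℝ}

lemma mom_zero : mom P V 0 = 1 := by
  simp [mom]

lemma mom_holder (hm : Measurable V) (hpos : ∀ᵐ ω ∂P, 0 < V ω) {θ : ℝ} (h0 : 0 ≤ θ) (h1 : θ ≤ 1) (a b : ℝ)
    {c : ℝ} (hc : c = θ * a + (1 - θ) * b) : mom P V c ≤ mom P V a ^ θ * mom P V b ^ (1 - θ) := by
  have := ENNReal.lintegral_mul_norm_pow_le (μ := P) (f := fun ω => ENNReal.ofReal (V ω ^ a))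
    (g := fun ω => ENNReal.ofReal (V ω ^ b)) (by fun_prop) (by fun_prop) h0 (by linarith : 0 ≤ 1 - θ) (by ring)
  refine le_trans (le_of_eq ?_) this
  unfold mom
  refine lintegral_congr_ae ?_
  filter_upwards [hpos] with ω hω
  rw [ENNReal.ofReal_rpow_of_nonneg (by positivity) h0, ENNReal.ofReal_rpow_of_nonneg (by positivity) (by linarith),
    ← ENNReal.ofReal_mul (by positivity), ← Real.rpow_mul hω.le, ← Real.rpow_mul hω.le, ← Real.rpow_add hω]
  congr 2; rw [hc]; ring

lemma mom_ge_one (hm : Measurable V) (hpos : ∀ᵐ ω ∂P, 0 < V ω) (h2 : mom P V 2 = 1) {p : ℝ}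
    (hp : 2 < p ∨ p < 0) : 1 ≤ mom P V p := by
  rcases hp with hp | hp
  · have h := mom_holder hm hpos (θ := 2/p) (by positivity) (by rw [div_le_one (by linarith)]; linarith) p 0
      (c := 2) (by field_simp; ring)
    rw [h2, mom_zero, ENNReal.one_rpow, mul_one] at h
    by_contra hc
    push Not at hc
    exact absurd h (not_le.2 (ENNReal.rpow_lt_one hc (by positivity)))
  · have h3 : 0 < 2 - p := by linarith
    have h := mom_holder hm hpos (θ := 2/(2 - p)) (by positivity) (by rw [div_le_one h3]; linarith) p 2
      (c := 0) (by field_simp; ring)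
    rw [h2, mom_zero, ENNReal.one_rpow, mul_one] at h
    by_contra hc
    push Not at hc
    exact absurd h (not_le.2 (ENNReal.rpow_lt_one hc (by positivity)))

lemma mom_le_one (hm : Measurable V) (hpos : ∀ᵐ ω ∂P, 0 < V ω) (h2 : mom P V 2 = 1) {p : ℝ}
    (hp : 0 ≤ p) (hp2 : p ≤ 2) : mom P V p ≤ 1 := by
  have h := mom_holder hm hpos (θ := p/2) (by positivity) (by linarith) 2 0
      (c := p) (by ring)
  rwa [h2, mom_zero, ENNReal.one_rpow, ENNReal.one_rpow, mul_one] at h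

lemma int_mom (hm : Measurable V) (hpos : ∀ᵐ ω ∂P, 0 < V ω) (p : ℝ) :
    ∫ ω, V ω ^ p ∂P = (mom P V p).toReal := by
  rw [integral_eq_lintegral_of_nonneg_ae]
  · rfl
  · filter_upwards [hpos] with ω hω
    positivity
  · exact (hm.pow_const p).aestronglyMeasurable

lemma rho_le_one (hm : Measurable V) (hpos : ∀ᵐ ω ∂P, 0 < V ω) (h2 : mom P V 2 = 1) {p : ℝ}
    (hp0 : p ≠ 0) (hp2 : p < 2) : (mom P V p).toReal ^ (1/p) ≤ 1 := by
  rcases lt_or_gt_of_ne hp0 with hp | hp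
  · by_cases ht : mom P V p = ⊤
    · rw [ht, ENNReal.toReal_top, Real.zero_rpow (by positivity)]; norm_num
    · have h1 := mom_ge_one hm hpos h2 (Or.inr hp)
      have h3 : 1 ≤ (mom P V p).toReal := by
        rw [← ENNReal.toReal_one]; exact (ENNReal.toReal_le_toReal (by simp) ht).2 h1
      refine Real.rpow_le_one_of_one_le_of_nonpos h3 ?_
      exact div_nonpos_of_nonneg_of_nonpos zero_le_one hp.le
  · have h1 := mom_le_one hm hpos h2 hp.le hp2.le
    have h3 : (mom P V p).toReal ≤ 1 := by
      rw [← ENNReal.toReal_one]; exact ENNReal.toReal_mono (by simp) h1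
    exact Real.rpow_le_one ENNReal.toReal_nonneg h3 (by positivity)

lemma mom_toReal {p x : ℝ} (h : mom P V p ≤ ENNReal.ofReal (exp x)) :
    mom P V p ≠ ⊤ ∧ (mom P V p).toReal ≤ exp x := by
  refine ⟨ne_top_of_le_ne_top ENNReal.ofReal_ne_top h, ?_⟩
  have := ENNReal.toReal_mono ENNReal.ofReal_ne_top h
  rwa [ENNReal.toReal_ofReal (exp_pos _).le] at this

/-- upper bound for p >= 2 -/
lemma rho_up (hm : Measurable V) (hpos : ∀ᵐ ω ∂P, 0 < V ω) (h2 : mom P V 2 = 1) {p x : ℝ}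
    (hp : 2 < p) (h : mom P V p ≤ ENNReal.ofReal (exp (p * x))) :
    1 ≤ (mom P V p).toReal ^ (1/p) ∧ (mom P V p).toReal ^ (1/p) ≤ exp x := by
  obtain ⟨hf, hr⟩ := mom_toReal h
  have h1 := mom_ge_one hm hpos h2 (Or.inl hp)
  have h3 : 1 ≤ (mom P V p).toReal := by
    rw [← ENNReal.toReal_one]; exact (ENNReal.toReal_le_toReal (by simp) hf).2 h1
  refine ⟨Real.one_le_rpow h3 (by positivity), ?_⟩
  calc _ ≤ (exp (p * x)) ^ (1/p) := Real.rpow_le_rpow (by linarith) hr (by positivity)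
    _ = exp x := by rw [← Real.exp_mul]; congr 1; field_simp

/-- lower bound for p < 0 -/
lemma rho_dn_neg (hm : Measurable V) (hpos : ∀ᵐ ω ∂P, 0 < V ω) (h2 : mom P V 2 = 1) {p x : ℝ}
    (hp : p < 0) (h : mom P V p ≤ ENNReal.ofReal (exp (-p * x))) :
    exp (-x) ≤ (mom P V p).toReal ^ (1/p) := by
  obtain ⟨hf, hr⟩ := mom_toReal h
  have h1 := mom_ge_one hm hpos h2 (Or.inr hp)
  have h3 : 1 ≤ (mom P V p).toReal := by
    rw [← ENNReal.toReal_one]; exact (ENNReal.toReal_le_toReal (by simp) hf).2 h1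
  calc exp (-x) = (exp (-p * x)) ^ (1/p) := by
        rw [← Real.exp_mul]; congr 1
        have : p ≠ 0 := hp.ne
        field_simp
    _ ≤ _ := Real.rpow_le_rpow_of_nonpos (by linarith) hr (div_nonpos_of_nonneg_of_nonpos zero_le_one hp.le)

/-- lower bound for 0 < p < 2 via another moment -/
lemma rho_dn_pos (hm : Measurable V) (hpos : ∀ᵐ ω ∂P, 0 < V ω) (h2 : mom P V 2 = 1) {p x θ a c : ℝ}
    (hp : 0 < p) (hp2 : p ≤ 2) (hθ : 0 < θ) (hθ1 : θ ≤ 1) (hc : c = θ * p + (1 - θ) * a)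
    (hc1 : mom P V c = 1) (h : mom P V a ≤ ENNReal.ofReal (exp x)) :
    exp (-((1 - θ) * x / (θ * p))) ≤ (mom P V p).toReal ^ (1/p) := by
  have h1 := mom_le_one hm hpos h2 hp.le hp2
  have hf : mom P V p ≠ ⊤ := ne_top_of_le_ne_top (by simp) h1
  have h3 := mom_holder hm hpos hθ.le hθ1 p a hc
  rw [hc1] at h3
  have h4 : (1:ℝ≥0∞) ≤ ENNReal.ofReal ((mom P V p).toReal ^ θ * exp ((1 - θ) * x)) := by
    refine h3.trans ?_
    rw [ENNReal.ofReal_mul (by positivity), ← ENNReal.ofReal_rpow_of_nonneg ENNReal.toReal_nonneg hθ.le,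
      ENNReal.ofReal_toReal hf]
    refine mul_le_mul' le_rfl ?_
    refine (ENNReal.rpow_le_rpow h (by linarith)).trans (le_of_eq ?_)
    rw [ENNReal.ofReal_rpow_of_nonneg (exp_pos _).le (by linarith), ← Real.exp_mul]
    congr 2; ring
  rw [ENNReal.one_le_ofReal] at h4
  set y := (mom P V p).toReal with hy
  have hy0 : 0 ≤ y := ENNReal.toReal_nonneg
  have h5 : exp (-((1 - θ) * x)) ≤ y ^ θ := by
    rw [Real.exp_neg, inv_le_iff_one_le_mul₀ (exp_pos _)]; exact h4
  have h6 := Real.rpow_le_rpow (exp_pos _).le h5 (by positivity : 0 ≤ 1 / (θ * p))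
  rw [← Real.exp_mul, ← Real.rpow_mul hy0] at h6
  convert h6 using 2
  · ring
  · field_simp
end

end

section

/-- the final constant -/
def cstF (c1 K : ℝ) : ℝ := 4 / c1 + 8 * K + 2 * K * exp (2 * K)

lemma exp_up {K e : ℝ} (hK : 0 ≤ K) (he : 0 ≤ e) (he1 : e ≤ 1) :
    exp (2 * K * e) ≤ 1 + 2 * K * exp (2 * K) * e := by
  have h1 : 1 - 2 * K * e ≤ exp (-(2 * K * e)) := by
    have := Real.add_one_le_exp (-(2 * K * e)); linarith
  have h2 : exp (2 * K * e) * exp (-(2 * K * e)) = 1 := by rw [← Real.exp_add]; simp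
  have h3 : exp (2 * K * e) ≤ exp (2 * K) := exp_le_exp.2 (by nlinarith)
  have h4 : exp (2 * K * e) * (1 - 2 * K * e) ≤ 1 := by
    exact (mul_le_mul_of_nonneg_left h1 (exp_pos _).le).trans_eq h2
  have h5 : 2 * K * e * exp (2 * K * e) ≤ 2 * K * e * exp (2 * K) :=
    mul_le_mul_of_nonneg_left h3 (by positivity)
  nlinarith

lemma ENN_exp_rpow {m : ℝ≥0∞} {x s : ℝ} (hs : 0 ≤ s) (h : m ≤ ENNReal.ofReal (exp x)) :
    m ^ s ≤ ENNReal.ofReal (exp (s * x)) := by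
  refine (ENNReal.rpow_le_rpow h hs).trans (le_of_eq ?_)
  rw [ENNReal.ofReal_rpow_of_pos (exp_pos _), ← Real.exp_mul, mul_comm]

lemma ofReal_exp_mono {x y : ℝ} (h : x ≤ y) : ENNReal.ofReal (exp x) ≤ ENNReal.ofReal (exp y) :=
  ENNReal.ofReal_le_ofReal (exp_le_exp.2 h)

section
variable {Ω : Type*} [MeasurableSpace Ω] {P : Measure Ω} [IsProbabilityMeasure P] {V : Ω → ℝ}

lemma final_abs (hm : Measurable V) (hpos : ∀ᵐ ω ∂P, 0 < V ω) (h2 : mom P V 2 = 1)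
    {N β c1 K : ℝ} (hN : 0 < N) (hβ0 : 0 < β) (hβ1 : β ≤ 1) (hc0 : 0 < c1) (hc1 : c1 ≤ 1) (hK : 0 ≤ K)
    (hprod : ∀ Q : ℝ, 4 ≤ Q → Q ≤ c1 * N →
      mom P V (2 - Q) * mom P V (2 + Q) ≤ ENNReal.ofReal (exp (K * Q * (Q / N) ^ β)))
    {p : ℝ} (hp0 : p ≠ 0) (hp : |p| ≤ c1 / 4 * N) :
    1 - cstF c1 K * (|p - 2| / N) ^ β ≤ (mom P V p).toReal ^ (1/p) ∧
      (mom P V p).toReal ^ (1/p) ≤ 1 + cstF c1 K * (|p - 2| / N) ^ β := by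
  have hE1 : ∀ Q : ℝ, 4 ≤ Q → Q ≤ c1 * N →
      mom P V (2 - Q) ≤ ENNReal.ofReal (exp (K * Q * (Q / N) ^ β)) := fun Q h h' => by
    refine le_trans ?_ (hprod Q h h')
    exact le_mul_of_one_le_right (by simp) (mom_ge_one hm hpos h2 (Or.inl (by linarith)))
  have hE2 : ∀ Q : ℝ, 4 ≤ Q → Q ≤ c1 * N →
      mom P V (2 + Q) ≤ ENNReal.ofReal (exp (K * Q * (Q / N) ^ β)) := fun Q h h' => by
    refine le_trans ?_ (hprod Q h h')
    exact le_mul_of_one_le_left (by simp) (mom_ge_one hm hpos h2 (Or.inr (by linarith)))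
  set ε := (|p - 2| / N) ^ β with hε
  have hε0 : 0 ≤ ε := by positivity
  have hC0 : 0 ≤ cstF c1 K := by unfold cstF; positivity
  have hCa : 4 / c1 ≤ cstF c1 K := by
    unfold cstF
    have : 0 ≤ 8 * K + 2 * K * exp (2 * K) := by positivity
    linarith
  have hCb : 8 * K ≤ cstF c1 K := by
    unfold cstF
    have : 0 ≤ 4 / c1 + 2 * K * exp (2 * K) := by positivity
    linarith
  have hCc : 2 * K * exp (2 * K) ≤ cstF c1 K := by
    unfold cstF
    have : 0 ≤ 4 / c1 + 8 * K := by positivity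
    linarith
  have hCε : 0 ≤ cstF c1 K * ε := by positivity
  have hlow : ∀ x : ℝ, x ≤ 8 * K * ε → exp (-x) ≤ (mom P V p).toReal ^ (1/p) →
      1 - cstF c1 K * ε ≤ (mom P V p).toReal ^ (1/p) := fun x hx h => by
    have h1 := Real.add_one_le_exp (-x)
    have h3 := mul_le_mul_of_nonneg_right hCb hε0
    linarith
  have hup2 : p < 2 → (mom P V p).toReal ^ (1/p) ≤ 1 + cstF c1 K * ε := fun h => by
    have := rho_le_one hm hpos h2 hp0 h
    linarith
  have hp' := abs_le.1 hp
  by_cases hs : c1 * N < 4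
  · have hp1 : p < 1 := by linarith
    refine ⟨?_, hup2 (by linarith)⟩
    have h1 : c1 / 4 ≤ |p - 2| / N := by
      rw [le_div_iff₀ hN]
      have := neg_abs_le (p - 2)
      linarith
    have h3 : c1 / 4 ≤ ε := by
      calc c1 / 4 = (c1/4) ^ (1:ℝ) := (Real.rpow_one _).symm
        _ ≤ (c1/4) ^ β := Real.rpow_le_rpow_of_exponent_ge (by positivity) (by linarith) hβ1
        _ ≤ ε := Real.rpow_le_rpow (by positivity) h1 hβ0.le
    have h4 : 1 ≤ cstF c1 K * ε := by
      calc (1:ℝ) = 4 / c1 * (c1/4) := by field_simp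
        _ ≤ _ := mul_le_mul hCa h3 (by positivity) hC0
    have : 0 ≤ (mom P V p).toReal ^ (1/p) := by positivity
    linarith
  push Not at hs
  have hd : ∀ d : ℝ, 0 < d → d ≤ 4 → d * (4 / N) ^ β ≤ 4 * (d / N) ^ β := fun d h h' => by
    have h1 : d / 4 ≤ (d/4) ^ β := by
      calc d / 4 = (d/4) ^ (1:ℝ) := (Real.rpow_one _).symm
        _ ≤ (d/4) ^ β := Real.rpow_le_rpow_of_exponent_ge (by positivity) (by linarith) hβ1
    have h3 : (d / N) ^ β = (d/4) ^ β * (4/N) ^ β := by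
      rw [← Real.mul_rpow (by positivity) (by positivity)]; congr 1; field_simp
    rw [h3]
    have h4 : 0 ≤ (4/N) ^ β := by positivity
    nlinarith
  set F := (4 / N) ^ β with hF
  have hF0 : 0 ≤ F := by positivity
  have hm6 : mom P V 6 ≤ ENNReal.ofReal (exp (K * 4 * F)) := by
    have := hE2 4 le_rfl hs
    norm_num at this ⊢
    exact this
  have hmm2 : mom P V (-2) ≤ ENNReal.ofReal (exp (K * 4 * F)) := by
    have := hE1 4 le_rfl hs
    norm_num at this ⊢
    exact this
  rcases lt_or_ge 2 p with hp2 | hp2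
  · have habs : |p - 2| = p - 2 := abs_of_pos (by linarith)
    rw [habs] at hε
    have hε1 : ε ≤ 1 := by
      refine Real.rpow_le_one (by positivity) ?_ hβ0.le
      rw [habs, div_le_one hN]; nlinarith
    have key : mom P V p ≤ ENNReal.ofReal (exp (p * (2 * K * ε))) := by
      rcases le_or_gt 6 p with h6 | h6
      · have := hE2 (p - 2) (by linarith) (by linarith [mul_pos hc0 hN])
        rw [← hε, add_sub_cancel] at this
        refine this.trans (ofReal_exp_mono ?_)
        have : 0 ≤ K * ε := by positivity
        nlinarith
      · have h := mom_holder hm hpos (θ := (p-2)/4) (by linarith) (by linarith) 6 2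
          (c := p) (by ring)
        rw [h2, ENNReal.one_rpow, mul_one] at h
        refine h.trans ((ENN_exp_rpow (by linarith) hm6).trans (ofReal_exp_mono ?_))
        have h3 := hd (p - 2) (by linarith) (by linarith)
        rw [← hε] at h3
        have h4 := mul_le_mul_of_nonneg_left h3 hK
        have : 0 ≤ K * ε := by positivity
        nlinarith
    obtain ⟨r1, r2⟩ := rho_up hm hpos h2 hp2 key
    refine ⟨by linarith, r2.trans ((exp_up hK hε0 hε1).trans ?_)⟩
    have := mul_le_mul_of_nonneg_right hCc hε0
    linarith
  rcases eq_or_lt_of_le hp2 with rfl | hp2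
  · rw [h2]; simp; exact hCε
  refine ⟨?_, hup2 hp2⟩
  have habs : |p - 2| = 2 - p := by rw [abs_sub_comm]; exact abs_of_pos (by linarith)
  rw [habs] at hε
  rcases le_or_gt 1 p with hp1 | hp1
  · have h := rho_dn_pos hm hpos h2 (by linarith : 0 < p) hp2.le (θ := 4/(6-p)) (a := 6) (c := 2)
      (div_pos (by norm_num) (by linarith)) (by rw [div_le_one (by linarith)]; linarith)
      (by have : 6 - p ≠ 0 := by linarith
          field_simp; ring) h2 hm6
    refine hlow _ ?_ h
    have h6 : 6 - p ≠ 0 := by linarith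
    have hpp : p ≠ 0 := hp0
    have e1 : (1 - 4/(6-p)) * (K * 4 * F) / (4/(6-p) * p) = K * ((2 - p) * F) / p := by
      field_simp; ring
    rw [e1, div_le_iff₀ (by linarith)]
    have h3 := hd (2 - p) (by linarith) (by linarith)
    rw [← hε] at h3
    have h4 := mul_le_mul_of_nonneg_left h3 hK
    have : 0 ≤ K * ε := by positivity
    nlinarith
  have hFε : F ≤ 4 * ε := by
    have h3 := hd 1 (by norm_num) (by norm_num)
    have h4 : (1 / N) ^ β ≤ ε := by
      rw [hε]
      refine Real.rpow_le_rpow (by positivity) ?_ hβ0.le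
      gcongr; linarith
    linarith
  have hKF := mul_le_mul_of_nonneg_left hFε hK
  rcases lt_or_gt_of_ne hp0 with hpn | hpp
  · rcases le_or_gt (-2) p with hpm | hpm
    · refine hlow (2 * K * F) (by linarith) (rho_dn_neg hm hpos h2 hpn ?_)
      have h := mom_holder hm hpos (θ := -p/2) (by linarith) (by linarith) (-2) 0
          (c := p) (by ring)
      rw [mom_zero, ENNReal.one_rpow, mul_one] at h
      refine h.trans ((ENN_exp_rpow (by linarith) hmm2).trans (ofReal_exp_mono ?_))
      apply le_of_eq; ring
    · refine hlow (2 * K * ε) ?_ (rho_dn_neg hm hpos h2 hpn ?_)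
      · have : 0 ≤ K * ε := by positivity
        linarith
      have := hE1 (2 - p) (by linarith) (by linarith)
      rw [← hε, sub_sub_cancel] at this
      refine this.trans (ofReal_exp_mono ?_)
      have : 0 ≤ K * ε := by positivity
      nlinarith
  · have h := rho_dn_pos hm hpos h2 hpp hp2.le (θ := 2/(p+2)) (a := -2) (c := 0)
      (div_pos (by norm_num) (by linarith)) (by rw [div_le_one (by linarith)]; linarith)
      (by field_simp; ring) mom_zero hmm2
    refine hlow _ ?_ h
    have e1 : (1 - 2/(p+2)) * (K * 4 * F) / (2/(p+2) * p) = 2 * (K * F) := by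
      field_simp; ring
    rw [e1]; linarith
end

end

section

lemma map_gauss {Ω : Type*} [MeasurableSpace Ω] {P : Measure Ω} {n : ℕ} {G : Ω → EE n}
    (hG : IsStdGaussian P G) : P.map G = gam n := hG.2

lemma lint_joint {Ω : Type*} [MeasurableSpace Ω] {P : Measure Ω} [IsProbabilityMeasure P] {n : ℕ}
    {X G : Ω → EE n} (hX : Measurable X) (hG : IsStdGaussian P G) (hi : IndepFun X G P)
    {F : EE n × EE n → ℝ≥0∞} (hF : Measurable F) :
    ∫⁻ ω, F (X ω, G ω) ∂P = ∫⁻ x, ∫⁻ g, F (x, g) ∂(gam n) ∂(P.map X) := by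
  have h1 := (indepFun_iff_map_prod_eq_prod_map_map hX.aemeasurable hG.1.aemeasurable).1 hi
  have : IsProbabilityMeasure (P.map X) := Measure.isProbabilityMeasure_map hX.aemeasurable
  rw [map_gauss hG] at h1
  rw [← lintegral_prod _ hF.aemeasurable, ← h1, lintegral_map hF (hX.prodMk hG.1)]

lemma gam_singleton {n : ℕ} (hn : 0 < n) (v : EE n) : gam n {v} = 0 := by
  have : Nontrivial (EE n) := by
    have : Nonempty (Fin n) := ⟨⟨0, hn⟩⟩
    infer_instance
  unfold gam
  exact withDensity_absolutelyContinuous _ _ (measure_singleton v)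

/-- normalised matrix -/
def LA {n : ℕ} (A : Matrix (Fin n) (Fin n) ℝ) : EE n →L[ℝ] EE n :=
  (√(n:ℝ))⁻¹ • LinearMap.toContinuousLinearMap (Matrix.toEuclideanLin A)

lemma LA_app {n : ℕ} (hn : 0 < n) (A : Matrix (Fin n) (Fin n) ℝ) (x : EE n) :
    √(n:ℝ) • LA A x = mApp A x := by
  have : √(n:ℝ) ≠ 0 := by positivity
  simp [LA, mApp, smul_smul, this]

lemma col_norm {n : ℕ} (A : Matrix (Fin n) (Fin n) ℝ) (j : Fin n) :
    ‖mApp A (EuclideanSpace.single j 1)‖ ^ 2 = ∑ i, A i j ^ 2 := by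
  rw [EuclideanSpace.norm_sq_eq]
  refine Finset.sum_congr rfl fun i _ => ?_
  simp [mApp, Matrix.toLpLin_apply]

lemma hs_col {n : ℕ} (A : Matrix (Fin n) (Fin n) ℝ) :
    ∑ j, ‖mApp A (EuclideanSpace.single j 1)‖ ^ 2 = hsNorm A ^ 2 := by
  unfold hsNorm
  rw [Real.sq_sqrt (by positivity), Finset.sum_comm]
  exact Finset.sum_congr rfl fun j _ => col_norm A j

lemma LA_hs {n : ℕ} (hn : 0 < n) (A : Matrix (Fin n) (Fin n) ℝ) (hA : hsNorm A ^ 2 = n) :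
    ∑ j, ‖LA A (EuclideanSpace.single j 1)‖ ^ 2 = 1 := by
  have hn' : (0:ℝ) < n := by exact_mod_cast hn
  have h := hs_col A
  simp_rw [← LA_app hn, norm_smul, mul_pow, ← Finset.mul_sum, Real.norm_eq_abs, sq_abs,
    Real.sq_sqrt hn'.le] at h
  rw [hA] at h
  exact mul_left_cancel₀ hn'.ne' (by rw [h, mul_one])

lemma LA_norm {n : ℕ} (A : Matrix (Fin n) (Fin n) ℝ) : ‖LA A‖ = (√(n:ℝ))⁻¹ * opNorm A := by
  unfold LA opNorm
  rw [norm_smul, Real.norm_of_nonneg (by positivity)]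

lemma op_ge {n : ℕ} (hn : 0 < n) (A : Matrix (Fin n) (Fin n) ℝ) (hA : hsNorm A ^ 2 = n) :
    1 ≤ opNorm A ^ 2 := by
  have hn' : (0:ℝ) < n := by exact_mod_cast hn
  have h := hs_col A
  rw [hA] at h
  have h1 : ∀ j : Fin n, ‖mApp A (EuclideanSpace.single j 1)‖ ^ 2 ≤ opNorm A ^ 2 := fun j => by
    have := (LinearMap.toContinuousLinearMap (Matrix.toEuclideanLin A)).le_opNorm
      (EuclideanSpace.single j (1:ℝ))
    rw [EuclideanSpace.norm_single, norm_one, mul_one] at this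
    exact pow_le_pow_left₀ (norm_nonneg _) this 2
  have h3 := Finset.sum_le_sum fun j (_ : j ∈ Finset.univ) => h1 j
  rw [h, Finset.sum_const, Finset.card_univ, Fintype.card_fin, nsmul_eq_mul] at h3
  nlinarith

lemma mom_MM {Ω : Type*} [MeasurableSpace Ω] {P : Measure Ω} [IsProbabilityMeasure P] {n : ℕ}
    (hn : 0 < n) {X G : Ω → EE n} (hX : Measurable X) (hG : IsStdGaussian P G) (hi : IndepFun X G P)
    (A : Matrix (Fin n) (Fin n) ℝ) (p : ℝ) {s : ℝ} (hs : 0 < s) :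
    mom P (fun ω => s * ‖mApp A (X ω) + G ω‖) p =
      ENNReal.ofReal (s ^ p) * MM (P.map X) (LA A) p := by
  unfold mom MM
  have hF : Measurable fun z : EE n × EE n => ENNReal.ofReal (‖√(n:ℝ) • LA A z.1 + z.2‖ ^ p) := by
    fun_prop
  rw [← lint_joint hX hG hi hF, ← lintegral_const_mul]
  · refine lintegral_congr fun ω => ?_
    rw [← ENNReal.ofReal_mul (by positivity), ← Real.mul_rpow hs.le (norm_nonneg _), LA_app hn]
  · exact hF.comp (hX.prodMk hG.1)

lemma pos_ae {Ω : Type*} [MeasurableSpace Ω] {P : Measure Ω} [IsProbabilityMeasure P] {n : ℕ}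
    (hn : 0 < n) {X G : Ω → EE n} (hX : Measurable X) (hG : IsStdGaussian P G) (hi : IndepFun X G P)
    (A : Matrix (Fin n) (Fin n) ℝ) {s : ℝ} (hs : 0 < s) :
    ∀ᵐ ω ∂P, 0 < s * ‖mApp A (X ω) + G ω‖ := by
  have hS : MeasurableSet {z : EE n × EE n | √(n:ℝ) • LA A z.1 + z.2 = 0} :=
    measurableSet_eq_fun (by fun_prop) (by fun_prop)
  have h := lint_joint hX hG hi (F := Set.indicator {z | √(n:ℝ) • LA A z.1 + z.2 = 0} 1)
    (measurable_one.indicator hS)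
  have h0 : ∀ x, ∫⁻ g, Set.indicator {z : EE n × EE n | √(n:ℝ) • LA A z.1 + z.2 = 0}
      (1 : EE n × EE n → ℝ≥0∞) (x, g) ∂(gam n) = 0 := fun x => by
    have : ∀ g, Set.indicator {z : EE n × EE n | √(n:ℝ) • LA A z.1 + z.2 = 0}
      (1 : EE n × EE n → ℝ≥0∞) (x, g) = Set.indicator {-(√(n:ℝ) • LA A x)} 1 g := fun g => by
      simp only [Set.indicator, Set.mem_ofPred_eq, Set.mem_singleton_iff, Pi.one_apply,
        eq_neg_iff_add_eq_zero]
      rw [add_comm]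
    simp_rw [this]
    rw [lintegral_indicator_one (measurableSet_singleton _), gam_singleton hn]
  simp_rw [h0] at h
  rw [lintegral_zero] at h
  replace h := (lintegral_eq_zero_iff
    ((measurable_one.indicator hS).comp (hX.prodMk hG.1))).1 h
  filter_upwards [h] with ω hω
  have : mApp A (X ω) + G ω ≠ 0 := fun hc => by
    rw [← LA_app hn] at hc
    simp [Set.indicator, hc] at hω
  positivity

lemma kap_eq {n : ℕ} (hn : 0 < n) {α b op : ℝ} (hα : 1 ≤ α) (hb : 0 < b) (ho : 0 < op) :
    b * ((√(n:ℝ))⁻¹ * op) = (((n : ℝ) / (op ^ 2 * b ^ 2)) ^ (α / 2)) ^ (-(1/α)) := by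
  have hn' : (0:ℝ) < n := by exact_mod_cast hn
  rw [← Real.rpow_mul (by positivity)]
  have e : α / 2 * -(1/α) = -(1/2) := by field_simp
  rw [e, Real.rpow_neg (by positivity), ← Real.sqrt_eq_rpow, Real.sqrt_div hn'.le, ← mul_pow,
    Real.sqrt_sq (by positivity)]
  field_simp

lemma main_bound {n : ℕ} {Ω : Type} [MeasurableSpace Ω] {P : Measure Ω} [IsProbabilityMeasure P]
    {X G : Ω → EE n} {f : EE n → ℝ} {α b : ℝ} {A : Matrix (Fin n) (Fin n) ℝ}
    (hd : HasDensityFn P X f) (hf : IsLogConcaveFn f) (hi : Isotropic P X)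
    (hα1 : 1 ≤ α) (hα2 : α ≤ 2) (hp : IsPsiAlpha P X α b) (hG : IsStdGaussian P G)
    (hI : IndepFun X G P) (hA : hsNorm A ^ 2 = n) {p : ℝ} (hp0 : p ≠ 0) (hn : 0 < n)
    (hpN : |p| ≤ cst1 / 4 * ((n : ℝ) / (opNorm A ^ 2 * b ^ 2)) ^ (α / 2)) {s : ℝ} (hs : 0 < s)
    (hs2 : s ^ (2:ℝ) * (2 * n) = 1) :
    1 - cstF cst1 cst3 * (|p - 2| / ((n : ℝ) / (opNorm A ^ 2 * b ^ 2)) ^ (α / 2)) ^ (1/(α+1)) ≤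
      (mom P (fun ω => s * ‖mApp A (X ω) + G ω‖) p).toReal ^ (1/p) ∧
    (mom P (fun ω => s * ‖mApp A (X ω) + G ω‖) p).toReal ^ (1/p) ≤
    1 + cstF cst1 cst3 * (|p - 2| / ((n : ℝ) / (opNorm A ^ 2 * b ^ 2)) ^ (α / 2)) ^ (1/(α+1)) := by
  have hn' : (0:ℝ) < n := by exact_mod_cast hn
  have hb2 := psi_b hn hα1 hi hp
  have hb : 0 < b := by linarith
  have hop2 := op_ge hn A hA
  have hop : 0 < opNorm A := by
    have h0 : 0 ≤ opNorm A := norm_nonneg _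
    rcases h0.eq_or_lt with h | h
    · rw [← h] at hop2; norm_num at hop2
    · exact h
  have hmX := hd.1
  have hmA : Measurable fun ω => mApp A (X ω) := by
    simp_rw [← LA_app hn]
    exact ((LA A).continuous.measurable.comp hmX).const_smul (√(n:ℝ))
  have hmG := hG.1
  have hiso := isoLaw_of hd hf hi
  have hpsi := psiLaw_of hd hf hi hp
  have hL := LA_hs hn A hA
  have hc := cst1_le
  have hcp := cst1_pos
  have hc2 := cst2_pos
  have hc3 : 0 ≤ cst3 := by unfold cst3; linarith
  have hβ1 : 1/(α+1) ≤ 1 := by rw [div_le_one (by linarith)]; linarith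
  set T := (n : ℝ) / (opNorm A ^ 2 * b ^ 2) with hT
  have hT0 : 0 < T := by positivity
  have hT4 : T ≤ 4 * n := by
    rw [hT, div_le_iff₀ (by positivity)]
    have h1 : 1/4 ≤ b ^ 2 := by nlinarith
    have h3 : 1/4 ≤ opNorm A ^ 2 * b ^ 2 := by nlinarith
    nlinarith
  have hN0 : 0 < T ^ (α/2) := by positivity
  refine final_abs (by fun_prop) (pos_ae hn hmX hG hI A hs) ?_ hN0 (by positivity)
    hβ1 hcp (by linarith) hc3 ?_ hp0 hpN
  · rw [mom_MM hn hmX hG hI A 2 hs, MM_two hiso _ hL, ← ENNReal.ofReal_mul (by positivity), hs2]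
    simp
  · intro Q hQ hQN
    have hNn : T ^ (α/2) ≤ 4 * n := by
      have h1 : 1 ≤ T := by
        by_contra hc'
        push Not at hc'
        have : T ^ (α/2) ≤ 1 := Real.rpow_le_one hT0.le hc'.le (by positivity)
        nlinarith
      calc T ^ (α/2) ≤ T ^ (1:ℝ) := Real.rpow_le_rpow_of_exponent_le h1 (by linarith)
        _ = T := Real.rpow_one _
        _ ≤ _ := hT4
    have hκ : b * ‖LA A‖ = (T ^ (α/2)) ^ (-(1/α)) := by
      rw [LA_norm, hT]; exact kap_eq hn hα1 hb hop
    have h := MM_prod hiso hα1 hα2 hb hpsi (LA A) hL hN0 hNn hκ hQ hQN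
    rw [mom_MM hn hmX hG hI A _ hs, mom_MM hn hmX hG hI A _ hs, mul_mul_mul_comm,
      ← ENNReal.ofReal_mul (by positivity), ← Real.rpow_add hs]
    refine (mul_le_mul_right h _).trans (le_of_eq ?_)
    rw [← ENNReal.ofReal_mul (by positivity), ← mul_assoc]
    congr 1
    have : s ^ (2 - Q + (2 + Q)) * (2 * (n:ℝ)) ^ 2 = 1 := by
      have e : 2 - Q + (2 + Q) = 2 + 2 := by ring
      rw [e, Real.rpow_add hs]
      calc _ = (s ^ (2:ℝ) * (2 * n)) ^ 2 := by ring
        _ = 1 := by rw [hs2]; norm_num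
    rw [this, one_mul]

end

/-- moment estimates for `Y = (AX + G_n)/√2`. -/
theorem statement14 :
    ∃ c C : ℝ, 0 < c ∧ 0 < C ∧
      ∀ (n : ℕ) (Ω : Type) (_mΩ : MeasurableSpace Ω) (P : Measure Ω),
        IsProbabilityMeasure P →
        ∀ (X G : Ω → EuclideanSpace ℝ (Fin n)) (f : EuclideanSpace ℝ (Fin n) → ℝ)
          (α b : ℝ) (A : Matrix (Fin n) (Fin n) ℝ),
          HasDensityFn P X f → IsLogConcaveFn f → Isotropic P X →
          1 ≤ α → α ≤ 2 → IsPsiAlpha P X α b →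
          IsStdGaussian P G → IndepFun X G P →
          hsNorm A ^ 2 = n →
          ∀ p : ℝ, p ≠ 0 →
            |p| ≤ c * ((n : ℝ) / (opNorm A ^ 2 * b ^ 2)) ^ (α / 2) →
            1 - C * (|p - 2| / ((n : ℝ) / (opNorm A ^ 2 * b ^ 2)) ^ (α / 2)) ^ (1/(α+1)) ≤
                (∫ ω, ‖(Real.sqrt 2)⁻¹ • (mApp A (X ω) + G ω)‖ ^ p ∂P) ^ (1/p) /
                  (∫ ω, ‖(Real.sqrt 2)⁻¹ • (mApp A (X ω) + G ω)‖ ^ (2:ℝ) ∂P) ^ ((1:ℝ)/2) ∧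
              (∫ ω, ‖(Real.sqrt 2)⁻¹ • (mApp A (X ω) + G ω)‖ ^ p ∂P) ^ (1/p) /
                  (∫ ω, ‖(Real.sqrt 2)⁻¹ • (mApp A (X ω) + G ω)‖ ^ (2:ℝ) ∂P) ^ ((1:ℝ)/2) ≤
                1 + C * (|p - 2| / ((n : ℝ) / (opNorm A ^ 2 * b ^ 2)) ^ (α / 2)) ^ (1/(α+1)) := by
  have hcp := cst1_pos
  have hc3 : 0 < cst3 := by have := cst2_pos; unfold cst3; linarith
  refine ⟨cst1 / 4, cstF cst1 cst3, by positivity, by unfold cstF; positivity, ?_⟩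
  intro n Ω _ P _ X G f α b A hd hf hi hα1 hα2 hp hG hI hA p hp0 hpN
  have hn : 0 < n := by
    rcases Nat.eq_zero_or_pos n with rfl | h
    · rw [Nat.cast_zero, zero_div, Real.zero_rpow (by positivity), mul_zero] at hpN
      exact absurd (abs_nonpos_iff.1 hpN) hp0
    · exact h
  have hn' : (0:ℝ) < n := by exact_mod_cast hn
  have hsn : 0 < √(n:ℝ) := by positivity
  have hs : 0 < (√(n:ℝ))⁻¹ * (√2)⁻¹ := by positivity
  have hs2 : ((√(n:ℝ))⁻¹ * (√2)⁻¹) ^ (2:ℝ) * (2 * n) = 1 := by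
    rw [Real.rpow_two, mul_pow, inv_pow, inv_pow, Real.sq_sqrt hn'.le, Real.sq_sqrt (by norm_num)]
    field_simp
  have key := main_bound hd hf hi hα1 hα2 hp hG hI hA hp0 hn hpN hs hs2
  have hpos := pos_ae hn hd.1 hG hI A hs
  have hmA : Measurable fun ω => mApp A (X ω) := by
    simp_rw [← LA_app hn]
    exact ((LA A).continuous.measurable.comp hd.1).const_smul (√(n:ℝ))
  have hmG := hG.1
  have hV : Measurable fun ω => (√(n:ℝ))⁻¹ * (√2)⁻¹ * ‖mApp A (X ω) + G ω‖ := by fun_prop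
  have hmom : ∀ q : ℝ, ∫ ω, ‖(Real.sqrt 2)⁻¹ • (mApp A (X ω) + G ω)‖ ^ q ∂P =
      √(n:ℝ) ^ q * (mom P (fun ω => (√(n:ℝ))⁻¹ * (√2)⁻¹ * ‖mApp A (X ω) + G ω‖) q).toReal := fun q => by
    rw [← int_mom hV hpos, ← integral_const_mul]
    refine integral_congr_ae (ae_of_all _ fun ω => ?_)
    simp only
    rw [← Real.mul_rpow hsn.le (by positivity), norm_smul, Real.norm_of_nonneg (by positivity)]
    congr 1
    field_simp
  have hm2 : mom P (fun ω => (√(n:ℝ))⁻¹ * (√2)⁻¹ * ‖mApp A (X ω) + G ω‖) 2 = 1 := by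
    rw [mom_MM hn hd.1 hG hI A 2 hs, MM_two (isoLaw_of hd hf hi) _ (LA_hs hn A hA),
      ← ENNReal.ofReal_mul (by positivity), hs2]
    simp
  have hratio : (∫ ω, ‖(Real.sqrt 2)⁻¹ • (mApp A (X ω) + G ω)‖ ^ p ∂P) ^ (1/p) /
      (∫ ω, ‖(Real.sqrt 2)⁻¹ • (mApp A (X ω) + G ω)‖ ^ (2:ℝ) ∂P) ^ ((1:ℝ)/2) =
      (mom P (fun ω => (√(n:ℝ))⁻¹ * (√2)⁻¹ * ‖mApp A (X ω) + G ω‖) p).toReal ^ (1/p) := by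
    rw [hmom p, hmom 2, hm2, ENNReal.toReal_one, mul_one, Real.mul_rpow (by positivity) (by positivity),
      ← Real.rpow_mul hsn.le, ← Real.rpow_mul hsn.le, mul_one_div_cancel hp0,
      mul_one_div_cancel (by norm_num), Real.rpow_one]
    field_simp
  rw [hratio]
  exact key
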